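/- arXiv:math/0605154 — 4 statements merged into one kernel-verified Lean document; each statement's English description precedes it below -/
import Mathlib

section
/- Let G be a finite simple graph, let H be an induced subgraph of G with exactly one perfect matching M_H, and let P be an M_H-alternating path from p_1 to p_2 and P' an M_H-alternating path from p_3 to p_4, where p_1, p_2, p_3, p_4 are distinct and P and P' share at least one vertex. Let Q be the multiset union of the edges of P and P' (edges common to both paths counted twice). Then exactly one of the following holds: (i) Q is the multiset union of the edges of two M_H-alternating paths, one joining p_1 to p_3 and one joining p_2 to p_4; (ii) Q is the multiset union of the edges of two M_H-alternating paths, one joining p_1 to p_4 and one joining p_2 to p_3. Moreover, if there do not exist two vertex-disjoint paths in G, one joining p_1 to p_3 and one joining p_2 to p_4, whose internal vertices avoid {p_1,p_2,p_3,p_4} (as happens when G is a plane graph and p_1, p_3, p_2, p_4 appear in the cyclic order p_1, p_2, p_3, p_4 on a face), then alternative (i) holds. -/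
/-- A perfect matching of the induced subgraph of `G` on the vertex set `s`,
represented as a set `m` of edges of `G`: every edge of `m` is an edge of `G`
with both endpoints in `s`, and every vertex of `s` lies in exactly one edge of `m`. -/
def IsPMOn {α : Type*} (G : SimpleGraph α) (s : Finset α) (m : Finset (Sym2 α)) : Prop :=
  (∀ e ∈ m, e ∈ G.edgeSet ∧ ∀ v ∈ e, v ∈ s) ∧ ∀ v ∈ s, ∃! e, e ∈ m ∧ v ∈ e

/-- The number of perfect matchings of the induced subgraph of `G` on `s`. -/
noncomputable def pmCount {α : Type*} (G : SimpleGraph α) (s : Finset α) : ℕ :=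
  Nat.card {m : Finset (Sym2 α) // IsPMOn G s m}

open Classical in
/-- The sum, over all perfect matchings of the induced subgraph of `G` on `s`,
of the product of the weights of the edges of the matching. -/
noncomputable def pmSum {α R : Type*} [Fintype α] [DecidableEq α] [CommRing R]
    (G : SimpleGraph α) (w : Sym2 α → R) (s : Finset α) : R :=
  ∑ m ∈ Finset.univ.filter (fun m : Finset (Sym2 α) => IsPMOn G s m), ∏ e ∈ m, w e

/-- There are two vertex-disjoint paths in `G`, one joining `x₁` to `y₁` and one joining
`x₂` to `y₂`, whose internal vertices avoid `S`. -/
def DisjointPaths {α : Type*} (G : SimpleGraph α) (S : Set α) (x₁ y₁ x₂ y₂ : α) : Prop :=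
  ∃ (p : G.Walk x₁ y₁) (q : G.Walk x₂ y₂), p.IsPath ∧ q.IsPath ∧
    (∀ u ∈ p.support, u ∉ q.support) ∧
    (∀ u ∈ p.support, u ≠ x₁ → u ≠ y₁ → u ∉ S) ∧
    (∀ u ∈ q.support, u ≠ x₂ → u ≠ y₂ → u ∉ S)

/-- `G` is noncrossing with respect to the cyclic sequence given by the list `L`:
there are no indices `i < j < k < l` such that `G` contains two vertex-disjoint paths,
one joining `L[i]` to `L[k]` and one joining `L[j]` to `L[l]`, whose internal vertices
avoid the vertices of `L`. -/
def NoncrossingList {α : Type*} (G : SimpleGraph α) (L : List α) : Prop :=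
  ∀ i j k l : Fin L.length, i < j → j < k → k < l →
    ¬ DisjointPaths G {x | x ∈ L} (L.get i) (L.get k) (L.get j) (L.get l)

/-- `U, W` form a bipartition of the vertices of `G`. -/
def IsBipartition {α : Type*} [Fintype α] [DecidableEq α]
    (G : SimpleGraph α) (U W : Finset α) : Prop :=
  Disjoint U W ∧ U ∪ W = Finset.univ ∧
    ∀ ⦃x y⦄, G.Adj x y → ((x ∈ U ∧ y ∈ W) ∨ (x ∈ W ∧ y ∈ U))

/-- `P` is an `MH`-alternating path, where `MH` is the unique perfect matching of the
induced subgraph of `G` on the vertex set `sH`: `P` is a (nontrivial) path, among any two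
consecutive edges of `P` exactly one lies in `MH`, and for each endpoint the incident edge
of `P` lies in `MH` iff the endpoint belongs to `sH`. -/
def IsAltPath {α : Type*} (G : SimpleGraph α) (sH : Finset α) (MH : Finset (Sym2 α))
    {x y : α} (P : G.Walk x y) : Prop :=
  P.IsPath ∧ P.edges ≠ [] ∧
  P.edges.Chain' (fun e f => e ∈ MH ↔ f ∉ MH) ∧
  (∀ e ∈ P.edges.head?, (e ∈ MH ↔ x ∈ sH)) ∧
  (∀ e ∈ P.edges.getLast?, (e ∈ MH ↔ y ∈ sH))

/-- A family of pairwise vertex-disjoint `MH`-alternating paths in `G` whose set of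
path-endpoints is exactly `A`, each vertex of `A` being an endpoint of exactly one
path of the family. -/
def IsAltPathNest {α : Type*} (G : SimpleGraph α) (sH : Finset α) (MH : Finset (Sym2 α))
    (A : Finset α) (F : Finset (Σ x : α, Σ y : α, G.Walk x y)) : Prop :=
  (∀ p ∈ F, IsAltPath G sH MH p.2.2) ∧
  (∀ p ∈ F, ∀ q ∈ F, p ≠ q → ∀ u ∈ p.2.2.support, u ∉ q.2.2.support) ∧
  (∀ p ∈ F, p.1 ∈ A ∧ p.2.1 ∈ A) ∧
  (∀ v ∈ A, ∃! p, p ∈ F ∧ (v = p.1 ∨ v = p.2.1))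

/-- A 1-factor on `{1, …, n}`: a partition of `Fin n` into pairs, each pair recorded
as an ordered pair `(i, j)` with `i < j`. -/
def IsOneFactor (n : ℕ) (F : Finset (Fin n × Fin n)) : Prop :=
  (∀ p ∈ F, p.1 < p.2) ∧ ∀ v : Fin n, ∃! p, p ∈ F ∧ (v = p.1 ∨ v = p.2)

/-- The crossing number of a 1-factor: the number of pairs of pairs
`(i,j), (k,l)` in `F` with `i < k < j < l`. -/
def crossingNumber (n : ℕ) (F : Finset (Fin n × Fin n)) : ℕ :=
  ((F ×ˢ F).filter (fun q => q.1.1 < q.2.1 ∧ q.2.1 < q.1.2 ∧ q.1.2 < q.2.2)).card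

namespace APR

theorem exists_first {V : Type*} (P : V → Prop) : ∀ l : List V, (∃ x ∈ l, P x) →
    ∃ l1 x l2, l = l1 ++ x :: l2 ∧ P x ∧ ∀ y ∈ l1, ¬ P y := by
  intro l
  induction l with
  | nil => simp
  | cons a t ih =>
    intro h
    by_cases ha : P a
    · exact ⟨[], a, t, by simp, ha, by simp⟩
    · obtain ⟨x, hx, hPx⟩ := h
      have : x ∈ t := by
        rcases List.mem_cons.1 hx with rfl | h
        · exact absurd hPx ha
        · exact h
      obtain ⟨l1, y, l2, rfl, h2, h3⟩ := ih ⟨x, this, hPx⟩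
      exact ⟨a :: l1, y, l2, by simp, h2, by simp_all⟩

theorem exists_last {V : Type*} (P : V → Prop) (l : List V) (h : ∃ x ∈ l, P x) :
    ∃ l1 x l2, l = l1 ++ x :: l2 ∧ P x ∧ ∀ y ∈ l2, ¬ P y := by
  obtain ⟨l1, x, l2, h1, h2, h3⟩ := exists_first P l.reverse (by simpa using h)
  refine ⟨l2.reverse, x, l1.reverse, ?_, h2, by simpa using h3⟩
  have := congrArg List.reverse h1
  simpa using this

theorem split_uniq {V : Type*} {g : V} : ∀ {C D U W : List V}, (C ++ g :: D).Nodup →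
    C ++ g :: D = U ++ g :: W → C = U ∧ D = W := by
  intro C
  induction C with
  | nil =>
    intro D U W hn h
    cases U with
    | nil => simp_all
    | cons u U => simp at h; simp_all
  | cons c C ih =>
    intro D U W hn h
    cases U with
    | nil =>
      simp at h
      obtain ⟨rfl, h⟩ := h
      simp at hn
    | cons u U =>
      simp at h
      obtain ⟨rfl, h⟩ := h
      have := ih (by simp at hn; simp [hn]) h
      simp [this]

def ND {V E : Type*} (e : V → E) (l : List V) : Prop := (l.map e).Nodup

theorem nd_nil {V E : Type*} {e : V → E} : ND e [] ↔ True := by simp [ND]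

theorem nd_cons {V E : Type*} {e : V → E} {a : V} {l : List V} :
    ND e (a :: l) ↔ (∀ b ∈ l, e a ≠ e b) ∧ ND e l := by
  simp only [ND, List.map_cons, List.nodup_cons, List.mem_map, not_exists, not_and, ne_eq]
  constructor
  · rintro ⟨h1, h2⟩; exact ⟨fun b hb h => h1 b hb h.symm, h2⟩
  · rintro ⟨h1, h2⟩; exact ⟨fun b hb h => h1 b hb h.symm, h2⟩

theorem nd_append {V E : Type*} {e : V → E} {l l' : List V} :
    ND e (l ++ l') ↔ ND e l ∧ ND e l' ∧ ∀ a ∈ l, ∀ b ∈ l', e a ≠ e b := by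
  simp only [ND, List.map_append, List.nodup_append, List.mem_map]
  constructor
  · rintro ⟨h1, h2, h3⟩; exact ⟨h1, h2, fun a ha b hb => h3 _ ⟨a, ha, rfl⟩ _ ⟨b, hb, rfl⟩⟩
  · rintro ⟨h1, h2, h3⟩
    refine ⟨h1, h2, ?_⟩
    rintro _ ⟨a, ha, rfl⟩ _ ⟨b, hb, rfl⟩
    exact h3 a ha b hb

theorem nd_rmap {V E : Type*} {e : V → E} {σ : V → V} (he : ∀ x, e (σ x) = e x) {l : List V} :
    ND e (l.map σ).reverse ↔ ND e l := by
  have : ((l.map σ).reverse).map e = (l.map e).reverse := by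
    simp [List.map_reverse, Function.comp_def, he]
  rw [ND, this, List.nodup_reverse, ND]

theorem all_rmap {V : Type*} {σ : V → V} {l : List V} {P : V → Prop} :
    (∀ x ∈ (l.map σ).reverse, P x) ↔ ∀ x ∈ l, P (σ x) := by
  simp

theorem all_append {V : Type*} {l l' : List V} {P : V → Prop} :
    (∀ a ∈ l ++ l', P a) ↔ (∀ a ∈ l, P a) ∧ ∀ a ∈ l', P a := by
  simp [or_imp, forall_and]

theorem all_cons {V : Type*} {a : V} {l : List V} {P : V → Prop} :
    (∀ x ∈ a :: l, P x) ↔ P a ∧ ∀ x ∈ l, P x := by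
  simp

theorem all_nil {V : Type*} {P : V → Prop} : (∀ x ∈ ([] : List V), P x) ↔ True := by simp

def Good {V E : Type*} (σ : V → V) (e : V → E) (p q : List V) : Prop :=
  ∃ q', (q' = q ∨ q' = (q.map σ).reverse) ∧ ∃ A x B C D, p = A ++ x :: B ∧ q' = C ++ x :: D ∧
    (∀ a ∈ A, ∀ d ∈ D, e a ≠ e d) ∧ (∀ c ∈ C, ∀ b ∈ B, e c ≠ e b)

theorem chain_rev {V : Type*} {σ : V → V} {R : V → V → Prop}
    (hR : ∀ x y, R x y → R (σ y) (σ x)) {q : List V} (h : q.IsChain R) :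
    ((q.map σ).reverse).IsChain R := by
  rw [List.isChain_reverse, List.isChain_map]
  exact h.imp (fun a b hab => hR _ _ hab)

theorem nodup_rev {V E : Type*} {σ : V → V} {e : V → E} (he : ∀ x, e (σ x) = e x) {q : List V}
    (h : (q.map e).Nodup) : (((q.map σ).reverse).map e).Nodup := by
  have : ((q.map σ).reverse).map e = (q.map e).reverse := by
    simp [List.map_reverse, Function.comp_def, he]
  rw [this]; simpa using h

theorem key {V E : Type*} (σ : V → V) (e : V → E) (hσ : ∀ x, σ (σ x) = x)
    (he : ∀ x, e (σ x) = e x) (he2 : ∀ x y, e x = e y → x = y ∨ x = σ y)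
    (R : V → V → Prop) (hR : ∀ x y, R x y → R (σ y) (σ x))
    (nc : ∀ x l y, List.IsChain R (x :: (l ++ [y])) → ((x :: (l ++ [y])).map e).Nodup → ¬ R y x) :
    ∀ n (p q : List V), p.length ≤ n → p.IsChain R → q.IsChain R → (p.map e).Nodup →
      (q.map e).Nodup → (∃ a ∈ p, ∃ b ∈ q, e a = e b) → Good σ e p q := by
  intro n
  induction n with
  | zero =>
    intro p q hp
    have : p = [] := by simpa using hp
    subst this
    simp
  | succ n ih =>
    intro p q hlen hp hq hpn hqn hsh
    cases p with
    | nil => simp at hsh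
    | cons z p =>
    have hlen' : p.length ≤ n := by simpa using hlen
    have hp' : p.IsChain R := hp.tail
    have hpn' : (p.map e).Nodup := by simp at hpn; exact hpn.2
    have hzp : ∀ x ∈ p, e z ≠ e x := by
      intro x hx h; simp at hpn; exact hpn.1 x hx h.symm
    by_cases hz : ∃ b ∈ q, e z = e b
    swap
    · have hsh' : ∃ a ∈ p, ∃ b ∈ q, e a = e b := by
        obtain ⟨a, ha, hb⟩ := hsh
        rcases List.mem_cons.1 ha with rfl | ha
        · exact absurd hb hz
        · exact ⟨a, ha, hb⟩
      obtain ⟨q', hq', A, x, B, C, D, h1, h2, h3, h4⟩ := ih p q hlen' hp' hq hpn' hqn hsh'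
      refine ⟨q', hq', z :: A, x, B, C, D, by simp [h1], h2, ?_, h4⟩
      intro a ha d hd
      rcases List.mem_cons.1 ha with rfl | ha
      · intro h
        apply hz
        have hd' : d ∈ q' := by simp [h2, hd]
        rcases hq' with rfl | rfl
        · exact ⟨d, hd', h⟩
        · simp at hd'
          obtain ⟨b, hb, rfl⟩ := hd'
          exact ⟨b, hb, by rw [h, he]⟩
      · exact h3 a ha d hd
    · have step : ∀ q : List V, q.IsChain R → (q.map e).Nodup → z ∈ q → Good σ e (z :: p) q := by
        clear hq hqn hsh hz q
        intro q hq hqn hzq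
        obtain ⟨C, D, rfl⟩ := List.append_of_mem hzq
        by_cases hC : ∃ c ∈ C, ∃ b ∈ p, e c = e b
        swap
        · refine ⟨_, Or.inl rfl, [], z, p, C, D, by simp, rfl, by simp, ?_⟩
          intro c hc b hb h
          exact hC ⟨c, hc, b, hb, h⟩
        obtain ⟨C1, w, C2, rfl, ⟨b, hb, hwb⟩, hC2⟩ := exists_last _ C hC
        have hC2' : ∀ y ∈ C2, ∀ b ∈ p, e y ≠ e b := by
          intro y hy b hb h; exact hC2 y hy ⟨b, hb, h⟩
        have hmid : List.IsChain R (w :: C2 ++ [z]) := by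
          have : (C1 ++ (w :: C2 ++ [z]) ++ D).IsChain R := by simpa using hq
          exact (this.left_of_append).right_of_append
        have hqnd := hqn
        have hwp : w ∉ p := by
          intro hw
          obtain ⟨X, Y, rfl⟩ := List.append_of_mem hw
          have hc1 : List.IsChain R (z :: (X ++ [w])) := by
            have : (z :: (X ++ [w]) ++ Y).IsChain R := by simpa using hp
            exact this.left_of_append
          have hnd : ((z :: X ++ w :: C2).map e).Nodup := by
            change ND e _ at hpn
            change ND e _ at hqn
            change ND e _
            clear ih nc hR he2
            simp only [nd_append, nd_cons, nd_nil, all_append, all_cons, all_nil, and_true, ne_eq] at *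
            clear hq hmid hqnd hlen hp hlen' hp' hpn' hC2 hc1
            and_intros <;> grind
          have hch : (z :: X ++ w :: C2 ++ [z]).IsChain R := by
            have := List.isChain_split (R := R) (l₁ := z :: X) (l₂ := C2 ++ [z]) (c := w)
            have := this.2 ⟨by simpa using hc1, by simpa using hmid⟩
            simpa using this
          rcases List.eq_nil_or_concat C2 with rfl | ⟨C3, y, rfl⟩
          · refine nc z X w hc1 (by simpa using hnd) ?_
            simp at hmid; exact hmid
          · refine nc z (X ++ w :: C3) y ?_ (by simpa using hnd) ?_
            · have : (z :: (X ++ w :: C3 ++ [y]) ++ [z]).IsChain R := by simpa using hch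
              exact this.left_of_append
            · have : (z :: (X ++ w :: C3) ++ ([y] ++ [z])).IsChain R := by simpa using hch
              have := this.right_of_append
              simpa using this
        have hswp : σ w ∈ p := by
          rcases he2 _ _ hwb with rfl | rfl
          · exact absurd hb hwp
          · rwa [hσ]
        clear hwb hb b
        obtain ⟨X, Y, rfl⟩ := List.append_of_mem hswp
        obtain ⟨q', hq', A, g, B, C', D', h1, h2, h3, h4⟩ := ih (σ w :: Y) (C1 ++ w :: C2 ++ z :: D)
          (by simp at hlen' ⊢; omega) hp'.right_of_append hq
          (nd_append.1 (show ND e (X ++ σ w :: Y) from hpn')).2.1 hqn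
          ⟨σ w, by simp, w, by simp, he w⟩
        have hgp : g ∈ σ w :: Y := by rw [h1]; simp
        have hswA : σ w ∈ A ∨ σ w = g := by
          cases A with
          | nil => simp at h1; exact Or.inr h1.1
          | cons a A => simp at h1; left; simp [h1.1]
        have hq'n : (q'.map e).Nodup := by
          rcases hq' with rfl | rfl
          · exact hqn
          · exact nodup_rev he hqn
        have hq'c : q'.IsChain R := by
          rcases hq' with rfl | rfl
          · exact hq
          · exact chain_rev hR hq
        have hq'n0 : q'.Nodup := hq'n.of_map
        have hwD : ∀ d ∈ D', e w ≠ e d := by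
          intro d hd h
          rcases hswA with h' | h'
          · exact h3 _ h' d hd (by rw [he, h])
          · rw [h2] at hq'n
            have : e g = e d := by rw [← h', he, h]
            simp [List.nodup_append] at hq'n
            exact hq'n.2.1.1 d hd this.symm
        have hsub : ∀ y, (y = z ∨ y ∈ C2) → ∃ c ∈ C', e y = e c := by
          rcases hq' with hq' | hq'
          · have hg : g ∈ C1 ++ w :: C2 ++ z :: D := by rw [← hq', h2]; simp
            simp at hg
            rcases hg with hg | rfl | hg | rfl | hg
            · exfalso
              obtain ⟨U, W, rfl⟩ := List.append_of_mem hg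
              have := split_uniq (C := C') (g := g) (D := D') (U := U) (W := W ++ w :: C2 ++ z :: D) (by rw [← h2]; exact hq'n0) (by rw [← h2, hq']; simp)
              exact hwD w (by simp [this.2]) rfl
            · exact absurd (by simp [List.mem_cons.1 hgp]) hwp
            · exact absurd rfl (hC2' g hg g (by simp [List.mem_cons.1 hgp]))
            · exact absurd rfl (hzp g (by simp [List.mem_cons.1 hgp]))
            · obtain ⟨U, W, rfl⟩ := List.append_of_mem hg
              have := split_uniq (C := C') (g := g) (D := D') (U := C1 ++ w :: C2 ++ z :: U) (W := W) (by rw [← h2]; exact hq'n0) (by rw [← h2, hq']; simp)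
              intro y hy
              exact ⟨y, by rw [this.1]; simp; tauto, rfl⟩
          · have hq'' : q' = (D.map σ).reverse ++ σ z :: (C2.map σ).reverse ++ σ w :: (C1.map σ).reverse := by
              rw [hq']; simp
            have hg : g ∈ (D.map σ).reverse ++ σ z :: (C2.map σ).reverse ++ σ w :: (C1.map σ).reverse := by rw [← hq'', h2]; simp
            have hfin : ∀ K, C' = (D.map σ).reverse ++ σ z :: (C2.map σ).reverse ++ K → ∀ y, (y = z ∨ y ∈ C2) → ∃ c ∈ C', e y = e c := by
              intro K hK y hy
              refine ⟨σ y, ?_, (he y).symm⟩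
              rw [hK]
              simp only [List.mem_append, List.mem_reverse, List.mem_map, List.mem_cons]
              rcases hy with rfl | hy
              · tauto
              · left; right; right; exact ⟨y, hy, rfl⟩
            rw [List.mem_append, List.mem_append, List.mem_cons, List.mem_cons] at hg
            rcases hg with (hg | hg | hg) | hg | hg
            · exfalso
              obtain ⟨U, W, hU⟩ := List.append_of_mem hg
              have := split_uniq (C := C') (g := g) (D := D') (U := U) (W := W ++ σ z :: (C2.map σ).reverse ++ σ w :: (C1.map σ).reverse) (by rw [← h2]; exact hq'n0) (by rw [← h2, hq'', hU]; simp)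
              exact hwD (σ w) (by simp [this.2]) (he w).symm
            · exfalso
              exact hzp g (by simp [List.mem_cons.1 hgp]) (by rw [hg, he])
            · exfalso
              simp at hg
              obtain ⟨c, hc, rfl⟩ := hg
              exact hC2' c hc (σ c) (by rw [List.mem_append]; exact Or.inr hgp) (he c).symm
            · have := split_uniq (C := C') (g := g) (D := D') (U := (D.map σ).reverse ++ σ z :: (C2.map σ).reverse) (W := (C1.map σ).reverse) (by rw [← h2]; exact hq'n0) (by rw [← h2, hq'', hg])
              exact hfin [] (by simp [this.1])
            · obtain ⟨U, W, hU⟩ := List.append_of_mem hg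
              have := split_uniq (C := C') (g := g) (D := D') (U := (D.map σ).reverse ++ σ z :: (C2.map σ).reverse ++ σ w :: U) (W := W) (by rw [← h2]; exact hq'n0) (by rw [← h2, hq'', hU]; simp)
              exact hfin _ this.1
        have hCD : ∀ c ∈ C', ∀ d ∈ D', e c ≠ e d := by
          intro c hc d hd h
          rw [h2] at hq'n
          change ND e _ at hq'n
          clear ih nc hR he2
          simp only [nd_append, nd_cons, nd_nil, all_append, all_cons, all_nil, and_true, ne_eq] at *
          grind
        refine ⟨q', hq', z :: X ++ A, g, B, C', D', by simp [h1], h2, ?_, h4⟩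
        by_contra hbad
        have hbad' : ∃ d ∈ D', ∃ a ∈ X, e a = e d := by
          push Not at hbad
          obtain ⟨a, ha, d, hd, had⟩ := hbad
          simp at ha
          rcases ha with rfl | ha | ha
          · obtain ⟨c, hc, hac⟩ := hsub a (Or.inl rfl)
            exact absurd (hac.symm.trans had) (hCD c hc d hd)
          · exact ⟨d, hd, a, ha, had⟩
          · exact absurd had (h3 a ha d hd)
        obtain ⟨D1, h, D2, rfl, ⟨a, haX, hah⟩, hD1⟩ := exists_first _ D' hbad'
        have hD1' : ∀ y ∈ D1, ∀ a ∈ X, e a ≠ e y := by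
          intro y hy a ha hh; exact hD1 y hy ⟨a, ha, hh⟩
        have hchD : (g :: D1 ++ [h]).IsChain R := by
          have : (C' ++ (g :: D1 ++ [h]) ++ D2).IsChain R := by rw [h2] at hq'c; simpa using hq'c
          exact (this.left_of_append).right_of_append
        have hDn : ((g :: D1 ++ [h]).map e).Nodup := by
          rw [h2] at hq'n
          change ND e _ at hq'n
          change ND e _
          clear ih nc hR he2
          simp only [nd_append, nd_cons, nd_nil, all_append, all_cons, all_nil, and_true, ne_eq] at *
          grind
        have hpA : (z :: (X ++ A ++ [g])).IsChain R := by
          have : (z :: (X ++ A ++ [g]) ++ B).IsChain R := by rw [h1] at hp; simpa using hp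
          exact this.left_of_append
        have hpnA : ((z :: (X ++ A ++ [g])).map e).Nodup := by
          rw [h1] at hpn
          change ND e _ at hpn
          change ND e _
          clear ih nc hR he2
          simp only [nd_append, nd_cons, nd_nil, all_append, all_cons, all_nil, and_true, ne_eq] at *
          grind
        have hAD1 : ∀ a ∈ A, ∀ d ∈ D1, e a ≠ e d := fun a ha d hd => h3 a ha d (by simp [hd])
        have hzD1 : ∀ d ∈ D1, e z ≠ e d := by
          intro d hd hh
          obtain ⟨c, hc, hac⟩ := hsub z (Or.inl rfl)
          exact hCD c hc d (by simp [hd]) (hac.symm.trans hh)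
        have hC2D1 : ∀ c ∈ C2, ∀ d ∈ D1, e c ≠ e d := by
          intro c hc d hd hh
          obtain ⟨c', hc', hac⟩ := hsub c (Or.inr hc)
          exact hCD c' hc' d (by simp [hd]) (hac.symm.trans hh)
        rcases he2 _ _ hah with rfl | rfl
        · -- a ∈ X same direction
          obtain ⟨X1, X2, rfl⟩ := List.append_of_mem haX
          have hch : (a :: X2 ++ A ++ g :: D1 ++ [a]).IsChain R := by
            have h5 : (a :: X2 ++ A ++ [g]).IsChain R := by
              have : (z :: X1 ++ (a :: X2 ++ A ++ [g])).IsChain R := by simpa using hpA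
              exact this.right_of_append
            have := (List.isChain_split (R := R) (l₁ := a :: X2 ++ A) (l₂ := D1 ++ [a]) (c := g)).2 ⟨h5, by simpa using hchD⟩
            simpa using this
          have hnd : ((a :: X2 ++ A ++ g :: D1).map e).Nodup := by
            change ND e _ at hpnA
            change ND e _ at hDn
            change ND e _
            clear ih nc hR he2
            simp only [nd_append, nd_cons, nd_nil, all_append, all_cons, all_nil, and_true, ne_eq] at *
            grind
          rcases List.eq_nil_or_concat (g :: D1) with h6 | ⟨K, y, hK⟩
          · simp at h6
          · have hK' : g :: D1 = K ++ [y] := by simpa using hK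
            rw [hK'] at hch hnd
            refine nc a (X2 ++ A ++ K) y ?_ (by simpa using hnd) ?_
            · have : (a :: (X2 ++ A ++ K ++ [y]) ++ [a]).IsChain R := by simpa using hch
              exact this.left_of_append
            · have : (a :: (X2 ++ A ++ K) ++ ([y] ++ [a])).IsChain R := by simpa using hch
              simpa using this.right_of_append
        · obtain ⟨X1, X2, rfl⟩ := List.append_of_mem haX
          have hr1 : (h :: (X1.map σ).reverse ++ [σ z]).IsChain R := by
            have : (z :: (X1 ++ [σ h]) ++ (X2 ++ A ++ [g])).IsChain R := by simpa using hpA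
            have := chain_rev hR this.left_of_append
            simpa [hσ] using this
          have hr2 : (σ z :: (C2.map σ).reverse ++ [σ w]).IsChain R := by
            have := chain_rev hR hmid
            simpa using this
          have hAg : (A ++ [g]).IsChain R := by
            have : (z :: (X1 ++ σ h :: X2) ++ (A ++ [g])).IsChain R := by simpa using hpA
            exact this.right_of_append
          have t1 := (List.isChain_split (R := R) (l₁ := A) (l₂ := D1 ++ [h]) (c := g)).2 ⟨hAg, by simpa using hchD⟩
          have t2 := (List.isChain_split (R := R) (l₁ := A ++ g :: D1) (l₂ := (X1.map σ).reverse ++ [σ z]) (c := h)).2 ⟨by simpa using t1, by simpa using hr1⟩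
          have t3 := (List.isChain_split (R := R) (l₁ := A ++ g :: D1 ++ h :: (X1.map σ).reverse) (l₂ := (C2.map σ).reverse ++ [σ w]) (c := σ z)).2 ⟨by simpa using t2, by simpa using hr2⟩
          have hee : ∀ l : List V, (l.map σ).map e = l.map e := by
            intro l; simp [Function.comp_def, he]
          have hwAg : ∃ K, A ++ [g] = σ w :: K := by
            cases A with
            | nil => simp at h1; exact ⟨[], by simp [h1.1]⟩
            | cons a A => simp at h1; exact ⟨A ++ [g], by simp [h1.1]⟩
          have hC2p : ∀ y ∈ C2, (∀ b ∈ X1, e y ≠ e b) ∧ (e y ≠ e h) ∧ (∀ b ∈ A, e y ≠ e b) ∧ e y ≠ e g := by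
            intro y hy
            refine ⟨fun b hb => hC2' y hy b (by simp [hb]), ?_, fun b hb => hC2' y hy b (by rw [h1]; simp [hb]), hC2' y hy g (by rw [h1]; simp)⟩
            rw [← he h]; exact hC2' y hy _ (by simp)
          have hzC2 : ND e C2 ∧ ∀ y ∈ C2, e y ≠ e z := by
            change ND e _ at hqn
            clear ih nc hR he2
            simp only [nd_append, nd_cons, nd_nil, all_append, all_cons, all_nil, and_true, ne_eq] at *
            grind
          have hnd : ((A ++ g :: D1 ++ h :: (X1.map σ).reverse ++ σ z :: (C2.map σ).reverse).map e).Nodup := by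
            change ND e _ at hpnA
            change ND e _ at hDn
            change ND e _
            clear ih nc hR he2
            simp only [nd_append, nd_cons, nd_nil, nd_rmap he, all_rmap, he, all_append, all_cons, all_nil, and_true, ne_eq] at *
            clear hq hqn hmid hqnd hlen hp hpn hlen' hp' hpn' hC2 hwp hswp hD1 hpA haX hr1 hr2 hAg t1 t2 t3 hee hbad hah hwAg hchD hsub hq'n hq'c hq' hq'n0 h2 hzq
            and_intros <;> grind
          obtain ⟨K, hK⟩ := hwAg
          have hKe : A ++ g :: D1 ++ h :: (X1.map σ).reverse ++ σ z :: (C2.map σ).reverse = σ w :: (K ++ D1 ++ h :: (X1.map σ).reverse ++ σ z :: (C2.map σ).reverse) := by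
            have : A ++ g :: D1 = (A ++ [g]) ++ D1 := by simp
            rw [this, hK]; simp
          rcases List.eq_nil_or_concat (σ z :: (C2.map σ).reverse) with h6 | ⟨K2, y, hK2⟩
          · simp at h6
          · have hK2' : σ z :: (C2.map σ).reverse = K2 ++ [y] := by simpa using hK2
            have t4 : ((A ++ g :: D1 ++ h :: (X1.map σ).reverse ++ σ z :: (C2.map σ).reverse) ++ [σ w]).IsChain R := by
              simpa using t3
            rw [hKe, hK2'] at t4 hnd
            refine nc (σ w) (K ++ D1 ++ h :: (X1.map σ).reverse ++ K2) y ?_ (by simpa using hnd) ?_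
            · have : (σ w :: (K ++ D1 ++ h :: (X1.map σ).reverse ++ K2 ++ [y]) ++ [σ w]).IsChain R := by simpa using t4
              exact this.left_of_append
            · have : (σ w :: (K ++ D1 ++ h :: (X1.map σ).reverse ++ K2) ++ ([y] ++ [σ w])).IsChain R := by simpa using t4
              simpa using this.right_of_append
      obtain ⟨b, hb, hzb⟩ := hz
      by_cases hzq : z ∈ q
      · exact step q hq hqn hzq
      · have : σ z ∈ q := by
          rcases he2 _ _ hzb with rfl | rfl
          · exact absurd hb hzq
          · rwa [hσ]
        obtain ⟨q', hq', hrest⟩ := step (q.map σ).reverse (chain_rev hR hq) (nodup_rev he hqn)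
          (by simp; exact ⟨σ z, this, hσ z⟩)
        refine ⟨q', ?_, hrest⟩
        rcases hq' with h | h
        · exact Or.inr h
        · left; rw [h]; simp [Function.comp_def, hσ]
structure IsMate {α : Type*} (G : SimpleGraph α) (sH : Finset α) (MH : Finset (Sym2 α))
    (σ : α → α) : Prop where
  inv : ∀ x, σ (σ x) = x
  edge : ∀ x ∈ sH, s(x, σ x) ∈ MH
  uniq : ∀ x y, s(x, y) ∈ MH → σ x = y
  mem : ∀ x y, s(x, y) ∈ MH → x ∈ sH
  adj : ∀ x ∈ sH, G.Adj x (σ x)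
  map : ∀ x ∈ sH, σ x ∈ sH

theorem exists_mate {α : Type*} (G : SimpleGraph α) (sH : Finset α) (MH : Finset (Sym2 α))
    (hMH : IsPMOn G sH MH) : ∃ σ, IsMate G sH MH σ := by
  classical
  obtain ⟨h1, h2⟩ := hMH
  have hex : ∀ x ∈ sH, ∃ y, s(x, y) ∈ MH := by
    intro x hx
    obtain ⟨e, ⟨he, hxe⟩, -⟩ := h2 x hx
    obtain ⟨y, rfl⟩ := Sym2.mem_iff_exists.1 hxe
    exact ⟨y, he⟩
  have hmem : ∀ x y, s(x, y) ∈ MH → x ∈ sH := fun x y h => (h1 _ h).2 x (by simp)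
  have huq : ∀ x y z, s(x, y) ∈ MH → s(x, z) ∈ MH → y = z := by
    intro x y z hy hz
    have := (h2 x (hmem x y hy)).unique ⟨hy, by simp⟩ ⟨hz, by simp⟩
    rcases (by simpa using this : y = z ∨ x = z ∧ y = x) with h | ⟨h, h'⟩
    · exact h
    · rw [h', h]
  let σ : α → α := fun x => if h : ∃ y, s(x, y) ∈ MH then h.choose else x
  have hσ1 : ∀ x y, s(x, y) ∈ MH → σ x = y := by
    intro x y h
    have hh : ∃ y, s(x, y) ∈ MH := ⟨y, h⟩
    have : σ x = hh.choose := by simp only [σ]; rw [dif_pos hh]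
    rw [this]
    exact huq x _ _ hh.choose_spec h
  have hedge : ∀ x ∈ sH, s(x, σ x) ∈ MH := by
    intro x hx
    obtain ⟨y, hy⟩ := hex x hx
    rw [hσ1 x y hy]; exact hy
  refine ⟨σ, ?_, hedge, hσ1, hmem, ?_, ?_⟩
  · intro x
    by_cases h : ∃ y, s(x, y) ∈ MH
    · obtain ⟨y, hy⟩ := h
      rw [hσ1 x y hy]
      exact hσ1 y x (by rwa [Sym2.eq_swap])
    · have : σ x = x := by simp only [σ]; rw [dif_neg h]
      rw [this, this]
  · intro x hx
    exact (SimpleGraph.mem_edgeSet G).1 (h1 _ (hedge x hx)).1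
  · intro x hx
    exact (h1 _ (hedge x hx)).2 _ (by simp)

def RR {α : Type*} (G : SimpleGraph α) (sH : Finset α) (σ : α → α) (x y : α) : Prop :=
  x ∈ sH ∧ y ∈ sH ∧ G.Adj (σ x) y

theorem tau_exists {α : Type*} [DecidableEq α] {G : SimpleGraph α} {sH : Finset α}
    {MH : Finset (Sym2 α)} {σ : α → α} (hσ : IsMate G sH MH σ) :
    ∀ (l : List α) (x : α), x ∈ sH → (x :: l).IsChain (RR G sH σ) →
      ((x :: l).map (fun x => s(x, σ x))).Nodup → ∃ τ : α → α,
        (∀ v ∈ sH, v ≠ x → v ≠ σ ((x :: l).getLast (by simp)) → τ v ∈ sH ∧ τ v ≠ x ∧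
          τ v ≠ σ ((x :: l).getLast (by simp)) ∧ G.Adj v (τ v) ∧ τ (τ v) = v) ∧
        (∀ v, v ∉ x :: l → σ v ∉ x :: l → τ v = σ v) := by
  intro l
  induction l with
  | nil =>
    intro x hx _ _
    refine ⟨σ, ?_, by simp⟩
    intro v hv h1 h2
    simp at h2 ⊢
    refine ⟨hσ.map v hv, ?_, ?_, hσ.adj v hv, hσ.inv v⟩
    · intro h; apply h2; rw [← h, hσ.inv]
    · intro h; apply h1; rw [← hσ.inv v, h, hσ.inv]
  | cons y l ih =>
    intro x hx hc hn
    have hc' := hc.tail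
    have hxy : RR G sH σ x y := by
      rw [List.isChain_cons_cons] at hc; exact hc.1
    have hn' : (((y :: l).map (fun x => s(x, σ x)))).Nodup := by
      rw [List.map_cons, List.nodup_cons] at hn; exact hn.2
    have hxn : ∀ z ∈ y :: l, z ≠ x ∧ z ≠ σ x := by
      intro z hz
      rw [List.map_cons, List.nodup_cons] at hn
      constructor
      · rintro rfl; exact hn.1 (List.mem_map.2 ⟨_, hz, rfl⟩)
      · rintro rfl
        refine hn.1 (List.mem_map.2 ⟨_, hz, ?_⟩)
        simp only [hσ.inv]; exact Sym2.eq_swap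
    obtain ⟨τ, h1, h2⟩ := ih y hxy.2.1 hc' hn'
    have hlast : (x :: y :: l).getLast (by simp) = (y :: l).getLast (by simp) := by simp
    rw [hlast]
    have hm : (y :: l).getLast (by simp) ∈ y :: l := List.getLast_mem _
    generalize (y :: l).getLast (by simp) = m at *
    have hmx := hxn m hm
    have hyx := hxn y (by simp)
    have hτx : τ x = σ x := h2 x (fun h => (hxn x h).1 rfl) (fun h => (hxn _ h).2 rfl)
    have hτsx : τ (σ x) = x := by
      have := h2 (σ x) (fun h => (hxn _ h).2 rfl) (by rw [hσ.inv]; exact fun h => (hxn _ h).1 rfl)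
      rw [this, hσ.inv]
    have hsx := hσ.map x hx
    have hxsx : σ x ≠ x := (hσ.adj x hx).ne'
    have hym : y ≠ σ m := by
      intro h
      have hmy : σ y = m := by rw [h, hσ.inv]
      rcases List.mem_cons.1 hm with h' | h'
      · subst h'; exact (hσ.adj m hxy.2.1).ne h
      · rw [List.map_cons, List.nodup_cons] at hn'
        refine hn'.1 (List.mem_map.2 ⟨m, h', ?_⟩)
        simp only [hmy, ← h]; exact Sym2.eq_swap
    have hsxm : σ x ≠ σ m := fun h => hmx.1 (by rw [← hσ.inv m, ← h, hσ.inv])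
    have hxm : x ≠ σ m := fun h => hmx.2 (by rw [h, hσ.inv])
    refine ⟨Function.update (Function.update τ (σ x) y) y (σ x), ?_, ?_⟩
    · intro v hv hvx hvm
      by_cases hvy : v = y
      · subst hvy
        rw [Function.update_self, Function.update_of_ne (Ne.symm hyx.2), Function.update_self]
        exact ⟨hsx, hxsx, hsxm, hxy.2.2.symm, rfl⟩
      by_cases hvs : v = σ x
      · subst hvs
        rw [Function.update_of_ne hvy, Function.update_self, Function.update_self]
        exact ⟨hxy.2.1, hyx.1, hym, hxy.2.2, rfl⟩
      have := h1 v hv hvy hvm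
      have hne : τ v ≠ σ x := by
        intro h; rw [h, hτsx] at this; exact hvx this.2.2.2.2.symm
      rw [Function.update_of_ne hvy, Function.update_of_ne hvs, Function.update_of_ne this.2.1, Function.update_of_ne hne]
      refine ⟨this.1, ?_, this.2.2.1, this.2.2.2⟩
      intro h
      have h3 := this.2.2.2.2
      rw [h, hτx] at h3
      exact hvs h3.symm
    · intro v hv1 hv2
      have a1 : v ≠ y := by rintro rfl; simp at hv1
      have a2 : v ≠ σ x := by rintro rfl; apply hv2; rw [hσ.inv]; simp
      rw [Function.update_of_ne a1, Function.update_of_ne a2]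
      exact h2 v (fun h => hv1 (List.mem_cons_of_mem _ h)) (fun h => hv2 (List.mem_cons_of_mem _ h))

theorem no_cyc {α : Type*} [DecidableEq α] {G : SimpleGraph α} {sH : Finset α}
    {MH : Finset (Sym2 α)} {σ : α → α} (hσ : IsMate G sH MH σ)
    (huniq : ∀ m, IsPMOn G sH m → m = MH) (x : α) (l : List α) (y : α)
    (hc : (x :: (l ++ [y])).IsChain (RR G sH σ))
    (hn : ((x :: (l ++ [y])).map (fun x => s(x, σ x))).Nodup) : ¬ RR G sH σ y x := by
  intro hyx
  obtain ⟨τ, h1, -⟩ := tau_exists hσ (l ++ [y]) x hyx.2.1 hc hn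
  have hlast : (x :: (l ++ [y])).getLast (by simp) = y := by simp
  rw [hlast] at h1
  have hxy : x ≠ y := by
    rintro rfl; simp at hn
  have hsy : σ y ∈ sH := hσ.map y hyx.1
  have hxsy : x ≠ σ y := hyx.2.2.ne'
  have h3 : ∃ τ : α → α, (∀ v ∈ sH, τ v ∈ sH ∧ G.Adj v (τ v) ∧ τ (τ v) = v) ∧ τ x = σ y := by
    refine ⟨Function.update (Function.update τ x (σ y)) (σ y) x, ?_, ?_⟩
    · intro v hv
      by_cases a1 : v = σ y
      · subst a1
        rw [Function.update_self, Function.update_of_ne hxsy, Function.update_self]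
        exact ⟨hyx.2.1, hyx.2.2, rfl⟩
      by_cases a2 : v = x
      · subst a2
        rw [Function.update_of_ne a1, Function.update_self, Function.update_self]
        exact ⟨hsy, hyx.2.2.symm, rfl⟩
      have := h1 v hv a2 a1
      rw [Function.update_of_ne a1, Function.update_of_ne a2, Function.update_of_ne this.2.2.1, Function.update_of_ne this.2.1]
      exact ⟨this.1, this.2.2.2⟩
    · rw [Function.update_of_ne hxsy, Function.update_self]
  obtain ⟨τ, h1, h2⟩ := h3
  have hpm : IsPMOn G sH (sH.image (fun v => s(v, τ v))) := by
    constructor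
    · intro e he
      obtain ⟨v, hv, rfl⟩ := Finset.mem_image.1 he
      refine ⟨(h1 v hv).2.1, ?_⟩
      intro w hw
      rcases Sym2.mem_iff.1 hw with rfl | rfl
      · exact hv
      · exact (h1 v hv).1
    · intro v hv
      refine ⟨s(v, τ v), ⟨Finset.mem_image_of_mem _ hv, by simp⟩, ?_⟩
      rintro e ⟨he, hve⟩
      obtain ⟨w, hw, rfl⟩ := Finset.mem_image.1 he
      rcases Sym2.mem_iff.1 hve with rfl | rfl
      · rfl
      · rw [(h1 w hw).2.2]; exact Sym2.eq_swap
  have hMH := huniq _ hpm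
  have : s(x, σ y) ∈ MH := by
    rw [← hMH, ← h2]; exact Finset.mem_image_of_mem (fun v => s(v, τ v)) hyx.2.1
  have h4 := hσ.uniq _ _ this
  exact hxy (by rw [← hσ.inv x, h4, hσ.inv])
open SimpleGraph

def dl {α : Type*} [DecidableEq α] {G : SimpleGraph α} (MH : Finset (Sym2 α)) :
    {x y : α} → G.Walk x y → List α
  | _, _, .nil => []
  | _, _, .cons (u := u) (v := v) _ p => if s(u, v) ∈ MH then u :: dl MH p else dl MH p

section
variable {α : Type*} [DecidableEq α] {G : SimpleGraph α} {sH : Finset α}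
    {MH : Finset (Sym2 α)} {σ : α → α}

theorem dl_append {x y z : α} (p : G.Walk x y) (q : G.Walk y z) :
    dl MH (p.append q) = dl MH p ++ dl MH q := by
  induction p with
  | nil => simp [dl]
  | cons h p ih =>
    rw [Walk.cons_append, dl, dl, ih]
    split_ifs <;> simp

theorem dl_reverse (hσ : IsMate G sH MH σ) {x y : α} (p : G.Walk x y) :
    dl MH p.reverse = ((dl MH p).map σ).reverse := by
  induction p with
  | nil => simp [dl]
  | @cons u v w h p ih =>
    rw [Walk.reverse_cons, dl_append, ih, dl, dl, dl, Sym2.eq_swap]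
    split_ifs with h1
    · simp [hσ.uniq _ _ h1]
    · simp

theorem dl_edges (hσ : IsMate G sH MH σ) {x y : α} (p : G.Walk x y) :
    (dl MH p).map (fun x => s(x, σ x)) = p.edges.filter (· ∈ MH) := by
  induction p with
  | nil => simp [dl]
  | @cons u v w h p ih =>
    rw [dl, Walk.edges_cons, List.filter_cons]
    split_ifs with h1 h2 h2
    · simp [hσ.uniq _ _ h1, ih]
    · simp [h1] at h2
    · simp [h1] at h2
    · exact ih

theorem dl_mem (hσ : IsMate G sH MH σ) {x y : α} (p : G.Walk x y) :
    ∀ d ∈ dl MH p, d ∈ sH := by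
  induction p with
  | nil => simp [dl]
  | @cons u v w h p ih =>
    rw [dl]
    split_ifs with h1
    · intro d hd
      rcases List.mem_cons.1 hd with rfl | hd
      · exact hσ.mem _ _ h1
      · exact ih d hd
    · exact ih

theorem dl_chain (hσ : IsMate G sH MH σ) {x y : α} (p : G.Walk x y)
    (hc : p.edges.IsChain (fun e f => e ∈ MH ↔ f ∉ MH)) :
    (dl MH p).IsChain (RR G sH σ) ∧ ∀ d ∈ (dl MH p).head?,
      (d = x ∧ ∃ e ∈ p.edges.head?, e ∈ MH) ∨ (G.Adj x d ∧ ∃ e ∈ p.edges.head?, e ∉ MH) := by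
  induction p with
  | nil => simp [dl]
  | @cons u v w h p ih =>
    rw [Walk.edges_cons, List.isChain_cons] at hc
    obtain ⟨ih1, ih2⟩ := ih hc.2
    rw [dl, Walk.edges_cons]
    split_ifs with h1
    · refine ⟨?_, ?_⟩
      · rw [List.isChain_cons]
        refine ⟨?_, ih1⟩
        intro d hd
        refine ⟨hσ.mem _ _ h1, dl_mem hσ p d (List.mem_of_mem_head? hd), ?_⟩
        rw [hσ.uniq _ _ h1]
        rcases ih2 d hd with ⟨_, e, he, he'⟩ | ⟨h2, _⟩
        · exact absurd he' ((hc.1 e he).1 h1)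
        · exact h2
      · intro d hd
        left
        simp at hd ⊢
        exact ⟨hd.symm, h1⟩
    · refine ⟨ih1, ?_⟩
      intro d hd
      right
      rcases ih2 d hd with ⟨h2, _⟩ | ⟨_, e, he, he'⟩
      · rw [h2]; exact ⟨h, _, rfl, h1⟩
      · exact absurd ((hc.1 e he).2 he') h1

theorem dl_split (hσ : IsMate G sH MH σ) {x y : α} (p : G.Walk x y) (a : α)
    (ha : a ∈ dl MH p) : ∃ (h : G.Adj a (σ a)) (A : G.Walk x a) (B : G.Walk (σ a) y),
      p = A.append (Walk.cons h B) ∧ dl MH p = dl MH A ++ a :: dl MH B := by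
  induction p with
  | nil => simp [dl] at ha
  | @cons u v w h p ih =>
    rw [dl] at ha
    have key : a ∈ dl MH p → ∃ (h' : G.Adj a (σ a)) (A : G.Walk u a) (B : G.Walk (σ a) w),
      Walk.cons h p = A.append (Walk.cons h' B) ∧
        dl MH (Walk.cons h p) = dl MH A ++ a :: dl MH B := by
      intro ha
      obtain ⟨h', A, B, h1, h2⟩ := ih ha
      refine ⟨h', Walk.cons h A, B, by rw [h1]; rfl, ?_⟩
      rw [dl, dl, h2]
      split_ifs <;> simp
    split_ifs at ha with h1
    · rcases List.mem_cons.1 ha with rfl | ha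
      · have := hσ.uniq _ _ h1
        subst this
        exact ⟨h, Walk.nil, p, rfl, by simp [dl, h1]⟩
      · exact key ha
    · exact key ha

theorem int_mem {x y : α} (p : G.Walk x y)
    (hc : p.edges.IsChain (fun e f => e ∈ MH ↔ f ∉ MH)) (w : α) (hw : w ∈ p.support) :
    w = x ∨ w = y ∨ ∃ e ∈ p.edges, e ∈ MH ∧ w ∈ e := by
  induction p with
  | nil => simp at hw; simp [hw]
  | @cons u v z h p ih =>
    rw [Walk.edges_cons, List.isChain_cons] at hc
    rw [Walk.support_cons] at hw
    rcases List.mem_cons.1 hw with hw | hw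
    · left; exact hw
    right
    rcases ih hc.2 hw with rfl | h1 | ⟨e, he, he2⟩
    · cases p with
      | nil => left; rfl
      | @cons _ b _ h' p =>
        right
        have := hc.1 s(w, b) (by simp)
        by_cases h3 : s(u, w) ∈ MH
        · exact ⟨s(u, w), by simp, h3, by simp⟩
        · exact ⟨s(w, b), by simp, by tauto, by simp⟩
    · left; exact h1
    · right; exact ⟨e, by simp [he], he2⟩

theorem mate_edge (hσ : IsMate G sH MH σ) (w : α) (e : Sym2 α) (he : e ∈ MH) (hw : w ∈ e) :
    w ∈ sH ∧ e = s(w, σ w) := by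
  obtain ⟨y, rfl⟩ := Sym2.mem_iff_exists.1 hw
  exact ⟨hσ.mem _ _ he, by rw [hσ.uniq _ _ he]⟩

theorem sat (hσ : IsMate G sH MH σ) {x y : α} {p : G.Walk x y} (hp : IsAltPath G sH MH p)
    (w : α) (hw : w ∈ p.support) :
    (w ∈ sH → s(w, σ w) ∈ p.edges) ∧ (w ∉ sH → w = x ∨ w = y) := by
  obtain ⟨h1, h2, h3, h4, h5⟩ := hp
  rcases int_mem p h3 w hw with rfl | rfl | ⟨e, he, he2, he3⟩
  · refine ⟨?_, by tauto⟩
    intro hs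
    cases p with
    | nil => simp at h2
    | @cons _ b _ h' p =>
      have := h4 s(w, b) (by simp)
      rw [(mate_edge hσ w s(w, b) (this.2 hs) (by simp)).2.symm]
      simp
  · refine ⟨?_, by tauto⟩
    intro hs
    have hl := List.getLast?_eq_some_getLast h2
    have := (h5 _ hl).2 hs
    have hm : w ∈ p.edges.getLast h2 := by
      have hr : p.reverse.edges ≠ [] := by simpa using h2
      have : p.reverse.edges.head hr = p.edges.getLast h2 := by
        simp [Walk.edges_reverse]
      rw [← this]
      generalize p.reverse = q at *
      cases q with
      | nil => simp at hr
      | cons h q => simp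
    rw [← (mate_edge hσ w _ this hm).2]
    exact List.getLast_mem h2
  · obtain ⟨a, b⟩ := mate_edge hσ w e he2 he3
    refine ⟨fun _ => b ▸ he, fun h => absurd a h⟩

theorem shared (hσ : IsMate G sH MH σ) {p₁ p₂ p₃ p₄ : α}
    (hdist : ([p₁, p₂, p₃, p₄] : List α).Nodup)
    {P : G.Walk p₁ p₂} {P' : G.Walk p₃ p₄}
    (hP : IsAltPath G sH MH P) (hP' : IsAltPath G sH MH P') (w : α)
    (h1 : w ∈ P.support) (h2 : w ∈ P'.support) :
    w ∈ sH ∧ s(w, σ w) ∈ P.edges ∧ s(w, σ w) ∈ P'.edges := by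
  have a := sat hσ hP w h1
  have b := sat hσ hP' w h2
  have hs : w ∈ sH := by
    by_contra hs
    have a' := a.2 hs
    have b' := b.2 hs
    simp at hdist
    rcases a' with rfl | rfl <;> rcases b' with rfl | rfl <;> simp at hdist
  exact ⟨hs, a.1 hs, b.1 hs⟩

theorem mem_dl_of_edge (hσ : IsMate G sH MH σ) {x y : α} (p : G.Walk x y) (w : α) (hw : w ∈ sH)
    (h : s(w, σ w) ∈ p.edges) : ∃ a ∈ dl MH p, s(a, σ a) = s(w, σ w) := by
  have : s(w, σ w) ∈ (dl MH p).map (fun x => s(x, σ x)) := by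
    rw [dl_edges hσ]; simp [h, hσ.edge w hw]
  exact List.mem_map.1 this

theorem dl_nodup (hσ : IsMate G sH MH σ) {x y : α} {p : G.Walk x y} (hp : p.IsPath) :
    ((dl MH p).map (fun x => s(x, σ x))).Nodup := by
  rw [dl_edges hσ]
  exact (hp.isTrail.edges_nodup).filter _

theorem supp_bridge {x u v y : α} (A : G.Walk x u) (h : G.Adj u v) (B : G.Walk v y) :
    (A.append (Walk.cons h B)).support = A.support ++ B.support := by
  rw [Walk.support_append]; simp

theorem path_bridge {x u v y : α} (A : G.Walk x u) (h : G.Adj u v) (B : G.Walk v y) :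
    (A.append (Walk.cons h B)).IsPath ↔
      A.IsPath ∧ B.IsPath ∧ ∀ w ∈ A.support, w ∉ B.support := by
  rw [Walk.isPath_def, Walk.isPath_def, Walk.isPath_def, supp_bridge, List.nodup_append]
  constructor
  · rintro ⟨a, b, c⟩; exact ⟨a, b, fun w h1 h2 => c w h1 w h2 rfl⟩
  · rintro ⟨a, b, c⟩; exact ⟨a, b, fun w h1 z h2 h3 => c w h1 (h3 ▸ h2)⟩

theorem edges_bridge {x u v y : α} (A : G.Walk x u) (h : G.Adj u v) (B : G.Walk v y) :
    (A.append (Walk.cons h B)).edges = A.edges ++ s(u, v) :: B.edges := by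
  rw [Walk.edges_append]; simp

theorem supp_dis (hσ : IsMate G sH MH σ) {p₁ p₂ p₃ p₄ : α}
    (hdist : ([p₁, p₂, p₃, p₄] : List α).Nodup) {u v : α} {h : G.Adj u v}
    {A : G.Walk p₁ u} {B : G.Walk v p₂} {C : G.Walk p₃ u} {D : G.Walk v p₄}
    (hP : IsAltPath G sH MH (A.append (Walk.cons h B)))
    (hP' : IsAltPath G sH MH (C.append (Walk.cons h D)))
    (hAD : ∀ a ∈ dl MH A, ∀ d ∈ dl MH D, s(a, σ a) ≠ s(d, σ d)) :
    ∀ w ∈ A.support, w ∉ D.support := by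
  intro w hA hD
  obtain ⟨h1, h2, h3⟩ := shared hσ hdist hP hP' w (by rw [supp_bridge]; simp [hA])
    (by rw [supp_bridge]; simp [hD])
  obtain ⟨_, _, AB⟩ := (path_bridge A h B).1 hP.1
  obtain ⟨_, _, CD⟩ := (path_bridge C h D).1 hP'.1
  rw [edges_bridge, List.mem_append, List.mem_cons] at h2 h3
  have h2' : s(w, σ w) ∈ A.edges ∨ w = u := by
    rcases h2 with h2 | h2 | h2
    · exact Or.inl h2
    · have : w ∈ s(u, v) := by rw [← h2]; simp
      rcases Sym2.mem_iff.1 this with rfl | rfl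
      · exact Or.inr rfl
      · exact absurd B.start_mem_support (AB _ hA)
    · exact absurd (B.fst_mem_support_of_mem_edges h2) (AB _ hA)
  have h3' : s(w, σ w) ∈ D.edges ∨ w = v := by
    rcases h3 with h3 | h3 | h3
    · exact absurd hD (CD _ (C.fst_mem_support_of_mem_edges h3))
    · have : w ∈ s(u, v) := by rw [← h3]; simp
      rcases Sym2.mem_iff.1 this with rfl | rfl
      · exact absurd hD (CD _ C.end_mem_support)
      · exact Or.inr rfl
    · exact Or.inl h3
  rcases h2' with h2 | rfl
  · rcases h3' with h3 | rfl
    · obtain ⟨a, ha, ha'⟩ := mem_dl_of_edge hσ A w h1 h2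
      obtain ⟨d, hd, hd'⟩ := mem_dl_of_edge hσ D w h1 h3
      exact hAD a ha d hd (ha'.trans hd'.symm)
    · exact AB _ hA B.start_mem_support
  · exact CD _ C.end_mem_support hD

theorem alt_reverse {x y : α} {p : G.Walk x y} (hp : IsAltPath G sH MH p) :
    IsAltPath G sH MH p.reverse := by
  obtain ⟨h1, h2, h3, h4, h5⟩ := hp
  refine ⟨h1.reverse, by simpa using h2, ?_, ?_, ?_⟩
  · rw [Walk.edges_reverse]
    refine List.isChain_reverse.2 (List.IsChain.imp ?_ h3)
    intro a b hab
    tauto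
  · rw [Walk.edges_reverse, List.head?_reverse]; exact h5
  · rw [Walk.edges_reverse, List.getLast?_reverse]; exact h4

theorem alt_mix {p₁ p₂ p₃ p₄ : α} {u v : α} {h : G.Adj u v}
    {A : G.Walk p₁ u} {B : G.Walk v p₂} {C : G.Walk p₃ u} {D : G.Walk v p₄}
    (hP : IsAltPath G sH MH (A.append (Walk.cons h B)))
    (hP' : IsAltPath G sH MH (C.append (Walk.cons h D)))
    (hAD : ∀ w ∈ A.support, w ∉ D.support) :
    IsAltPath G sH MH (A.append (Walk.cons h D)) := by
  obtain ⟨h1, h2, h3, h4, h5⟩ := hP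
  obtain ⟨g1, g2, g3, g4, g5⟩ := hP'
  rw [path_bridge] at h1 g1
  rw [edges_bridge] at *
  refine ⟨(path_bridge _ _ _).2 ⟨h1.1, g1.2.1, hAD⟩, ?_⟩
  rw [edges_bridge]
  refine ⟨by simp, ?_, ?_, ?_⟩
  · exact List.isChain_split.2 ⟨(List.isChain_split.1 h3).1, (List.isChain_split.1 g3).2⟩
  · revert h4; cases A.edges <;> simp
  · revert g5; simp [List.getLast?_append]

theorem cut0 (L : Set α) {x y : α} (p : G.Walk x y)
    (hL : ∀ a b, s(a, b) ∈ p.edges → (a ∈ L ↔ b ∈ L)) : x ∈ L ↔ y ∈ L := by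
  induction p with
  | nil => rfl
  | @cons u v w h p ih =>
    rw [hL u v (by simp)]
    exact ih fun a b hab => hL a b (by simp [hab])

theorem cut1 (L : Set α) (e : Sym2 α) (he : ∀ a b, s(a, b) = e → (a ∈ L ↔ b ∉ L))
    {x y : α} (p : G.Walk x y) (hn : p.edges.Nodup) (hep : e ∈ p.edges)
    (hL : ∀ a b, s(a, b) ∈ p.edges → s(a, b) ≠ e → (a ∈ L ↔ b ∈ L)) : x ∈ L ↔ y ∉ L := by
  induction p with
  | nil => simp at hep
  | @cons u v w h p ih =>
    rw [Walk.edges_cons, List.nodup_cons] at hn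
    by_cases h1 : s(u, v) = e
    · have := cut0 L p fun a b hab => hL a b (by simp [hab]) (by
        rintro h2; rw [h2, ← h1] at hab; exact hn.1 hab)
      rw [he u v h1, this]
    · have h2 : e ∈ p.edges := by
        rw [Walk.edges_cons, List.mem_cons] at hep
        exact hep.resolve_left fun h => h1 h.symm
      rw [hL u v (by simp) h1]
      exact ih hn.2 h2 fun a b hab => hL a b (by simp [hab])

theorem case_lemma {p₁ p₂ p₃ p₄ : α} {u v : α} {h : G.Adj u v}
    {A : G.Walk p₁ u} {B : G.Walk v p₂} {C : G.Walk p₃ u} {D : G.Walk v p₄}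
    (hP : IsAltPath G sH MH (A.append (Walk.cons h B)))
    (hP' : IsAltPath G sH MH (C.append (Walk.cons h D)))
    (hAD : ∀ w ∈ A.support, w ∉ D.support) (hCB : ∀ w ∈ C.support, w ∉ B.support) :
    (∃ (Q₁ : G.Walk p₁ p₄) (Q₂ : G.Walk p₂ p₃),
        IsAltPath G sH MH Q₁ ∧ IsAltPath G sH MH Q₂ ∧
        (Q₁.edges : Multiset (Sym2 α)) + (Q₂.edges : Multiset (Sym2 α)) =
          ((A.append (Walk.cons h B)).edges : Multiset (Sym2 α)) +
            ((C.append (Walk.cons h D)).edges : Multiset (Sym2 α))) ∧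
    (¬ ∃ (Q₁ : G.Walk p₁ p₃) (Q₂ : G.Walk p₂ p₄),
        IsAltPath G sH MH Q₁ ∧ IsAltPath G sH MH Q₂ ∧
        (Q₁.edges : Multiset (Sym2 α)) + (Q₂.edges : Multiset (Sym2 α)) =
          ((A.append (Walk.cons h B)).edges : Multiset (Sym2 α)) +
            ((C.append (Walk.cons h D)).edges : Multiset (Sym2 α))) ∧
    DisjointPaths G {p₁, p₂, p₃, p₄} p₁ p₃ p₂ p₄ := by
  obtain ⟨_, _, hAB⟩ := (path_bridge A h B).1 hP.1
  obtain ⟨_, _, hCD⟩ := (path_bridge C h D).1 hP'.1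
  refine ⟨?_, ?_, ?_⟩
  · refine ⟨A.append (Walk.cons h D), (C.append (Walk.cons h B)).reverse,
      alt_mix hP hP' hAD, alt_reverse (alt_mix hP' hP hCB), ?_⟩
    rw [Walk.edges_reverse, Multiset.coe_reverse]
    simp only [edges_bridge, Multiset.coe_add, Multiset.coe_eq_coe]
    rw [List.perm_iff_count]
    intro a
    simp only [List.count_append, List.count_cons]
    omega
  · rintro ⟨Q₁, Q₂, hQ₁, hQ₂, hE⟩
    simp only [edges_bridge] at hE
    have n1 := hQ₁.1.isTrail.edges_nodup
    have n2 := hQ₂.1.isTrail.edges_nodup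
    have he : s(u, v) ∈ Q₁.edges := by
      have hcount := congrArg (Multiset.count s(u, v)) hE
      simp only [Multiset.count_add, Multiset.coe_count, List.count_append,
        List.count_cons_self] at hcount
      have := List.nodup_iff_count_le_one.1 n2 s(u, v)
      exact List.count_pos_iff.1 (by omega)
    have hsub : ∀ f ∈ Q₁.edges, f ∈ A.edges ∨ f = s(u, v) ∨ f ∈ B.edges ∨ f ∈ C.edges ∨
        f ∈ D.edges := by
      intro f hf
      have : f ∈ (Q₁.edges : Multiset (Sym2 α)) + (Q₂.edges : Multiset (Sym2 α)) :=
        Multiset.mem_add.2 (Or.inl hf)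
      rw [hE] at this
      simp at this
      tauto
    have := cut1 {w | w ∈ A.support ∨ w ∈ C.support} s(u, v) ?_ Q₁ n1 he ?_
    · exact this.1 (Or.inl A.start_mem_support) (Or.inr C.start_mem_support)
    · have hu : u ∈ A.support ∨ u ∈ C.support := Or.inl A.end_mem_support
      have hv : ¬ (v ∈ A.support ∨ v ∈ C.support) := by
        rintro (h | h)
        · exact hAB v h B.start_mem_support
        · exact hCD v h D.start_mem_support
      intro a b hab
      rcases Sym2.eq_iff.1 hab with ⟨rfl, rfl⟩ | ⟨rfl, rfl⟩ <;> simp only [Set.mem_setOf_eq] <;>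
        tauto
    · intro a b hab hne
      simp only [Set.mem_setOf_eq]
      rcases hsub _ hab with h | h | h | h | h
      · have h1 := A.fst_mem_support_of_mem_edges h
        have h2 := A.snd_mem_support_of_mem_edges h
        tauto
      · exact absurd h hne
      · have h1 := B.fst_mem_support_of_mem_edges h
        have h2 := B.snd_mem_support_of_mem_edges h
        have := hAB a; have := hAB b; have := hCB a; have := hCB b
        tauto
      · have h1 := C.fst_mem_support_of_mem_edges h
        have h2 := C.snd_mem_support_of_mem_edges h
        tauto
      · have h1 := D.fst_mem_support_of_mem_edges h
        have h2 := D.snd_mem_support_of_mem_edges h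
        have := hAD a; have := hAD b; have := hCD a; have := hCD b
        tauto
  · have s1 : ∀ w ∈ (A.append C.reverse).bypass.support, w ∈ A.support ∨ w ∈ C.support := by
      intro w hw
      have := Walk.support_bypass_subset_support _ hw
      simpa [Walk.mem_support_append_iff] using this
    have s2 : ∀ w ∈ (B.reverse.append D).bypass.support, w ∈ B.support ∨ w ∈ D.support := by
      intro w hw
      have := Walk.support_bypass_subset_support _ hw
      simpa [Walk.mem_support_append_iff] using this
    refine ⟨(A.append C.reverse).bypass, (B.reverse.append D).bypass, Walk.bypass_isPath _,
      Walk.bypass_isPath _, ?_, ?_, ?_⟩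
    · intro w h1 h2
      have := s1 w h1; have := s2 w h2
      have := hAB w; have := hAD w; have := hCB w; have := hCD w
      tauto
    · intro w h1 h2 h3 h4
      have := s1 w h1
      have := hAB w; have := hAD w; have := hCB w; have := hCD w
      rcases h4 with rfl | rfl | rfl | rfl
      · exact h2 rfl
      · have := B.end_mem_support; tauto
      · exact h3 rfl
      · have := D.end_mem_support; tauto
    · intro w h1 h2 h3 h4
      have := s2 w h1
      have := hAB w; have := hAD w; have := hCB w; have := hCD w
      rcases h4 with rfl | rfl | rfl | rfl
      · have := A.start_mem_support; tauto
      · exact h2 rfl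
      · have := C.start_mem_support; tauto
      · exact h3 rfl

theorem bridge_case (hσ : IsMate G sH MH σ) {p₁ p₂ p₃ p₄ : α}
    (hdist : ([p₁, p₂, p₃, p₄] : List α).Nodup) (P : G.Walk p₁ p₂) (P' : G.Walk p₃ p₄)
    (hP : IsAltPath G sH MH P) (hP' : IsAltPath G sH MH P')
    (A : List α) (x : α) (B C D : List α) (e1 : dl MH P = A ++ x :: B)
    (e2 : dl MH P' = C ++ x :: D)
    (hAD : ∀ a ∈ A, ∀ d ∈ D, s(a, σ a) ≠ s(d, σ d))
    (hCB : ∀ c ∈ C, ∀ b ∈ B, s(c, σ c) ≠ s(b, σ b)) :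
    (∃ (Q₁ : G.Walk p₁ p₄) (Q₂ : G.Walk p₂ p₃),
        IsAltPath G sH MH Q₁ ∧ IsAltPath G sH MH Q₂ ∧
        (Q₁.edges : Multiset (Sym2 α)) + (Q₂.edges : Multiset (Sym2 α)) =
          (P.edges : Multiset (Sym2 α)) + (P'.edges : Multiset (Sym2 α))) ∧
    (¬ ∃ (Q₁ : G.Walk p₁ p₃) (Q₂ : G.Walk p₂ p₄),
        IsAltPath G sH MH Q₁ ∧ IsAltPath G sH MH Q₂ ∧
        (Q₁.edges : Multiset (Sym2 α)) + (Q₂.edges : Multiset (Sym2 α)) =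
          (P.edges : Multiset (Sym2 α)) + (P'.edges : Multiset (Sym2 α))) ∧
    DisjointPaths G {p₁, p₂, p₃, p₄} p₁ p₃ p₂ p₄ := by
  have n1 : (dl MH P).Nodup := (dl_nodup hσ hP.1).of_map _
  have n2 : (dl MH P').Nodup := (dl_nodup hσ hP'.1).of_map _
  obtain ⟨h, A', B', rfl, f1⟩ := dl_split hσ P x (by rw [e1]; simp)
  obtain ⟨h', C', D', rfl, f2⟩ := dl_split hσ P' x (by rw [e2]; simp)
  have u : ∀ (A B A' B' : List α), (A ++ x :: B).Nodup → A ++ x :: B = A' ++ x :: B' →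
      A = A' ∧ B = B' := by
    intro A
    induction A with
    | nil =>
      intro B A' B' hn h
      cases A' with
      | nil => simpa using h
      | cons a A' => simp at h hn; obtain ⟨rfl, h⟩ := h; rw [h] at hn; simp at hn
    | cons a A ih =>
      intro B A' B' hn h
      cases A' with
      | nil => simp at h hn; obtain ⟨rfl, h⟩ := h; simp at hn
      | cons a' A' =>
        simp only [List.cons_append, List.cons.injEq, List.nodup_cons] at h hn
        obtain ⟨rfl, h⟩ := h
        obtain ⟨rfl, rfl⟩ := ih B A' B' hn.2 h
        simp
  obtain ⟨rfl, rfl⟩ := u _ _ _ _ (e1 ▸ n1) (e1.symm.trans f1)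
  obtain ⟨rfl, rfl⟩ := u _ _ _ _ (e2 ▸ n2) (e2.symm.trans f2)
  have hdist' : ([p₃, p₄, p₁, p₂] : List α).Nodup :=
    (List.perm_append_comm (l₁ := [p₁, p₂]) (l₂ := [p₃, p₄])).nodup_iff.1 hdist
  exact case_lemma hP hP' (supp_dis hσ hdist hP hP' hAD) (supp_dis hσ hdist' hP' hP hCB)

theorem main [Fintype α] (hMH : IsPMOn G sH MH) (huniq : ∀ m, IsPMOn G sH m → m = MH)
    (p₁ p₂ p₃ p₄ : α) (hdist : ([p₁, p₂, p₃, p₄] : List α).Nodup)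
    (P : G.Walk p₁ p₂) (P' : G.Walk p₃ p₄)
    (hP : IsAltPath G sH MH P) (hP' : IsAltPath G sH MH P')
    (hshare : ∃ w, w ∈ P.support ∧ w ∈ P'.support) :
    (Xor'
      (∃ (Q₁ : G.Walk p₁ p₃) (Q₂ : G.Walk p₂ p₄),
        IsAltPath G sH MH Q₁ ∧ IsAltPath G sH MH Q₂ ∧
        (Q₁.edges : Multiset (Sym2 α)) + (Q₂.edges : Multiset (Sym2 α)) =
          (P.edges : Multiset (Sym2 α)) + (P'.edges : Multiset (Sym2 α)))
      (∃ (Q₁ : G.Walk p₁ p₄) (Q₂ : G.Walk p₂ p₃),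
        IsAltPath G sH MH Q₁ ∧ IsAltPath G sH MH Q₂ ∧
        (Q₁.edges : Multiset (Sym2 α)) + (Q₂.edges : Multiset (Sym2 α)) =
          (P.edges : Multiset (Sym2 α)) + (P'.edges : Multiset (Sym2 α)))) ∧
    (¬ DisjointPaths G {p₁, p₂, p₃, p₄} p₁ p₃ p₂ p₄ →
      ∃ (Q₁ : G.Walk p₁ p₃) (Q₂ : G.Walk p₂ p₄),
        IsAltPath G sH MH Q₁ ∧ IsAltPath G sH MH Q₂ ∧
        (Q₁.edges : Multiset (Sym2 α)) + (Q₂.edges : Multiset (Sym2 α)) =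
          (P.edges : Multiset (Sym2 α)) + (P'.edges : Multiset (Sym2 α))) := by
  obtain ⟨σ, hσ⟩ := exists_mate G sH MH hMH
  have hg : Good σ (fun x => s(x, σ x)) (dl MH P) (dl MH P') := by
    refine key σ (fun x => s(x, σ x)) hσ.inv ?_ ?_ (RR G sH σ) ?_ ?_ _ (dl MH P) (dl MH P') le_rfl
      (dl_chain hσ P hP.2.2.1).1 (dl_chain hσ P' hP'.2.2.1).1 (dl_nodup hσ hP.1)
      (dl_nodup hσ hP'.1) ?_
    · intro x; simp only [hσ.inv]; exact Sym2.eq_swap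
    · intro x y hxy
      rcases Sym2.eq_iff.1 hxy with h | h
      · exact Or.inl h.1
      · exact Or.inr h.1
    · rintro x y ⟨h1, h2, h3⟩
      refine ⟨hσ.map y h2, hσ.map x h1, ?_⟩
      rw [hσ.inv]; exact h3.symm
    · intro x l y h1 h2
      exact no_cyc hσ huniq x l y h1 h2
    · obtain ⟨w, h1, h2⟩ := hshare
      obtain ⟨a1, a2, a3⟩ := shared hσ hdist hP hP' w h1 h2
      obtain ⟨a, ha, ha'⟩ := mem_dl_of_edge hσ P w a1 a2
      obtain ⟨b, hb, hb'⟩ := mem_dl_of_edge hσ P' w a1 a3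
      exact ⟨a, ha, b, hb, ha'.trans hb'.symm⟩
  obtain ⟨q', hq, A, x, B, C, D, e1, e2, h1, h2⟩ := hg
  rcases hq with rfl | rfl
  · obtain ⟨c1, c2, c3⟩ := bridge_case hσ hdist P P' hP hP' A x B C D e1 e2 h1 h2
    exact ⟨Or.inr ⟨c1, c2⟩, fun h => absurd c3 h⟩
  · have hdist' : ([p₁, p₂, p₄, p₃] : List α).Nodup := by
      have : List.Perm [p₁, p₂, p₄, p₃] [p₁, p₂, p₃, p₄] :=
        ((List.Perm.swap p₃ p₄ []).cons p₂).cons p₁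
      exact this.nodup_iff.2 hdist
    obtain ⟨c1, c2, -⟩ := bridge_case hσ hdist' P P'.reverse hP (alt_reverse hP') A x B C D e1
      ((dl_reverse hσ P').trans e2) h1 h2
    simp only [Walk.edges_reverse, Multiset.coe_reverse] at c1 c2
    exact ⟨Or.inl ⟨c1, c2⟩, fun _ => c1⟩

end
end APR

/-- (Proposition 3.4.) The multiset union `Q` of the edges of two
intersecting `MH`-alternating paths, from `p₁` to `p₂` and from `p₃` to `p₄`, can be
re-partitioned into two `MH`-alternating paths joining `p₁,p₃` and `p₂,p₄`, or into two
joining `p₁,p₄` and `p₂,p₃`, but not both; and if there are no two vertex-disjoint paths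
joining `p₁` to `p₃` and `p₂` to `p₄` with internal vertices avoiding `{p₁,p₂,p₃,p₄}`,
then the first alternative holds. -/
theorem alt_path_repartition {α : Type*} [Fintype α] [DecidableEq α]
    (G : SimpleGraph α) (sH : Finset α) (MH : Finset (Sym2 α))
    (hMH : IsPMOn G sH MH) (huniq : ∀ m, IsPMOn G sH m → m = MH)
    (p₁ p₂ p₃ p₄ : α) (hdist : ([p₁, p₂, p₃, p₄] : List α).Nodup)
    (P : G.Walk p₁ p₂) (P' : G.Walk p₃ p₄)
    (hP : IsAltPath G sH MH P) (hP' : IsAltPath G sH MH P')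
    (hshare : ∃ w, w ∈ P.support ∧ w ∈ P'.support) :
    (Xor'
      (∃ (Q₁ : G.Walk p₁ p₃) (Q₂ : G.Walk p₂ p₄),
        IsAltPath G sH MH Q₁ ∧ IsAltPath G sH MH Q₂ ∧
        (Q₁.edges : Multiset (Sym2 α)) + (Q₂.edges : Multiset (Sym2 α)) =
          (P.edges : Multiset (Sym2 α)) + (P'.edges : Multiset (Sym2 α)))
      (∃ (Q₁ : G.Walk p₁ p₄) (Q₂ : G.Walk p₂ p₃),
        IsAltPath G sH MH Q₁ ∧ IsAltPath G sH MH Q₂ ∧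
        (Q₁.edges : Multiset (Sym2 α)) + (Q₂.edges : Multiset (Sym2 α)) =
          (P.edges : Multiset (Sym2 α)) + (P'.edges : Multiset (Sym2 α)))) ∧
    (¬ DisjointPaths G {p₁, p₂, p₃, p₄} p₁ p₃ p₂ p₄ →
      ∃ (Q₁ : G.Walk p₁ p₃) (Q₂ : G.Walk p₂ p₄),
        IsAltPath G sH MH Q₁ ∧ IsAltPath G sH MH Q₂ ∧
        (Q₁.edges : Multiset (Sym2 α)) + (Q₂.edges : Multiset (Sym2 α)) =
          (P.edges : Multiset (Sym2 α)) + (P'.edges : Multiset (Sym2 α))) := by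
  exact APR.main hMH huniq p₁ p₂ p₃ p₄ hdist P P' hP hP' hshare
end

section
/- Let n be even and let F be a partition of {1,…,n} into pairs that contains two pairs {i,j} and {k,ℓ} with i < j < k < ℓ. Let F' be the partition obtained from F by replacing {i,j} and {k,ℓ} with {i,k} and {j,ℓ}. Then (−1)^{χ(F)} = −(−1)^{χ(F')}, i.e., the crossing numbers χ(F) and χ(F') have opposite parity. -/
/-- Crossing indicator. -/
def crInd {n : ℕ} (p q : Fin n × Fin n) : ℕ :=
  if p.1 < q.1 ∧ q.1 < p.2 ∧ p.2 < q.2 then 1 else 0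

lemma crossingNumber_eq_sum (n : ℕ) (F : Finset (Fin n × Fin n)) :
    crossingNumber n F = ∑ p ∈ F, ∑ q ∈ F, crInd p q := by
  unfold crossingNumber crInd
  rw [Finset.card_filter, Finset.sum_product]

lemma crInd_self {n : ℕ} (p : Fin n × Fin n) : crInd p p = 0 := by
  simp [crInd]

lemma crossingNumber_insert (n : ℕ) (F : Finset (Fin n × Fin n)) (a : Fin n × Fin n)
    (ha : a ∉ F) : crossingNumber n (insert a F) =
      crossingNumber n F + ∑ q ∈ F, (crInd a q + crInd q a) := by
  rw [crossingNumber_eq_sum, crossingNumber_eq_sum, Finset.sum_insert ha,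
    Finset.sum_insert ha, crInd_self]
  simp only [Finset.sum_insert ha, Finset.sum_add_distrib]
  ring

lemma crInd_even {n : ℕ} (i j k l : Fin n) (hij : i < j) (hjk : j < k) (hkl : k < l)
    (q : Fin n × Fin n) (hq : q.1 < q.2)
    (hi : i ≠ q.1 ∧ i ≠ q.2) (hj : j ≠ q.1 ∧ j ≠ q.2)
    (hk : k ≠ q.1 ∧ k ≠ q.2) (hl : l ≠ q.1 ∧ l ≠ q.2) :
    (crInd (i, j) q + crInd q (i, j) + (crInd (k, l) q + crInd q (k, l))
      + (crInd (i, k) q + crInd q (i, k)) + (crInd (j, l) q + crInd q (j, l))) % 2 = 0 := by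
  obtain ⟨u, v⟩ := q
  simp only [crInd] at *
  simp only [Fin.lt_def, ne_eq, Fin.ext_iff] at *
  generalize (i : ℕ) = i at *
  generalize (j : ℕ) = j at *
  generalize (k : ℕ) = k at *
  generalize (l : ℕ) = l at *
  generalize (u : ℕ) = u at *
  generalize (v : ℕ) = v at *
  split_ifs <;> omega

/-- Replacing pairs `{i,j}, {k,l}` (with `i<j<k<l`) of a 1-factor by
`{i,k}, {j,l}` changes the parity of the crossing number. -/
theorem crossingNumber_parity_swap (n : ℕ) (hn : Even n)
    (F : Finset (Fin n × Fin n)) (hF : IsOneFactor n F)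
    (i j k l : Fin n) (hij : i < j) (hjk : j < k) (hkl : k < l)
    (hmem₁ : (i, j) ∈ F) (hmem₂ : (k, l) ∈ F) :
    (-1 : ℤ) ^ crossingNumber n F =
      -(-1 : ℤ) ^ crossingNumber n ((F \ {(i, j), (k, l)}) ∪ {(i, k), (j, l)}) := by
  have huniq : ∀ v : Fin n, ∀ p ∈ F, ∀ q ∈ F, (v = p.1 ∨ v = p.2) →
      (v = q.1 ∨ v = q.2) → p = q := fun v p hp q hq h1 h2 =>
    (hF.2 v).unique ⟨hp, h1⟩ ⟨hq, h2⟩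
  set R := F \ {(i, j), (k, l)} with hR
  have hRmem : ∀ q ∈ R, q ∈ F ∧ q ≠ (i, j) ∧ q ≠ (k, l) := by
    intro q hq
    simpa [hR] using hq
  have hi : ∀ q ∈ R, i ≠ q.1 ∧ i ≠ q.2 := fun q hq => by
    obtain ⟨h1, h2, h3⟩ := hRmem q hq
    have := huniq i q h1 _ hmem₁
    simp only [true_or] at this
    tauto
  have hj : ∀ q ∈ R, j ≠ q.1 ∧ j ≠ q.2 := fun q hq => by
    obtain ⟨h1, h2, h3⟩ := hRmem q hq
    have := huniq j q h1 _ hmem₁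
    simp only [or_true] at this
    tauto
  have hk : ∀ q ∈ R, k ≠ q.1 ∧ k ≠ q.2 := fun q hq => by
    obtain ⟨h1, h2, h3⟩ := hRmem q hq
    have := huniq k q h1 _ hmem₂
    simp only [true_or] at this
    tauto
  have hl : ∀ q ∈ R, l ≠ q.1 ∧ l ≠ q.2 := fun q hq => by
    obtain ⟨h1, h2, h3⟩ := hRmem q hq
    have := huniq l q h1 _ hmem₂
    simp only [or_true] at this
    tauto
  have hFe : F = insert (i, j) (insert (k, l) R) := by
    ext q
    simp only [hR, Finset.mem_insert, Finset.mem_sdiff, Finset.mem_singleton]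
    by_cases h1 : q = (i, j)
    · simp [h1, hmem₁]
    · by_cases h2 : q = (k, l)
      · simp [h2, hmem₂]
      · simp [h1, h2]
  have hGe : R ∪ {(i, k), (j, l)} = insert (i, k) (insert (j, l) R) := by
    ext q
    simp only [Finset.mem_insert, Finset.mem_union, Finset.mem_singleton]
    tauto
  have nb : (k, l) ∉ R := fun h => (hk _ h).1 rfl
  have na : (i, j) ∉ insert (k, l) R := by
    rw [Finset.mem_insert, not_or]
    exact ⟨fun h => (hij.trans hjk).ne (Prod.ext_iff.1 h).1, fun h => (hi _ h).1 rfl⟩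
  have nb' : (j, l) ∉ R := fun h => (hj _ h).1 rfl
  have na' : (i, k) ∉ insert (j, l) R := by
    rw [Finset.mem_insert, not_or]
    exact ⟨fun h => hij.ne (Prod.ext_iff.1 h).1, fun h => (hi _ h).1 rfl⟩
  have e1 := crossingNumber_insert n _ _ na
  rw [crossingNumber_insert n _ _ nb, Finset.sum_insert nb, ← hFe] at e1
  have e2 := crossingNumber_insert n _ _ na'
  rw [crossingNumber_insert n _ _ nb', Finset.sum_insert nb', ← hGe] at e2
  have c1 : crInd (i, j) (k, l) + crInd (k, l) (i, j) = 0 := by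
    simp only [crInd]
    split_ifs <;> omega
  have c2 : crInd (i, k) (j, l) + crInd (j, l) (i, k) = 1 := by
    simp only [crInd]
    split_ifs <;> omega
  have hev : (∑ q ∈ R, (crInd (i, j) q + crInd q (i, j) + (crInd (k, l) q + crInd q (k, l))
      + (crInd (i, k) q + crInd q (i, k)) + (crInd (j, l) q + crInd q (j, l)))) % 2 = 0 := by
    apply Nat.mod_eq_zero_of_dvd
    apply Finset.dvd_sum
    intro q hq
    exact Nat.dvd_of_mod_eq_zero (crInd_even i j k l hij hjk hkl q (hF.1 q (hRmem q hq).1)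
      (hi q hq) (hj q hq) (hk q hq) (hl q hq))
  rw [Finset.sum_add_distrib, Finset.sum_add_distrib, Finset.sum_add_distrib] at hev
  generalize crossingNumber n F = x at *
  generalize crossingNumber n (R ∪ {(i, k), (j, l)}) = y at *
  rcases Nat.even_or_odd x with hx | hx
  · have hy : Odd y := by
      rw [Nat.odd_iff]; rw [Nat.even_iff] at hx; omega
    simp [hx.neg_one_pow, hy.neg_one_pow]
  · have hy : Even y := by
      rw [Nat.even_iff]; rw [Nat.odd_iff] at hx; omega
    simp [hx.neg_one_pow, hy.neg_one_pow]
end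

section
/- Let G be a finite simple graph, let n be even, and let A = {a_1,…,a_n} be distinct vertices such that G is noncrossing with respect to the cyclic sequence (a_1,…,a_n). Partition A into disjoint subsets A_K and A_H, let H = G−A_K, and for 1 ≤ i < j ≤ n let H_{ij} be the induced subgraph of G on the symmetric difference of V(H) and {a_i,a_j}. If H has exactly one perfect matching, then M(G−A_H) = Σ_F (−1)^{χ(F)} Π_{{i,j}∈F, i<j} M(H_{ij}), the sum over all partitions F of {1,…,n} into pairs (i.e., M(G−A_H) equals the Pfaffian Pf(M(H_{ij}))_{1≤i<j≤n}). -/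
/-- matchings as involutions -/
def IsInv {α : Type*} (G : SimpleGraph α) (s : Finset α) (σ : α → α) : Prop :=
  (∀ v, σ (σ v) = v) ∧ (∀ v ∈ s, G.Adj v (σ v)) ∧ ∀ v, v ∉ s → σ v = v

lemma IsInv.mem {α : Type*} {G : SimpleGraph α} {s : Finset α} {σ : α → α}
    (h : IsInv G s σ) {v : α} (hv : v ∈ s) : σ v ∈ s := by
  by_contra hc
  have h1 := h.2.2 _ hc
  rw [h.1] at h1
  have h2 := h.2.1 v hv
  rw [← h1] at h2
  exact G.loopless.irrefl _ h2

lemma pm_of_inv {α : Type*} [DecidableEq α] {G : SimpleGraph α} {s : Finset α} {σ : α → α}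
    (h : IsInv G s σ) : IsPMOn G s (s.image (fun v => s(v, σ v))) := by
  refine ⟨?_, ?_⟩
  · intro e he
    simp only [Finset.mem_image] at he
    obtain ⟨v, hv, rfl⟩ := he
    refine ⟨h.2.1 v hv, ?_⟩
    intro u hu
    simp only [Sym2.mem_iff] at hu
    rcases hu with rfl | rfl
    · exact hv
    · exact h.mem hv
  · intro v hv
    refine ⟨s(v, σ v), ⟨Finset.mem_image.2 ⟨v, hv, rfl⟩, by simp⟩, ?_⟩
    rintro e ⟨he, hve⟩
    simp only [Finset.mem_image] at he
    obtain ⟨u, hu, rfl⟩ := he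
    simp only [Sym2.mem_iff] at hve
    rcases hve with rfl | rfl
    · rfl
    · rw [h.1, Sym2.eq_swap]

lemma pmCount_eq {α : Type*} [DecidableEq α] (G : SimpleGraph α) (s : Finset α) :
    pmCount G s = Nat.card {σ : α → α // IsInv G s σ} := by
  classical
  unfold pmCount
  symm
  refine Nat.card_eq_of_bijective
    (fun σ : {σ : α → α // IsInv G s σ} => (⟨_, pm_of_inv σ.2⟩ : {m // IsPMOn G s m})) ⟨?_, ?_⟩
  · rintro ⟨σ, hσ⟩ ⟨τ, hτ⟩ hst
    simp only [Subtype.mk.injEq] at hst ⊢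
    funext v
    by_cases hv : v ∈ s
    · have h1 : s(v, σ v) ∈ s.image (fun v => s(v, τ v)) := by
        rw [← hst]; exact Finset.mem_image.2 ⟨v, hv, rfl⟩
      have h2 : s(v, τ v) ∈ s.image (fun v => s(v, τ v)) := Finset.mem_image.2 ⟨v, hv, rfl⟩
      have := ((pm_of_inv hτ).2 v hv).unique ⟨h1, by simp⟩ ⟨h2, by simp⟩
      exact Sym2.congr_right.1 this
    · rw [hσ.2.2 v hv, hτ.2.2 v hv]
  · rintro ⟨m, hm⟩
    have hex : ∀ v, ∃ u, (v ∈ s → s(v, u) ∈ m) ∧ (v ∉ s → u = v) := by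
      intro v
      by_cases hv : v ∈ s
      · obtain ⟨e, ⟨he, hve⟩, -⟩ := hm.2 v hv
        obtain ⟨u, rfl⟩ := hve
        exact ⟨u, fun _ => he, fun h => absurd hv h⟩
      · exact ⟨v, fun h => absurd h hv, fun _ => rfl⟩
    choose σ hσ1 hσ2 using hex
    have hin : IsInv G s σ := by
      refine ⟨?_, ?_, hσ2⟩
      · intro v
        by_cases hv : v ∈ s
        · have h1 := hσ1 v hv
          have hv' : σ v ∈ s := (hm.1 _ h1).2 _ (by simp)
          have h2 := hσ1 _ hv'
          have := (hm.2 _ hv').unique ⟨h1, by simp⟩ ⟨h2, by simp⟩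
          rw [Sym2.eq_swap] at this
          exact (Sym2.congr_right.1 this).symm
        · rw [hσ2 v hv, hσ2 v hv]
      · intro v hv
        exact (hm.1 _ (hσ1 v hv)).1
    refine ⟨⟨σ, hin⟩, ?_⟩
    simp only [Subtype.mk.injEq]
    ext e
    simp only [Finset.mem_image]
    constructor
    · rintro ⟨v, hv, rfl⟩
      exact hσ1 v hv
    · intro he
      induction e with
      | _ x y =>
        have hx : x ∈ s := (hm.1 _ he).2 _ (by simp)
        exact ⟨x, hx, (hm.2 x hx).unique ⟨hσ1 x hx, by simp⟩ ⟨he, by simp⟩⟩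

/-- superposition graph -/
def supG {α : Type*} (p : (α → α) × (α → α)) : SimpleGraph α :=
  SimpleGraph.fromRel (fun u v => p.1 u = v ∨ p.2 u = v)

lemma supG_swap {α : Type*} (σ τ : α → α) : supG (σ, τ) = supG (τ, σ) := by
  ext u v
  simp only [supG, SimpleGraph.fromRel_adj]
  tauto

lemma supG_le {α : Type*} {G : SimpleGraph α} {s t : Finset α} {σ τ : α → α}
    (hσ : IsInv G s σ) (hτ : IsInv G t τ) : supG (σ, τ) ≤ G := by
  have key : ∀ (s : Finset α) (σ : α → α), IsInv G s σ → ∀ u v, u ≠ v → σ u = v → G.Adj u v := by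
    intro s σ hσ u v huv h
    by_cases hu : u ∈ s
    · rw [← h]; exact hσ.2.1 u hu
    · exact absurd ((hσ.2.2 u hu).symm.trans h) huv
  intro u v h
  simp only [supG, SimpleGraph.fromRel_adj] at h
  obtain ⟨hne, (h | h) | (h | h)⟩ := h
  · exact key _ _ hσ _ _ hne h
  · exact key _ _ hτ _ _ hne h
  · exact (key _ _ hσ _ _ hne.symm h).symm
  · exact (key _ _ hτ _ _ hne.symm h).symm

lemma supG_reach1 {α : Type*} (σ τ : α → α) (v : α) : (supG (σ, τ)).Reachable v (σ v) := by
  by_cases h : v = σ v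
  · rw [← h]
  · exact SimpleGraph.Adj.reachable (by simp [supG, h])

lemma supG_reach2 {α : Type*} (σ τ : α → α) (v : α) : (supG (σ, τ)).Reachable v (τ v) := by
  rw [supG_swap]; exact supG_reach1 _ _ _

/-- invariance of closed sets along the superposition graph -/
lemma supG_closed {α : Type*} {σ τ : α → α} (hσ : ∀ v, σ (σ v) = v) (hτ : ∀ v, τ (τ v) = v)
    (P : α → Prop) (h1 : ∀ v, P v → P (σ v)) (h2 : ∀ v, P v → P (τ v)) {u v : α}
    (h : (supG (σ, τ)).Reachable u v) (hu : P u) : P v := by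
  obtain ⟨w⟩ := h
  induction w with
  | nil => exact hu
  | cons hadj _ ih =>
    apply ih
    simp only [supG, SimpleGraph.fromRel_adj] at hadj
    obtain ⟨hne, (h | h) | (h | h)⟩ := hadj
    · rw [← h]; exact h1 _ hu
    · rw [← h]; exact h2 _ hu
    · have := h1 _ hu
      rw [← h, hσ] at this
      exact this
    · have := h2 _ hu
      rw [← h, hτ] at this
      exact this

lemma partner_aux {α : Type*} [Finite α] {σ τ : α → α} (hσ : ∀ v, σ (σ v) = v)
    (hτ : ∀ v, τ (τ v) = v) {a : α} (ha : τ a = a) (ha' : σ a ≠ a) :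
    ∃ b, b ≠ a ∧ (supG (σ, τ)).Reachable a b ∧ (σ b = b ∨ τ b = b) ∧
      ∀ v, (supG (σ, τ)).Reachable a v → (σ v = v ∨ τ v = v) → v = a ∨ v = b := by
  set f : α → α := fun v => τ (σ v) with hf
  have hfi : Function.Injective f := by
    intro x y hxy
    have := congrArg τ hxy
    simp only [hf, hτ] at this
    have := congrArg σ this
    simpa only [hσ] using this
  set m := Function.minimalPeriod f a with hm
  have hm0 : 0 < m := by
    rw [hm, Function.minimalPeriod_pos_iff_mem_periodicPts]
    exact hfi.mem_periodicPts a
  have hfm : f^[m] a = a := Function.iterate_minimalPeriod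
  have hconj : ∀ k, ∀ v, f^[k] (τ (f^[k] v)) = τ v := by
    intro k
    induction k with
    | zero => intro v; rfl
    | succ k ih =>
      intro v
      rw [Function.iterate_succ_apply, Function.iterate_succ_apply']
      have : f (τ (f (f^[k] v))) = τ (f^[k] v) := by simp only [hf, hτ, hσ]
      rw [this, ih]
  have hτk : ∀ k, k ≤ m → τ (f^[k] a) = f^[m - k] a := by
    intro k hk
    apply hfi.iterate k
    rw [hconj, ← Function.iterate_add_apply, ha, Nat.add_sub_cancel' hk, hfm]
  have hσk : ∀ k, k < m → σ (f^[k] a) = f^[m - (k + 1)] a := by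
    intro k hk
    rw [← hτk (k + 1) hk, Function.iterate_succ_apply']
    simp only [hf, hτ]
  have hinj : ∀ k l, k < m → l < m → f^[k] a = f^[l] a → k = l := by
    intro k l hk hl h
    exact (Function.iterate_eq_iterate_iff_of_lt_minimalPeriod hk hl).1 h
  have horb : ∀ v, (supG (σ, τ)).Reachable a v → ∃ k < m, v = f^[k] a := by
    intro v hv
    refine supG_closed hσ hτ (fun v => ∃ k < m, v = f^[k] a) ?_ ?_ hv ⟨0, hm0, rfl⟩
    · rintro v ⟨k, hk, rfl⟩
      exact ⟨m - (k + 1), by omega, hσk k hk⟩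
    · rintro v ⟨k, hk, rfl⟩
      rcases Nat.eq_zero_or_pos k with rfl | h0
      · exact ⟨0, hm0, ha⟩
      · exact ⟨m - k, by omega, hτk k hk.le⟩
  have hreach : ∀ k, (supG (σ, τ)).Reachable a (f^[k] a) := by
    intro k
    induction k with
    | zero => exact SimpleGraph.Reachable.refl _
    | succ k ih =>
      rw [Function.iterate_succ_apply']
      exact ih.trans ((supG_reach1 σ τ _).trans (supG_reach2 σ τ _))
  have hm1 : m ≠ 1 := by
    intro h1
    rw [h1] at hfm
    have h2 : τ (σ a) = a := hfm
    have h3 := congrArg τ h2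
    rw [hτ, ha] at h3
    exact ha' h3
  refine ⟨f^[m / 2] a, ?_, hreach _, ?_, ?_⟩
  · intro h
    have := hinj (m / 2) 0 (by omega) hm0 h
    omega
  · rcases Nat.even_or_odd' m with ⟨c, hc | hc⟩
    · right
      rw [hτk _ (by omega)]
      congr 2; omega
    · left
      rw [hσk _ (by omega)]
      congr 2; omega
  · intro v hv hfix
    obtain ⟨k, hk, rfl⟩ := horb v hv
    rcases Nat.eq_zero_or_pos k with rfl | h0
    · left; rfl
    · right
      have : k = m / 2 := by
        rcases hfix with h | h
        · rw [hσk k hk] at h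
          have := hinj _ _ (by omega) hk h
          omega
        · rw [hτk k hk.le] at h
          have := hinj _ _ (by omega) hk h
          omega
      rw [this]

lemma IsInv.fix_iff {α : Type*} {G : SimpleGraph α} {s : Finset α} {σ : α → α}
    (h : IsInv G s σ) {v : α} : σ v = v ↔ v ∉ s := by
  constructor
  · intro hv hs
    have := h.2.1 v hs
    rw [hv] at this
    exact G.loopless.irrefl _ this
  · exact h.2.2 v

lemma partner {α : Type*} [Finite α] [DecidableEq α] {G : SimpleGraph α} {s B : Finset α}
    {σ τ : α → α} (hσ : IsInv G s σ) (hτ : IsInv G (symmDiff s B) τ) {a : α} (ha : a ∈ B) :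
    ∃ b ∈ B, b ≠ a ∧ (supG (σ, τ)).Reachable a b ∧
      ∀ v ∈ B, (supG (σ, τ)).Reachable a v → v = a ∨ v = b := by
  have key : ∃ b, b ≠ a ∧ (supG (σ, τ)).Reachable a b ∧ (σ b = b ∨ τ b = b) ∧
      ∀ v, (supG (σ, τ)).Reachable a v → (σ v = v ∨ τ v = v) → v = a ∨ v = b := by
    by_cases has : a ∈ s
    · apply partner_aux hσ.1 hτ.1
      · rw [hτ.fix_iff, Finset.mem_symmDiff]; tauto
      · rw [Ne, hσ.fix_iff]; tauto
    · obtain ⟨b, h1, h2, h3, h4⟩ := partner_aux hτ.1 hσ.1 (a := a)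
        (by rw [hσ.fix_iff]; exact has) (by rw [Ne, hτ.fix_iff, Finset.mem_symmDiff]; tauto)
      rw [supG_swap] at h2 h4
      exact ⟨b, h1, h2, h3.symm, fun v hv hv' => h4 v hv hv'.symm⟩
  obtain ⟨b, h1, h2, h3, h4⟩ := key
  refine ⟨b, ?_, h1, h2, ?_⟩
  · by_contra hb
    have hboth : σ b = b ∧ τ b = b := by
      rw [hσ.fix_iff, hτ.fix_iff, Finset.mem_symmDiff] at *
      tauto
    have := supG_closed hσ.1 hτ.1 (fun v => v = b) (by rintro v rfl; exact hboth.1)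
      (by rintro v rfl; exact hboth.2) h2.symm rfl
    exact h1 this.symm
  · intro v hvB hv
    apply h4 v hv
    rw [hσ.fix_iff, hτ.fix_iff, Finset.mem_symmDiff]
    tauto

open Classical in
/-- exchange the two involutions on the component of `b` -/
noncomputable def swapP {α : Type*} (p : (α → α) × (α → α)) (b : α) : (α → α) × (α → α) :=
  (fun v => if (supG p).Reachable b v then p.2 v else p.1 v,
   fun v => if (supG p).Reachable b v then p.1 v else p.2 v)

lemma supG_swapP {α : Type*} (p : (α → α) × (α → α)) (b : α) : supG (swapP p b) = supG p := by
  ext u v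
  by_cases h1 : (supG p).Reachable b u <;> by_cases h2 : (supG p).Reachable b v <;>
  · simp only [supG, SimpleGraph.fromRel_adj]
    simp only [swapP, h1, h2, if_true, if_false]
    try tauto

lemma swapP_swapP {α : Type*} (p : (α → α) × (α → α)) (b c : α) (h : (supG p).Reachable b c) :
    swapP (swapP p b) c = p := by
  have hbc : ∀ v, (supG p).Reachable c v ↔ (supG p).Reachable b v :=
    fun v => ⟨fun h' => h.trans h', fun h' => h.symm.trans h'⟩
  classical
  apply Prod.ext
  · funext v
    change (if (supG (swapP p b)).Reachable c v then _ else _) = _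
    rw [supG_swapP]
    by_cases h1 : (supG p).Reachable b v <;> simp [swapP, hbc, h1]
  · funext v
    change (if (supG (swapP p b)).Reachable c v then _ else _) = _
    rw [supG_swapP]
    by_cases h1 : (supG p).Reachable b v <;> simp [swapP, hbc, h1]

lemma swap_inv_aux {α : Type*} [DecidableEq α] {G : SimpleGraph α} {s B : Finset α}
    {σ τ : α → α} (hσ : IsInv G s σ) (hτ : IsInv G (symmDiff s B) τ) {b c : α} (hb : b ∈ B)
    (hc : c ∈ B) (hbc : (supG (σ, τ)).Reachable b c)
    (hu : ∀ v ∈ B, (supG (σ, τ)).Reachable b v → v = b ∨ v = c) :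
    IsInv G (symmDiff s {b, c}) (swapP (σ, τ) b).1 := by
  classical
  have hcl1 : ∀ v, (supG (σ, τ)).Reachable b (σ v) ↔ (supG (σ, τ)).Reachable b v := by
    intro v
    exact ⟨fun h => h.trans (supG_reach1 σ τ v).symm, fun h => h.trans (supG_reach1 σ τ v)⟩
  have hcl2 : ∀ v, (supG (σ, τ)).Reachable b (τ v) ↔ (supG (σ, τ)).Reachable b v := by
    intro v
    exact ⟨fun h => h.trans (supG_reach2 σ τ v).symm, fun h => h.trans (supG_reach2 σ τ v)⟩
  have hmem : ∀ v, v ∈ symmDiff s {b, c} ↔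
      (if (supG (σ, τ)).Reachable b v then v ∈ symmDiff s B else v ∈ s) := by
    intro v
    by_cases h : (supG (σ, τ)).Reachable b v
    · have : v ∈ B ↔ v ∈ ({b, c} : Finset α) := by
        simp only [Finset.mem_insert, Finset.mem_singleton]
        constructor
        · intro hv; exact hu v hv h
        · rintro (rfl | rfl) <;> assumption
      simp [h, Finset.mem_symmDiff, this]
    · have : v ∉ ({b, c} : Finset α) := by
        simp only [Finset.mem_insert, Finset.mem_singleton]
        rintro (rfl | rfl)
        · exact h (SimpleGraph.Reachable.refl _)
        · exact h hbc
      simp only [h, Finset.mem_symmDiff, this, if_false]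
      tauto
  refine ⟨?_, ?_, ?_⟩
  · intro v
    by_cases h : (supG (σ, τ)).Reachable b v
    · simp [swapP, h, hcl2, hτ.1]
    · simp [swapP, h, hcl1, hσ.1]
  · intro v hv
    rw [hmem] at hv
    by_cases h : (supG (σ, τ)).Reachable b v
    · simp only [h, if_true] at hv
      simpa [swapP, h] using hτ.2.1 v hv
    · simp only [h, if_false] at hv
      simpa [swapP, h] using hσ.2.1 v hv
  · intro v hv
    rw [hmem] at hv
    by_cases h : (supG (σ, τ)).Reachable b v
    · simp only [h, if_true] at hv
      simpa [swapP, h] using hτ.2.2 v hv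
    · simp only [h, if_false] at hv
      simpa [swapP, h] using hσ.2.2 v hv

lemma swap_inv {α : Type*} [DecidableEq α] {G : SimpleGraph α} {s B : Finset α}
    {p : (α → α) × (α → α)} (hσ : IsInv G s p.1) (hτ : IsInv G (symmDiff s B) p.2)
    {b c : α} (hb : b ∈ B)
    (hc : c ∈ B) (hbc : (supG p).Reachable b c)
    (hu : ∀ v ∈ B, (supG p).Reachable b v → v = b ∨ v = c) :
    IsInv G (symmDiff s {b, c}) (swapP p b).1 ∧
    IsInv G (symmDiff (symmDiff s {b, c}) B) (swapP p b).2 := by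
  obtain ⟨σ, τ⟩ := p
  refine ⟨swap_inv_aux hσ hτ hb hc hbc hu, ?_⟩
  have h := swap_inv_aux (B := B) hτ (by rwa [symmDiff_symmDiff_cancel_right]) hb hc
    (by rwa [supG_swap]) (by rwa [supG_swap])
  rw [symmDiff_right_comm]
  convert h using 1
  simp only [swapP]
  rw [supG_swap]

lemma seg_aux {α : Type*} {G : SimpleGraph α} (S : Set α) (D : α → Prop) :
    ∀ N, ∀ u v, ∀ p : G.Walk u v, p.length ≤ N → u ∈ S → v ∈ S → D u → ¬ D v →
      ∃ u' v', ∃ p' : G.Walk u' v', p'.IsPath ∧ u' ∈ S ∧ v' ∈ S ∧ D u' ∧ ¬ D v' ∧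
        (∀ w ∈ p'.support, w ∈ p.support) ∧
        ∀ w ∈ p'.support, w ≠ u' → w ≠ v' → w ∉ S := by
  classical
  intro N
  induction N with
  | zero =>
    intro u v p hp hu hv hDu hDv
    have := SimpleGraph.Walk.eq_of_length_eq_zero (Nat.le_zero.1 hp)
    exact absurd (this ▸ hDu) hDv
  | succ N ih =>
    intro u v p hp hu hv hDu hDv
    by_cases hw : ∃ w ∈ p.support, w ≠ u ∧ w ≠ v ∧ w ∈ S
    · obtain ⟨w, hwp, hwu, hwv, hwS⟩ := hw
      have hlen : (p.takeUntil w hwp).length + (p.dropUntil w hwp).length = p.length := by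
        rw [← SimpleGraph.Walk.length_append, SimpleGraph.Walk.take_spec]
      have h1 : (p.takeUntil w hwp).length ≠ 0 := by
        intro h; exact hwu (SimpleGraph.Walk.eq_of_length_eq_zero h).symm
      have h2 : (p.dropUntil w hwp).length ≠ 0 := by
        intro h; exact hwv (SimpleGraph.Walk.eq_of_length_eq_zero h)
      by_cases hD : D w
      · obtain ⟨u', v', p', a1, a2, a3, a4, a5, a6, a7⟩ :=
          ih w v (p.dropUntil w hwp) (by omega) hwS hv hD hDv
        exact ⟨u', v', p', a1, a2, a3, a4, a5,
          fun x hx => p.support_dropUntil_subset_support hwp (a6 x hx), a7⟩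
      · obtain ⟨u', v', p', a1, a2, a3, a4, a5, a6, a7⟩ :=
          ih u w (p.takeUntil w hwp) (by omega) hu hwS hDu hD
        exact ⟨u', v', p', a1, a2, a3, a4, a5,
          fun x hx => p.support_takeUntil_subset_support hwp (a6 x hx), a7⟩
    · push Not at hw
      exact ⟨u, v, p.bypass, p.bypass_isPath, hu, hv, hDu, hDv,
        fun x hx => p.support_bypass_subset_support hx,
        fun x hx h1 h2 => hw x (p.support_bypass_subset_support hx) h1 h2⟩

lemma DisjointPaths.rev1 {α : Type*} {G : SimpleGraph α} {S : Set α} {x y z w : α}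
    (h : DisjointPaths G S x y z w) : DisjointPaths G S y x z w := by
  obtain ⟨p, q, h1, h2, h3, h4, h5⟩ := h
  refine ⟨p.reverse, q, h1.reverse, h2, ?_, ?_, h5⟩
  · intro u hu; exact h3 u (by simpa using hu)
  · intro u hu h h'; exact h4 u (by simpa using hu) h' h

lemma DisjointPaths.swap {α : Type*} {G : SimpleGraph α} {S : Set α} {x y z w : α}
    (h : DisjointPaths G S x y z w) : DisjointPaths G S z w x y := by
  obtain ⟨p, q, h1, h2, h3, h4, h5⟩ := h
  exact ⟨q, p, h2, h1, fun u hu hu' => h3 u hu' hu, h5, h4⟩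

lemma DisjointPaths.rev2 {α : Type*} {G : SimpleGraph α} {S : Set α} {x y z w : α}
    (h : DisjointPaths G S x y z w) : DisjointPaths G S x y w z := h.swap.rev1.swap

lemma nc_fin {α : Type*} {G : SimpleGraph α} {n : ℕ} {a : Fin n → α}
    (hnc : NoncrossingList G (List.ofFn a)) (i j k l : Fin n) (h1 : i < j) (h2 : j < k)
    (h3 : k < l) : ¬ DisjointPaths G (Set.range a) (a i) (a k) (a j) (a l) := by
  have e : (List.ofFn a).length = n := List.length_ofFn
  have := hnc (Fin.cast e.symm i) (Fin.cast e.symm j) (Fin.cast e.symm k) (Fin.cast e.symm l)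
    h1 h2 h3
  have hS : {x | x ∈ List.ofFn a} = Set.range a := by
    ext x; simp [List.mem_ofFn]
  rw [hS] at this
  simpa using this

lemma nc_strong {α : Type*} {G : SimpleGraph α} {n : ℕ} {a : Fin n → α}
    (ha : Function.Injective a)
    (hnc : NoncrossingList G (List.ofFn a)) (i j k l : Fin n) (h1 : i < j) (h2 : j < k)
    (h3 : k < l) (p : G.Walk (a i) (a k)) (q : G.Walk (a j) (a l)) :
    ∃ u ∈ p.support, u ∈ q.support := by
  by_contra hcon
  push Not at hcon
  obtain ⟨u, v, p', b1, ⟨i', rfl⟩, ⟨k', rfl⟩, b4, b5, b6, b7⟩ :=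
    seg_aux (Set.range a) (fun x => ∃ m, x = a m ∧ ¬ (j < m ∧ m < l)) _ _ _ p le_rfl ⟨i, rfl⟩
      ⟨k, rfl⟩ ⟨i, rfl, by omega⟩ (by rintro ⟨m, hm, hm'⟩; rw [← ha hm] at hm'; omega)
  have c1 : ¬ (j < i' ∧ i' < l) := by
    obtain ⟨m, hm, hm'⟩ := b4
    rw [← ha hm] at hm'; exact hm'
  have c2 : j < k' ∧ k' < l := by
    by_contra hh; exact b5 ⟨k', rfl, hh⟩
  have c3 : i' ≠ j := by
    rintro rfl
    exact hcon _ (b6 _ p'.start_mem_support) q.start_mem_support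
  have c4 : i' ≠ l := by
    rintro rfl
    exact hcon _ (b6 _ p'.start_mem_support) q.end_mem_support
  -- `min` and `max` of the two ends
  have hside : ∃ (x y : Fin n) (r : G.Walk (a x) (a y)), x < y ∧ r.IsPath ∧
      (∀ w ∈ r.support, w ∈ p.support) ∧
      (∀ w ∈ r.support, w ≠ a x → w ≠ a y → w ∉ Set.range a) ∧
      ((x < j ∧ j < y ∧ y < l) ∨ (j < x ∧ x < l ∧ l < y)) := by
    by_cases hlt : i' < k'
    · exact ⟨i', k', p', hlt, b1, b6, b7, by left; omega⟩
    · refine ⟨k', i', p'.reverse, by omega, b1.reverse, ?_, ?_, by right; omega⟩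
      · intro w hw; exact b6 w (by simpa using hw)
      · intro w hw h h'; exact b7 w (by simpa using hw) h' h
  obtain ⟨x, y, r, hxy, d1, d2, d3, d4⟩ := hside
  have hq : ∃ (z w : Fin n) (t : G.Walk (a z) (a w)), t.IsPath ∧
      (∀ u ∈ t.support, u ∈ q.support) ∧
      (∀ u ∈ t.support, u ≠ a z → u ≠ a w → u ∉ Set.range a) ∧
      (x < z ∧ z < y) ∧ ¬ (x < w ∧ w < y) := by
    have gen : ∀ (j l : Fin n) (q' : G.Walk (a j) (a l)), (∀ u ∈ q'.support, u ∈ q.support) →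
        (x < j ∧ j < y) → ¬ (x < l ∧ l < y) → 
        ∃ (z w : Fin n) (t : G.Walk (a z) (a w)), t.IsPath ∧
        (∀ u ∈ t.support, u ∈ q.support) ∧
        (∀ u ∈ t.support, u ≠ a z → u ≠ a w → u ∉ Set.range a) ∧
        (x < z ∧ z < y) ∧ ¬ (x < w ∧ w < y) := by
      intro j l q' hq' hj hl
      obtain ⟨u, v, t, e1, ⟨z, rfl⟩, ⟨w, rfl⟩, e4, e5, e6, e7⟩ :=
        seg_aux (Set.range a) (fun v => ∃ m, v = a m ∧ (x < m ∧ m < y)) _ _ _ q' le_rfl ⟨j, rfl⟩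
          ⟨l, rfl⟩ ⟨j, rfl, hj⟩ (by rintro ⟨m, hm, hm'⟩; rw [← ha hm] at hm'; exact hl hm')
      refine ⟨z, w, t, e1, fun u hu => hq' u (e6 u hu), e7, ?_, fun hh => e5 ⟨w, rfl, hh⟩⟩
      obtain ⟨m, hm, hm'⟩ := e4
      rw [← ha hm] at hm'; exact hm'
    rcases d4 with d4 | d4
    · exact gen j l q (fun _ h => h) (by omega) (by omega)
    · exact gen l j q.reverse (fun _ h => by simpa using h) (by omega) (by omega)
  obtain ⟨z, w, t, f1, f2, f3, f4, f5⟩ := hq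
  have hdisj : ∀ u ∈ r.support, u ∉ t.support := fun u hu hu' => hcon u (d2 u hu) (f2 u hu')
  have g1 : w ≠ x := by
    rintro rfl; exact hdisj _ r.start_mem_support t.end_mem_support
  have g2 : w ≠ y := by
    rintro rfl; exact hdisj _ r.end_mem_support t.end_mem_support
  have hDP : DisjointPaths G (Set.range a) (a x) (a y) (a z) (a w) :=
    ⟨r, t, d1, f1, hdisj, d3, f3⟩
  by_cases hw : w < x
  · exact nc_fin hnc w x z y hw (by omega) (by omega) hDP.swap.rev1
  · exact nc_fin hnc x z y w (by omega) (by omega) (by omega) hDP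

/-- a superposition of two matchings, of `s` and of `s ∆ B` -/
def Sup {α : Type*} [DecidableEq α] (G : SimpleGraph α) (B s : Finset α)
    (p : (α → α) × (α → α)) : Prop :=
  IsInv G s p.1 ∧ IsInv G (symmDiff s B) p.2

lemma sup_card {α : Type*} [Fintype α] [DecidableEq α] (G : SimpleGraph α) (B s : Finset α)
    [DecidablePred (Sup G B s)] :
    pmCount G s * pmCount G (symmDiff s B) = (Finset.univ.filter (Sup G B s)).card := by
  classical
  rw [pmCount_eq, pmCount_eq, ← Nat.card_prod, ← Fintype.card_subtype, ← Nat.card_eq_fintype_card]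
  exact Nat.card_congr
    { toFun := fun x => ⟨(x.1.1, x.2.1), x.1.2, x.2.2⟩
      invFun := fun y => (⟨y.1.1, y.2.1⟩, ⟨y.1.2, y.2.2⟩)
      left_inv := fun _ => rfl
      right_inv := fun _ => rfl }

lemma partner_idx {α : Type*} [Fintype α] [DecidableEq α] {G : SimpleGraph α} {n : ℕ}
    {a : Fin n → α} {T : Finset (Fin n)} {s : Finset α}
    {p : (α → α) × (α → α)} (hp : Sup G (T.image a) s p) {i : Fin n} (hi : i ∈ T) :
    ∃ j ∈ T, j ≠ i ∧ (supG p).Reachable (a i) (a j) ∧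
      ∀ v ∈ T.image a, (supG p).Reachable (a i) v → v = a i ∨ v = a j := by
  obtain ⟨b, hb, h1, h2, h3⟩ := partner hp.1 hp.2 (Finset.mem_image_of_mem a hi)
  obtain ⟨j, hj, rfl⟩ := Finset.mem_image.1 hb
  exact ⟨j, hj, fun h => h1 (h ▸ rfl), h2, h3⟩

lemma even_card_inv {β : Type*} [DecidableEq β] (I : Finset β) (π : β → β) (h1 : ∀ x ∈ I, π x ∈ I)
    (h2 : ∀ x ∈ I, π (π x) = x) (h3 : ∀ x ∈ I, π x ≠ x) : Even I.card := by
  have : ∑ x ∈ I, (1 : ZMod 2) = 0 :=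
    Finset.sum_involution (fun x _ => π x) (fun _ _ => by decide) (fun x hx _ => h3 x hx)
      h1 h2
  simp only [Finset.sum_const, nsmul_eq_mul, mul_one] at this
  exact (ZMod.natCast_eq_zero_iff_even).1 this

lemma between_even {α : Type*} [Fintype α] [DecidableEq α] {G : SimpleGraph α} {n : ℕ}
    {a : Fin n → α} (ha : Function.Injective a) (hnc : NoncrossingList G (List.ofFn a))
    {T : Finset (Fin n)} {s : Finset α}
    {p : (α → α) × (α → α)} (hp : Sup G (T.image a) s p) {i j : Fin n} (hi : i ∈ T) (hj : j ∈ T)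
    (hij : i < j) (hr : (supG p).Reachable (a i) (a j)) :
    Even (T.filter (fun k => i < k ∧ k < j)).card := by
  have hex : ∀ k, ∃ k', k ∈ T → (k' ∈ T ∧ k' ≠ k ∧ (supG p).Reachable (a k) (a k') ∧
      ∀ m ∈ T, (supG p).Reachable (a k) (a m) → m = k ∨ m = k') := by
    intro k
    by_cases hk : k ∈ T
    · obtain ⟨k', h1, h2, h3, h4⟩ := partner_idx hp hk
      refine ⟨k', fun _ => ⟨h1, h2, h3, fun m hm hr => ?_⟩⟩
      rcases h4 _ (Finset.mem_image_of_mem a hm) hr with h | h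
      · exact Or.inl (ha h)
      · exact Or.inr (ha h)
    · exact ⟨k, fun h => absurd h hk⟩
  choose π hπ using hex
  have hle : supG p ≤ G := supG_le hp.1 hp.2
  have hij' : ∀ m ∈ T, (supG p).Reachable (a i) (a m) → m = i ∨ m = j := by
    intro m hm h
    have := (hπ i hi).2.2.2 m hm h
    have h2 := (hπ i hi).2.2.2 j hj hr
    have : j ≠ i := hij.ne'
    grind
  apply even_card_inv _ π
  · intro k hk
    simp only [Finset.mem_filter] at hk ⊢
    obtain ⟨hkT, hk1, hk2⟩ := hk
    obtain ⟨h1, h2, h3, h4⟩ := hπ k hkT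
    refine ⟨h1, ?_⟩
    have hni : ¬ (supG p).Reachable (a i) (a k) := by
      intro h
      rcases hij' k hkT h with rfl | rfl
      · exact lt_irrefl _ hk1
      · exact lt_irrefl _ hk2
    have hd : ∀ (x : (supG p).Walk (a i) (a j)) (y : (supG p).Walk (a k) (a (π k))), ∀ u ∈ x.support,
        u ∉ y.support := by
      classical
      intro x y u hu hu'
      exact hni ((x.takeUntil u hu).reachable.trans (y.takeUntil u hu').reachable.symm)
    obtain ⟨x⟩ := hr
    obtain ⟨y⟩ := h3
    have hne1 : π k ≠ i := by
      intro h
      exact hd x y _ x.start_mem_support (by rw [← h]; exact y.end_mem_support)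
    have hne2 : π k ≠ j := by
      intro h
      exact hd x y _ x.end_mem_support (by rw [← h]; exact y.end_mem_support)
    by_contra hcon
    by_cases hlt : π k < i
    · obtain ⟨u, hu, hu'⟩ := nc_strong ha hnc (π k) i k j hlt hk1 hk2 ((y.mapLe hle).reverse)
        (x.mapLe hle)
      refine hd x y u ?_ ?_
      · simpa using hu'
      · simpa using hu
    · obtain ⟨u, hu, hu'⟩ := nc_strong ha hnc i k j (π k) hk1 hk2 (by omega) (x.mapLe hle)
        (y.mapLe hle)
      refine hd x y u ?_ ?_
      · simpa using hu
      · simpa using hu'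
  · intro k hk
    simp only [Finset.mem_filter] at hk
    obtain ⟨h1, h2, h3, h4⟩ := hπ k hk.1
    obtain ⟨g1, g2, g3, g4⟩ := hπ _ h1
    rcases g4 k hk.1 h3.symm with h | h
    · exact absurd h.symm h2
    · exact h.symm
  · intro k hk
    simp only [Finset.mem_filter] at hk
    exact (hπ k hk.1).2.1

/-- sign of an index in `T` -/
def sg {n : ℕ} (T : Finset (Fin n)) (j : Fin n) : ℤ := -(-1) ^ (T.filter (fun k => k < j)).card

lemma sg_neg {n : ℕ} {T : Finset (Fin n)} {i j : Fin n} (hi : i ∈ T) (hij : i < j)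
    (h : Even (T.filter (fun k => i < k ∧ k < j)).card) : sg T j = - sg T i := by
  have : T.filter (fun k => k < j) =
      insert i (T.filter (fun k => k < i) ∪ T.filter (fun k => i < k ∧ k < j)) := by
    ext k
    simp only [Finset.mem_filter, Finset.mem_insert, Finset.mem_union]
    constructor
    · rintro ⟨h1, h2⟩
      rcases lt_trichotomy k i with h | h | h
      · tauto
      · tauto
      · tauto
    · rintro (rfl | h | h)
      · exact ⟨hi, hij⟩
      · exact ⟨h.1, h.2.trans hij⟩
      · exact ⟨h.1, h.2.2⟩
  rw [sg, sg, this, Finset.card_insert_of_notMem (by simp), Finset.card_union_of_disjoint]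
  · rw [pow_succ, pow_add, h.neg_one_pow]; ring
  · rw [Finset.disjoint_left]
    intro k hk hk'
    simp only [Finset.mem_filter] at hk hk'
    exact absurd hk.2 (not_lt.2 hk'.2.1.le)

lemma sg_partner {α : Type*} [Fintype α] [DecidableEq α] {G : SimpleGraph α} {n : ℕ}
    {a : Fin n → α} (ha : Function.Injective a) (hnc : NoncrossingList G (List.ofFn a))
    {T : Finset (Fin n)} {s : Finset α}
    {p : (α → α) × (α → α)} (hp : Sup G (T.image a) s p) {i j : Fin n} (hi : i ∈ T) (hj : j ∈ T)
    (hij : j ≠ i) (hr : (supG p).Reachable (a i) (a j)) : sg T j = - sg T i := by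
  rcases lt_or_gt_of_ne hij with h | h
  · rw [sg_neg hj h (between_even ha hnc hp hj hi h hr.symm)]; ring
  · rw [sg_neg hi h (between_even ha hnc hp hi hj h hr)]

lemma symmDiff_pairs {α : Type*} [DecidableEq α] {x y z : α} (n1 : x ≠ y) (n2 : x ≠ z)
    (n3 : y ≠ z) : symmDiff ({x, y} : Finset α) {y, z} = {x, z} := by
  ext v
  simp only [Finset.mem_symmDiff, Finset.mem_insert, Finset.mem_singleton]
  by_cases h1 : v = x
  · subst h1; simp [n1, n2]
  · by_cases h2 : v = y
    · subst h2; simp [n1.symm, n3]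
    · simp [h1, h2]

lemma condens {α : Type*} [Fintype α] [DecidableEq α] {G : SimpleGraph α} {n : ℕ}
    {a : Fin n → α} (ha : Function.Injective a) (hnc : NoncrossingList G (List.ofFn a))
    {T : Finset (Fin n)} (H : Finset α) {i0 : Fin n} (hi0 : i0 ∈ T) (hmin : ∀ k ∈ T, i0 ≤ k) :
    (pmCount G H : ℤ) * pmCount G (symmDiff H (T.image a)) =
      ∑ j ∈ T.erase i0, sg T j * ((pmCount G (symmDiff H {a i0, a j}) : ℤ) *
        pmCount G (symmDiff (symmDiff H {a i0, a j}) (T.image a))) := by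
  classical
  set B := T.image a with hB
  have hsg0 : sg T i0 = -1 := by
    have : T.filter (fun k => k < i0) = ∅ := by
      rw [Finset.filter_eq_empty_iff]
      intro k hk; exact not_lt.2 (hmin k hk)
    simp [sg, this]
  -- partners
  have hex : ∀ p : (α → α) × (α → α), ∃ π : Fin n → Fin n, ∀ s, Sup G B s p → ∀ k ∈ T,
      (π k ∈ T ∧ π k ≠ k ∧ (supG p).Reachable (a k) (a (π k)) ∧
      ∀ v ∈ B, (supG p).Reachable (a k) v → v = a k ∨ v = a (π k)) := by
    intro p
    by_cases h : ∃ s, Sup G B s p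
    · obtain ⟨s, hs⟩ := h
      have : ∀ k, ∃ k', k ∈ T → (k' ∈ T ∧ k' ≠ k ∧ (supG p).Reachable (a k) (a k') ∧
          ∀ v ∈ B, (supG p).Reachable (a k) v → v = a k ∨ v = a k') := by
        intro k
        by_cases hk : k ∈ T
        · obtain ⟨k', h1, h2⟩ := partner_idx hs hk
          exact ⟨k', fun _ => ⟨h1, h2⟩⟩
        · exact ⟨k, fun h => absurd h hk⟩
      choose π hπ using this
      exact ⟨π, fun _ _ => hπ⟩
    · exact ⟨id, fun s hs => absurd ⟨s, hs⟩ h⟩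
  choose π hπ using hex
  have haB : ∀ k ∈ T, a k ∈ B := fun k hk => Finset.mem_image_of_mem a hk
  have hswap : ∀ p s k, Sup G B s p → k ∈ T → Sup G B (symmDiff s {a k, a (π p k)}) (swapP p (a k)) := by
    intro p s k hp hk
    obtain ⟨h1, h2, h3, h4⟩ := hπ p s hp k hk
    exact swap_inv hp.1 hp.2 (haB k hk) (haB _ h1) h3 h4
  have hpi : ∀ p s k m, Sup G B s p → k ∈ T → m ∈ T → m ≠ k →
      ((supG p).Reachable (a k) (a m) ↔ m = π p k) := by
    intro p s k m hp hk hm hne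
    obtain ⟨h1, h2, h3, h4⟩ := hπ p s hp k hk
    constructor
    · intro h
      rcases h4 _ (haB m hm) h with h | h
      · exact absurd (ha h) hne
      · exact ha h
    · rintro rfl; exact h3
  -- step 1
  have step1 : ((Finset.univ.filter (Sup G B H)).card : ℤ) = ∑ j ∈ T.erase i0,
      (((Finset.univ.filter (Sup G B H)).filter
        (fun p => (supG p).Reachable (a i0) (a j))).card : ℤ) := by
    rw [← Nat.cast_sum]
    congr 1
    simp only [Finset.card_filter _ (Finset.univ.filter (Sup G B H))]
    rw [Finset.sum_comm, Finset.card_eq_sum_ones]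
    apply Finset.sum_congr rfl
    intro p hp
    simp only [Finset.mem_filter, Finset.mem_univ, true_and] at hp
    obtain ⟨h1, h2, h3, h4⟩ := hπ p _ hp i0 hi0
    rw [Finset.sum_eq_single (π p i0)]
    · simp [h3]
    · intro b hb hne
      rw [Finset.mem_erase] at hb
      rw [if_neg]
      rw [hpi p _ i0 b hp hi0 hb.2 hb.1]
      exact hne
    · intro h
      exact absurd (Finset.mem_erase.2 ⟨h2, h1⟩) h
  -- step 2
  have step2 : ∀ j ∈ T.erase i0, ((Finset.univ.filter (Sup G B H)).filter
        (fun p => (supG p).Reachable (a i0) (a j))).card =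
      ((Finset.univ.filter (Sup G B (symmDiff H {a i0, a j}))).filter
        (fun p => (supG p).Reachable (a i0) (a j))).card := by
    intro j hj
    rw [Finset.mem_erase] at hj
    refine Finset.card_bij' (fun p _ => swapP p (a i0)) (fun p _ => swapP p (a i0)) ?_ ?_ ?_ ?_
    · intro p hp
      simp only [Finset.mem_filter, Finset.mem_univ, true_and] at hp ⊢
      have := hswap p _ i0 hp.1 hi0
      rw [← (hpi p _ i0 j hp.1 hi0 hj.2 hj.1).1 hp.2] at this
      exact ⟨this, by rw [supG_swapP]; exact hp.2⟩
    · intro p hp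
      simp only [Finset.mem_filter, Finset.mem_univ, true_and] at hp ⊢
      have := hswap p _ i0 hp.1 hi0
      rw [← (hpi p _ i0 j hp.1 hi0 hj.2 hj.1).1 hp.2, symmDiff_symmDiff_cancel_right] at this
      exact ⟨this, by rw [supG_swapP]; exact hp.2⟩
    · intro p hp
      exact swapP_swapP p _ _ (SimpleGraph.Reachable.refl _)
    · intro p hp
      exact swapP_swapP p _ _ (SimpleGraph.Reachable.refl _)
  -- step 3
  have step3 : ∑ j ∈ T.erase i0, sg T j *
      (((Finset.univ.filter (Sup G B (symmDiff H {a i0, a j}))).filter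
        (fun p => ¬ (supG p).Reachable (a i0) (a j))).card : ℤ) = 0 := by
    have e1 : ∀ j ∈ T.erase i0, sg T j *
      (((Finset.univ.filter (Sup G B (symmDiff H {a i0, a j}))).filter
        (fun p => ¬ (supG p).Reachable (a i0) (a j))).card : ℤ) =
        ∑ p ∈ ((Finset.univ.filter (Sup G B (symmDiff H {a i0, a j}))).filter
        (fun p => ¬ (supG p).Reachable (a i0) (a j))), sg T j := by
      intro j _
      rw [Finset.sum_const, nsmul_eq_mul, mul_comm]
    rw [Finset.sum_congr rfl e1, Finset.sum_sigma']
    refine Finset.sum_involution (fun x _ => ⟨π x.2 x.1, swapP x.2 (a x.1)⟩) ?_ ?_ ?_ ?_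
    · rintro ⟨j, p⟩ hx
      simp only [Finset.mem_sigma, Finset.mem_erase, Finset.mem_filter, Finset.mem_univ,
        true_and] at hx
      obtain ⟨⟨hj0, hjT⟩, hp, hr⟩ := hx
      obtain ⟨h1, h2, h3, h4⟩ := hπ p _ hp j hjT
      simp only
      rw [sg_partner ha hnc hp hjT h1 h2 h3]; ring
    · rintro ⟨j, p⟩ hx _ heq
      simp only [Finset.mem_sigma, Finset.mem_erase, Finset.mem_filter, Finset.mem_univ,
        true_and] at hx
      obtain ⟨⟨hj0, hjT⟩, hp, hr⟩ := hx
      obtain ⟨h1, h2, h3, h4⟩ := hπ p _ hp j hjT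
      exact h2 (congrArg Sigma.fst heq)
    · rintro ⟨j, p⟩ hx
      simp only [Finset.mem_sigma, Finset.mem_erase, Finset.mem_filter, Finset.mem_univ,
        true_and] at hx ⊢
      obtain ⟨⟨hj0, hjT⟩, hp, hr⟩ := hx
      obtain ⟨h1, h2, h3, h4⟩ := hπ p _ hp j hjT
      have hne : π p j ≠ i0 := by
        intro h; rw [h] at h3; exact hr h3.symm
      refine ⟨⟨hne, h1⟩, ?_, ?_⟩
      · have := hswap p _ j hp hjT
        have e : symmDiff (symmDiff H {a i0, a j}) {a j, a (π p j)} = symmDiff H {a i0, a (π p j)} := by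
          have n1 : a i0 ≠ a j := fun h => hj0 (ha h).symm
          have n2 : a i0 ≠ a (π p j) := fun h => hne (ha h).symm
          have n3 : a j ≠ a (π p j) := fun h => h2 (ha h).symm
          rw [symmDiff_assoc, symmDiff_pairs n1 n2 n3]
        rwa [e] at this
      · rw [supG_swapP]
        intro h
        exact hr (h.trans h3.symm)
    · rintro ⟨j, p⟩ hx
      simp only [Finset.mem_sigma, Finset.mem_erase, Finset.mem_filter, Finset.mem_univ,
        true_and] at hx
      obtain ⟨⟨hj0, hjT⟩, hp, hr⟩ := hx
      obtain ⟨h1, h2, h3, h4⟩ := hπ p _ hp j hjT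
      have e1 : swapP (swapP p (a j)) (a (π p j)) = p := swapP_swapP p _ _ h3
      have e2 : π (swapP p (a j)) (π p j) = j := by
        have hs := hswap p _ j hp hjT
        exact ((hpi _ _ (π p j) j hs h1 hjT h2.symm).1 (by rw [supG_swapP]; exact h3.symm)).symm
      simp only [e1, e2]
  have e0 := sup_card G B H
  calc (pmCount G H : ℤ) * pmCount G (symmDiff H B)
      = ((Finset.univ.filter (Sup G B H)).card : ℤ) := by rw [← e0]; push_cast; ring
    _ = ∑ j ∈ T.erase i0, sg T j * (((Finset.univ.filter (Sup G B (symmDiff H {a i0, a j}))).filter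
        (fun p => (supG p).Reachable (a i0) (a j))).card : ℤ) := by
        rw [step1]
        apply Finset.sum_congr rfl
        intro j hj
        rw [step2 j hj]
        rcases Finset.eq_empty_or_nonempty ((Finset.univ.filter (Sup G B (symmDiff H {a i0, a j}))).filter
        (fun p => (supG p).Reachable (a i0) (a j))) with h | ⟨p, hp⟩
        · rw [h]; simp
        · simp only [Finset.mem_filter, Finset.mem_univ, true_and] at hp
          rw [Finset.mem_erase] at hj
          rw [sg_partner ha hnc hp.1 hi0 hj.2 hj.1 hp.2, hsg0]; ring
    _ = _ := by
        rw [← add_zero (∑ j ∈ T.erase i0, _), ← step3, ← Finset.sum_add_distrib]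
        apply Finset.sum_congr rfl
        intro j hj
        rw [← mul_add]
        congr 1
        have := sup_card G B (symmDiff H {a i0, a j})
        rw [← Finset.card_filter_add_card_filter_not (fun p => (supG p).Reachable (a i0) (a j))] at this
        rw [← Nat.cast_add, ← Nat.cast_mul, this]

/-- 1-factors of a set of indices -/
def OFOn {n : ℕ} (T : Finset (Fin n)) (F : Finset (Fin n × Fin n)) : Prop :=
  (∀ p ∈ F, p.1 < p.2 ∧ p.1 ∈ T ∧ p.2 ∈ T) ∧ ∀ v ∈ T, ∃! p, p ∈ F ∧ (v = p.1 ∨ v = p.2)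

lemma OFOn.insert {n : ℕ} {T : Finset (Fin n)} {F : Finset (Fin n × Fin n)} {i j : Fin n}
    (hi : i ∈ T) (hj : j ∈ T) (hij : i < j) (h : OFOn (T \ {i, j}) F) :
    OFOn T (insert (i, j) F) := by
  refine ⟨?_, ?_⟩
  · intro p hp
    rcases Finset.mem_insert.1 hp with rfl | hp
    · exact ⟨hij, hi, hj⟩
    · obtain ⟨h1, h2, h3⟩ := h.1 p hp
      exact ⟨h1, (Finset.mem_sdiff.1 h2).1, (Finset.mem_sdiff.1 h3).1⟩
  · intro v hv
    by_cases hvij : v = i ∨ v = j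
    · refine ⟨(i, j), ⟨Finset.mem_insert_self _ _, hvij⟩, ?_⟩
      rintro p ⟨hp, hvp⟩
      rcases Finset.mem_insert.1 hp with rfl | hp
      · rfl
      · exfalso
        obtain ⟨h1, h2, h3⟩ := h.1 p hp
        simp only [Finset.mem_sdiff, Finset.mem_insert, Finset.mem_singleton] at h2 h3
        rcases hvp with rfl | rfl
        · exact h2.2 hvij
        · exact h3.2 hvij
    · obtain ⟨p, ⟨hp, hvp⟩, hu⟩ := h.2 v (by simp [hv, hvij])
      refine ⟨p, ⟨Finset.mem_insert_of_mem hp, hvp⟩, ?_⟩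
      rintro q ⟨hq, hvq⟩
      rcases Finset.mem_insert.1 hq with rfl | hq
      · exact absurd hvq hvij
      · exact hu q ⟨hq, hvq⟩

lemma OFOn.notMem {n : ℕ} {T : Finset (Fin n)} {F : Finset (Fin n × Fin n)} {i j k : Fin n}
    (h : OFOn (T \ {i, j}) F) : (i, k) ∉ F := by
  intro hk
  have := (h.1 _ hk).2.1
  simp at this

lemma OFOn.erase {n : ℕ} {T : Finset (Fin n)} {F : Finset (Fin n × Fin n)} {i j : Fin n}
    (h : OFOn T F) (hm : (i, j) ∈ F) : OFOn (T \ {i, j}) (F.erase (i, j)) := by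
  obtain ⟨hlt, hi, hj⟩ := h.1 _ hm
  refine ⟨?_, ?_⟩
  · intro p hp
    rw [Finset.mem_erase] at hp
    obtain ⟨h1, h2, h3⟩ := h.1 p hp.2
    simp only [Finset.mem_sdiff, Finset.mem_insert, Finset.mem_singleton]
    have key : ∀ v, (v = p.1 ∨ v = p.2) → v ≠ i ∧ v ≠ j := by
      intro v hv
      constructor
      · rintro rfl
        exact hp.1 ((h.2 v hi).unique ⟨hp.2, hv⟩ ⟨hm, Or.inl rfl⟩)
      · rintro rfl
        exact hp.1 ((h.2 v hj).unique ⟨hp.2, hv⟩ ⟨hm, Or.inr rfl⟩)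
    have k1 := key p.1 (Or.inl rfl)
    have k2 := key p.2 (Or.inr rfl)
    tauto
  · intro v hv
    simp only [Finset.mem_sdiff, Finset.mem_insert, Finset.mem_singleton] at hv
    obtain ⟨p, ⟨hp, hvp⟩, hu⟩ := h.2 v hv.1
    refine ⟨p, ⟨Finset.mem_erase.2 ⟨?_, hp⟩, hvp⟩, ?_⟩
    · rintro rfl; exact hv.2 hvp
    · rintro q ⟨hq, hvq⟩
      exact hu q ⟨(Finset.mem_erase.1 hq).2, hvq⟩

lemma OFOn.count {n : ℕ} {T : Finset (Fin n)} {F : Finset (Fin n × Fin n)} (h : OFOn T F)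
    (j : Fin n) : (T.filter (fun k => k < j)).card =
      ∑ p ∈ F, ((if p.1 < j then 1 else 0) + (if p.2 < j then 1 else 0)) := by
  have e1 : ∀ p ∈ F, ((if p.1 < j then 1 else 0) + (if p.2 < j then 1 else 0) : ℕ) =
      ∑ v ∈ T.filter (fun k => k < j), if (v = p.1 ∨ v = p.2) then 1 else 0 := by
    intro p hp
    obtain ⟨h1, h2, h3⟩ := h.1 p hp
    have : ∀ v, (if (v = p.1 ∨ v = p.2) then 1 else 0 : ℕ) =
        (if v = p.1 then 1 else 0) + (if v = p.2 then 1 else 0) := by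
      intro v
      by_cases a1 : v = p.1
      · have : v ≠ p.2 := by rw [a1]; exact h1.ne
        simp [a1, h1.ne]
      · simp [a1]
    simp only [this, Finset.sum_add_distrib, Finset.sum_ite_eq', Finset.mem_filter, h2, h3,
      true_and]
  rw [Finset.sum_congr rfl e1, Finset.sum_comm, Finset.card_eq_sum_ones]
  apply Finset.sum_congr rfl
  intro v hv
  rw [Finset.mem_filter] at hv
  obtain ⟨p, ⟨hp, hvp⟩, hu⟩ := h.2 v hv.1
  rw [Finset.sum_eq_single p]
  · simp [hvp]
  · intro q hq hne
    rw [if_neg]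
    intro hvq
    exact hne (hu q ⟨hq, hvq⟩)
  · intro hh; exact absurd hp hh

lemma crossing_insert {n : ℕ} {T : Finset (Fin n)} {F : Finset (Fin n × Fin n)} {i j : Fin n}
    (hmin : ∀ k ∈ T, i ≤ k) (h : OFOn (T \ {i, j}) F) :
    crossingNumber n (insert (i, j) F) =
      crossingNumber n F + (F.filter (fun p => p.1 < j ∧ j < p.2)).card := by
  have hi : ∀ p ∈ F, i < p.1 ∧ p.1 < p.2 := by
    intro p hp
    obtain ⟨h1, h2, h3⟩ := h.1 p hp
    simp only [Finset.mem_sdiff, Finset.mem_insert, Finset.mem_singleton] at h2 h3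
    have := hmin _ h2.1
    refine ⟨lt_of_le_of_ne this ?_, h1⟩
    intro hh; exact h2.2 (Or.inl hh.symm)
  have hc : (F.filter (fun p => p.1 < j ∧ j < p.2)).card =
      ((F.filter (fun p => p.1 < j ∧ j < p.2)).image (fun p => ((i, j), p))).card := by
    rw [Finset.card_image_of_injective]
    intro p q hpq
    exact (Prod.mk.inj hpq).2
  unfold crossingNumber
  rw [hc, ← Finset.card_union_of_disjoint]
  · congr 1
    ext ⟨p, q⟩
    simp only [Finset.mem_filter, Finset.mem_product, Finset.mem_insert, Finset.mem_union,
      Finset.mem_image, Prod.mk.injEq]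
    constructor
    · rintro ⟨⟨hp | hp, hq | hq⟩, h1, h2, h3⟩
      · subst hp; subst hq; exact absurd h1 (lt_irrefl _)
      · subst hp; exact Or.inr ⟨q, ⟨hq, h2, h3⟩, rfl, rfl⟩
      · subst hq; exact absurd h1 (not_lt.2 (hi p hp).1.le)
      · exact Or.inl ⟨⟨hp, hq⟩, h1, h2, h3⟩
    · rintro (⟨⟨hp, hq⟩, h1⟩ | ⟨q', ⟨hq, h2, h3⟩, rfl, rfl⟩)
      · exact ⟨⟨Or.inr hp, Or.inr hq⟩, h1⟩
      · exact ⟨⟨Or.inl rfl, Or.inr hq⟩, (hi _ hq).1, h2, h3⟩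
  · rw [Finset.disjoint_left]
    rintro x hx hx'
    simp only [Finset.mem_filter, Finset.mem_product, Finset.mem_image] at hx hx'
    obtain ⟨q, hq, rfl⟩ := hx'
    exact h.notMem hx.1.1

lemma sign_insert {n : ℕ} {T : Finset (Fin n)} {F : Finset (Fin n × Fin n)} {i j : Fin n}
    (hiT : i ∈ T) (hij : i < j)
    (hmin : ∀ k ∈ T, i ≤ k) (h : OFOn (T \ {i, j}) F) :
    (-1 : ℤ) ^ crossingNumber n (insert (i, j) F) = sg T j * (-1) ^ crossingNumber n F := by
  have e1 : (T.filter (fun k => k < j)).card = ((T \ {i, j}).filter (fun k => k < j)).card + 1 := by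
    have : T.filter (fun k => k < j) = insert i ((T \ {i, j}).filter (fun k => k < j)) := by
      ext k
      simp only [Finset.mem_filter, Finset.mem_insert, Finset.mem_sdiff, Finset.mem_singleton]
      constructor
      · rintro ⟨h1, h2⟩
        have := h2.ne
        tauto
      · rintro (rfl | h)
        · exact ⟨hiT, hij⟩
        · exact ⟨h.1.1, h.2⟩
    rw [this, Finset.card_insert_of_notMem (by simp)]
  have e2 : (-1 : ℤ) ^ (F.filter (fun p => p.1 < j ∧ j < p.2)).card =
      (-1) ^ ((T \ {i, j}).filter (fun k => k < j)).card := by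
    rw [h.count j, Finset.card_filter, ← Finset.prod_pow_eq_pow_sum, ← Finset.prod_pow_eq_pow_sum]
    apply Finset.prod_congr rfl
    intro p hp
    obtain ⟨h1, h2, h3⟩ := h.1 p hp
    simp only [Finset.mem_sdiff, Finset.mem_insert, Finset.mem_singleton] at h3
    by_cases c1 : p.1 < j <;> by_cases c2 : p.2 < j
    · simp [c1, c2, not_lt.2 c2.le]
    · have : j < p.2 := lt_of_le_of_ne (not_lt.1 c2) (fun hh => h3.2 (Or.inr hh.symm))
      simp [c1, c2, this]
    · exact absurd (h1.trans c2) c1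
    · simp [c1, c2]
  rw [crossing_insert hmin h, pow_add, e2, sg, e1, pow_succ]
  ring

open Classical in
/-- Pfaffian of an array on a set of indices -/
noncomputable def pfOn {n : ℕ} (w : Fin n → Fin n → ℤ) (T : Finset (Fin n)) : ℤ :=
  ∑ F ∈ Finset.univ.filter (fun F : Finset (Fin n × Fin n) => OFOn T F),
    (-1 : ℤ) ^ crossingNumber n F * ∏ p ∈ F, w p.1 p.2

lemma pfOn_empty {n : ℕ} (w : Fin n → Fin n → ℤ) : pfOn w ∅ = 1 := by
  classical
  unfold pfOn
  have : Finset.univ.filter (fun F : Finset (Fin n × Fin n) => OFOn ∅ F) = {∅} := by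
    ext F
    simp only [Finset.mem_filter, Finset.mem_univ, true_and, Finset.mem_singleton]
    constructor
    · intro h
      rw [Finset.eq_empty_iff_forall_notMem]
      intro p hp
      exact absurd (h.1 p hp).2.1 (Finset.notMem_empty _)
    · rintro rfl
      exact ⟨by simp, by simp⟩
  rw [this]
  simp [crossingNumber]

lemma pfOn_expand {n : ℕ} (w : Fin n → Fin n → ℤ) {T : Finset (Fin n)} {i0 : Fin n}
    (hi0 : i0 ∈ T) (hmin : ∀ k ∈ T, i0 ≤ k) :
    pfOn w T = ∑ j ∈ T.erase i0, sg T j * (w i0 j * pfOn w (T \ {i0, j})) := by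
  classical
  symm
  unfold pfOn
  simp only [Finset.mul_sum]
  rw [Finset.sum_sigma']
  refine Finset.sum_bij (fun x _ => insert (i0, x.1) x.2) ?_ ?_ ?_ ?_
  · rintro ⟨j, F⟩ hx
    simp only [Finset.mem_sigma, Finset.mem_erase, Finset.mem_filter, Finset.mem_univ,
      true_and] at hx ⊢
    exact hx.2.insert hi0 hx.1.2 (lt_of_le_of_ne (hmin _ hx.1.2) hx.1.1.symm)
  · rintro ⟨j, F⟩ hx ⟨j', F'⟩ hx' heq
    simp only [Finset.mem_sigma, Finset.mem_erase, Finset.mem_filter, Finset.mem_univ,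
      true_and] at hx hx' heq
    have hj : j = j' := by
      have : (i0, j) ∈ insert (i0, j') F' := by rw [← heq]; exact Finset.mem_insert_self _ _
      rcases Finset.mem_insert.1 this with h | h
      · exact (Prod.mk.inj h).2
      · exact absurd h hx'.2.notMem
    subst hj
    have : F = F' := by
      rw [← Finset.erase_insert (hx.2.notMem (k := j)), heq, Finset.erase_insert hx'.2.notMem]
    rw [this]
  · intro F hF
    simp only [Finset.mem_filter, Finset.mem_univ, true_and] at hF
    obtain ⟨⟨x, j⟩, ⟨hp, hv⟩, -⟩ := hF.2 i0 hi0
    obtain ⟨h1, h2, h3⟩ := hF.1 _ hp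
    simp only at h1 h2 h3 hv
    rcases hv with rfl | rfl
    · refine ⟨⟨j, F.erase (i0, j)⟩, ?_, Finset.insert_erase hp⟩
      simp only [Finset.mem_sigma, Finset.mem_erase, Finset.mem_filter, Finset.mem_univ,
        true_and]
      exact ⟨⟨h1.ne', h3⟩, hF.erase hp⟩
    · exact absurd h1 (not_lt.2 (hmin _ h2))
  · rintro ⟨j, F⟩ hx
    simp only [Finset.mem_sigma, Finset.mem_erase, Finset.mem_filter, Finset.mem_univ,
      true_and] at hx
    rw [sign_insert hi0 (lt_of_le_of_ne (hmin _ hx.1.2) hx.1.1.symm) hmin hx.2,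
      Finset.prod_insert hx.2.notMem]
    ring

lemma pf_main {α : Type*} [Fintype α] [DecidableEq α] {G : SimpleGraph α} {n : ℕ}
    {a : Fin n → α} (ha : Function.Injective a) (hnc : NoncrossingList G (List.ofFn a))
    (H : Finset α) (hH : pmCount G H = 1) : ∀ N, ∀ T : Finset (Fin n), T.card = N →
    (pmCount G (symmDiff H (T.image a)) : ℤ) =
      pfOn (fun i j => (pmCount G (symmDiff H {a i, a j}) : ℤ)) T := by
  intro N
  induction N using Nat.strong_induction_on with
  | _ N ih =>
    intro T hT
    rcases T.eq_empty_or_nonempty with rfl | hne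
    · rw [pfOn_empty, Finset.image_empty]
      have : symmDiff H (∅ : Finset α) = H := symmDiff_bot H
      rw [this, hH]; rfl
    · have hi0 := T.min'_mem hne
      have hmin : ∀ k ∈ T, T.min' hne ≤ k := fun k hk => T.min'_le k hk
      rw [pfOn_expand _ hi0 hmin]
      have := condens ha hnc H hi0 hmin
      rw [hH, Nat.cast_one, one_mul] at this
      rw [this]
      apply Finset.sum_congr rfl
      intro j hj
      rw [Finset.mem_erase] at hj
      rw [← ih (T \ {T.min' hne, j}).card ?_ _ rfl]
      · congr 4
        rw [symmDiff_assoc]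
        congr 1
        ext v
        simp only [Finset.mem_symmDiff, Finset.mem_insert, Finset.mem_singleton, Finset.mem_image,
          Finset.mem_sdiff]
        constructor
        · rintro (⟨rfl | rfl, h⟩ | ⟨⟨k, hk, rfl⟩, h⟩)
          · exact absurd ⟨_, hi0, rfl⟩ h
          · exact absurd ⟨_, hj.2, rfl⟩ h
          · refine ⟨k, ⟨hk, ?_⟩, rfl⟩
            rintro (h' | h')
            · exact h (Or.inl (congrArg a h'))
            · exact h (Or.inr (congrArg a h'))
        · rintro ⟨k, ⟨hk, hk'⟩, rfl⟩
          refine Or.inr ⟨⟨k, hk, rfl⟩, ?_⟩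
          rintro (h' | h')
          · exact hk' (Or.inl (ha h'))
          · exact hk' (Or.inr (ha h'))
      · rw [← hT]
        apply Finset.card_lt_card
        refine ⟨Finset.sdiff_subset, fun h => ?_⟩
        have := h hi0
        simp at this


open Classical in
/-- (Theorem 3.1.) Pfaffian generalization of graphical condensation. -/
theorem pfaffian_condensation {α : Type*} [Fintype α] [DecidableEq α]
    (G : SimpleGraph α) (n : ℕ) (hn : Even n)
    (a : Fin n → α) (hdist : (List.ofFn a).Nodup)
    (hnc : NoncrossingList G (List.ofFn a))
    (AK AH : Finset α) (hpart : AK ∪ AH = Finset.univ.image a) (hdisj : Disjoint AK AH)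
    (huniq : ∃! m : Finset (Sym2 α), IsPMOn G (Finset.univ \ AK) m) :
    (pmCount G (Finset.univ \ AH) : ℤ) =
      ∑ F ∈ Finset.univ.filter (fun F : Finset (Fin n × Fin n) => IsOneFactor n F),
        (-1 : ℤ) ^ crossingNumber n F *
          ∏ p ∈ F, (pmCount G (symmDiff (Finset.univ \ AK) {a p.1, a p.2}) : ℤ) := by
  have ha : Function.Injective a := List.nodup_ofFn.1 hdist
  have hH : pmCount G (Finset.univ \ AK) = 1 := by
    obtain ⟨m, hm, hu⟩ := huniq
    unfold pmCount
    rw [Nat.card_eq_one_iff_unique]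
    exact ⟨⟨fun x y => Subtype.ext ((hu _ x.2).trans (hu _ y.2).symm)⟩, ⟨⟨m, hm⟩⟩⟩
  have key := pf_main ha hnc (Finset.univ \ AK) hH _ Finset.univ rfl
  have e : symmDiff (Finset.univ \ AK) (Finset.univ.image a) = Finset.univ \ AH := by
    rw [← hpart]
    ext v
    have : v ∈ AK → v ∉ AH := fun h => Finset.disjoint_left.1 hdisj h
    simp only [Finset.mem_symmDiff, Finset.mem_sdiff, Finset.mem_union, Finset.mem_univ, true_and]
    tauto
  rw [e] at key
  rw [key]
  unfold pfOn
  apply Finset.sum_congr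
  · ext F
    simp [OFOn, IsOneFactor]
  · intro F _
    rfl
end

section
/- Let G be a finite simple graph, let n be even, and let A = {a_1,…,a_n} be distinct vertices such that G is noncrossing with respect to the cyclic sequence (a_1,…,a_n). Let H = G−A, and for 1 ≤ i < j ≤ n let H_{ij} be the induced subgraph of G on V(H) ∪ {a_i,a_j}. If H has exactly one perfect matching, then M(G) = Σ_F (−1)^{χ(F)} Π_{{i,j}∈F, i<j} M(H_{ij}), the sum over all partitions F of {1,…,n} into pairs (i.e., M(G) equals the Pfaffian Pf(M(H_{ij}))_{1≤i<j≤n}). -/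
namespace PfCond

open Finset

/-- involution encoding -/
def IsInv {α : Type*} (G : SimpleGraph α) (s : Finset α) (f : α → α) : Prop :=
  (∀ v, v ∉ s → f v = v) ∧ ∀ v ∈ s, f v ∈ s ∧ G.Adj v (f v) ∧ f (f v) = v

lemma IsInv.invol {α : Type*} {G : SimpleGraph α} {s : Finset α} {f : α → α}
    (h : IsInv G s f) (v : α) : f (f v) = v := by
  by_cases hv : v ∈ s
  · exact (h.2 v hv).2.2
  · rw [h.1 v hv, h.1 v hv]

lemma isPMOn_image {α : Type*} [DecidableEq α] {G : SimpleGraph α} {s : Finset α} {f : α → α}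
    (h : IsInv G s f) : IsPMOn G s (s.image fun v => s(v, f v)) := by
  constructor
  · intro e he
    obtain ⟨v, hv, rfl⟩ := Finset.mem_image.1 he
    refine ⟨(h.2 v hv).2.1, ?_⟩
    intro w hw
    rcases Sym2.mem_iff.1 hw with rfl | rfl
    · exact hv
    · exact (h.2 v hv).1
  · intro v hv
    refine ⟨s(v, f v), ⟨Finset.mem_image_of_mem _ hv, Sym2.mem_mk_left _ _⟩, ?_⟩
    rintro e ⟨he, hve⟩
    obtain ⟨w, hw, rfl⟩ := Finset.mem_image.1 he
    rcases Sym2.mem_iff.1 hve with rfl | rfl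
    · rfl
    · rw [(h.2 w hw).2.2, Sym2.eq_swap]

lemma pmCount_eq {α : Type*} [DecidableEq α] (G : SimpleGraph α) (s : Finset α) :
    pmCount G s = Nat.card {f : α → α // IsInv G s f} := by
  symm
  refine Nat.card_congr (Equiv.ofBijective
    (fun f => ⟨s.image fun v => s(v, f.1 v), isPMOn_image f.2⟩) ⟨?_, ?_⟩)
  · rintro ⟨f, hf⟩ ⟨g, hg⟩ hfg
    have h := congrArg Subtype.val hfg
    simp only at h
    apply Subtype.ext
    funext v
    change f v = g v
    by_cases hv : v ∈ s
    · have h1 : s(v, f v) ∈ s.image fun v => s(v, g v) := by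
        rw [← h]; exact Finset.mem_image_of_mem _ hv
      obtain ⟨w, hw, h2⟩ := Finset.mem_image.1 h1
      rcases Sym2.eq_iff.1 h2 with ⟨rfl, h3⟩ | ⟨rfl, h3⟩
      · exact h3.symm
      · rw [← (hg.2 _ hw).2.2, h3]
    · rw [hf.1 v hv, hg.1 v hv]
  · rintro ⟨m, hm⟩
    have key : ∀ v, ∃ w, (v ∉ s → w = v) ∧ (v ∈ s → s(v, w) ∈ m) := by
      intro v
      by_cases hv : v ∈ s
      · obtain ⟨e, ⟨he, hve⟩, -⟩ := hm.2 v hv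
        obtain ⟨w, rfl⟩ := Sym2.mem_iff_exists.1 hve
        exact ⟨w, fun h => absurd hv h, fun _ => he⟩
      · exact ⟨v, fun _ => rfl, fun h => absurd h hv⟩
    choose f hf1 hf2 using key
    have hfs : ∀ v ∈ s, f v ∈ s := fun v hv =>
      (hm.1 _ (hf2 v hv)).2 _ (Sym2.mem_mk_right _ _)
    have hinv : IsInv G s f := by
      refine ⟨hf1, fun v hv => ⟨hfs v hv, (hm.1 _ (hf2 v hv)).1, ?_⟩⟩
      have := (hm.2 (f v) (hfs v hv)).unique ⟨hf2 v hv, Sym2.mem_mk_right _ _⟩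
        ⟨hf2 _ (hfs v hv), Sym2.mem_mk_left _ _⟩
      rw [Sym2.eq_swap] at this
      exact (Sym2.congr_right.1 this).symm
    refine ⟨⟨f, hinv⟩, Subtype.ext ?_⟩
    ext e
    constructor
    · intro he
      obtain ⟨v, hv, rfl⟩ := Finset.mem_image.1 he
      exact hf2 v hv
    · intro he
      induction e using Sym2.ind with
      | _ x y =>
        have hx : x ∈ s := (hm.1 _ he).2 _ (Sym2.mem_mk_left _ _)
        have := (hm.2 x hx).unique ⟨he, Sym2.mem_mk_left _ _⟩
          ⟨hf2 x hx, Sym2.mem_mk_left _ _⟩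
        rw [this]
        exact Finset.mem_image_of_mem _ hx

lemma path_internal {α : Type*} {S : SimpleGraph α} {x y : α} (p : S.Walk x y) (hp : p.IsPath)
    (u : α) (hu : u ∈ p.support) (hx : u ≠ x) (hy : u ≠ y) :
    ∃ v w, v ≠ w ∧ v ∈ p.support ∧ w ∈ p.support ∧ S.Adj u v ∧ S.Adj u w := by
  induction p with
  | nil => simp at hu; exact absurd hu hx
  | @cons x x' y h q ih =>
    rw [SimpleGraph.Walk.cons_isPath_iff] at hp
    rw [SimpleGraph.Walk.support_cons] at hu
    have hu' : u ∈ q.support := by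
      rcases List.mem_cons.1 hu with h1 | h1
      · exact absurd h1 hx
      · exact h1
    by_cases hux : u = x'
    · subst hux
      cases q with
      | nil => exact absurd rfl hy
      | @cons _ z _ h' q' =>
        refine ⟨x, z, ?_, by simp, by simp, h.symm, h'⟩
        rintro rfl
        exact hp.2 (by simp)
    · obtain ⟨v, w, h1, h2, h3, h4, h5⟩ := ih hp.1 hu' hux hy
      exact ⟨v, w, h1, by simp [h2], by simp [h3], h4, h5⟩

lemma path_start {α : Type*} {S : SimpleGraph α} {x y : α} (p : S.Walk x y) (hxy : x ≠ y) :
    ∃ v ∈ p.support, S.Adj x v := by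
  cases p with
  | nil => exact absurd rfl hxy
  | @cons _ z _ h' q' => exact ⟨z, by simp, h'⟩

/-- superposition graph -/
def sup {α : Type*} (f g : α → α) : SimpleGraph α :=
  SimpleGraph.fromRel fun x y => f x = y ∨ g x = y

lemma sup_adj {α : Type*} {f g : α → α} (hf : ∀ x, f (f x) = x) (hg : ∀ x, g (g x) = x)
    (x y : α) : (sup f g).Adj x y ↔ x ≠ y ∧ (f x = y ∨ g x = y) := by
  unfold sup
  rw [SimpleGraph.fromRel_adj]
  constructor
  · rintro ⟨h, (h1 | h1) | (h1 | h1)⟩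
    · exact ⟨h, Or.inl h1⟩
    · exact ⟨h, Or.inr h1⟩
    · exact ⟨h, Or.inl (by rw [← h1, hf])⟩
    · exact ⟨h, Or.inr (by rw [← h1, hg])⟩
  · rintro ⟨h, h1⟩
    exact ⟨h, Or.inl h1⟩

/-- at most one other endpoint -/
lemma endpoint_unique {α : Type*} {f g : α → α} (hf : ∀ x, f (f x) = x) (hg : ∀ x, g (g x) = x)
    {x y z : α} (hx : f x = x ∨ g x = x) (hy : f y = y ∨ g y = y) (hz : f z = z ∨ g z = z)
    (hxy : x ≠ y) (hxz : x ≠ z)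
    (h1 : (sup f g).Reachable x y) (h2 : (sup f g).Reachable x z) : y = z := by
  classical
  by_contra hyz
  obtain ⟨p, hp⟩ := h1.exists_isPath
  have deg1 : ∀ u, (f u = u ∨ g u = u) → ∀ v w, (sup f g).Adj u v → (sup f g).Adj u w → v = w := by
    intro u hu v w hv hw
    rw [sup_adj hf hg] at hv hw
    grind
  have closed : ∀ u ∈ p.support, ∀ w, (sup f g).Adj u w → w ∈ p.support := by
    intro u hu w hw
    by_cases hux : u = x
    · subst hux
      obtain ⟨v, hv, hv'⟩ := path_start p hxy
      rwa [deg1 _ hx w v hw hv']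
    · by_cases huy : u = y
      · subst huy
        obtain ⟨v, hv, hv'⟩ := path_start p.reverse hux
        rw [deg1 _ hy w v hw hv']
        simpa using hv
      · obtain ⟨v, w', h3, h4, h5, h6, h7⟩ := path_internal p hp u hu hux huy
        rw [sup_adj hf hg] at h6 h7 hw
        grind
  have hall : ∀ w, (sup f g).Reachable x w → w ∈ p.support := by
    rintro w ⟨q⟩
    have : ∀ (u v : α) (q : (sup f g).Walk u v), u ∈ p.support → v ∈ p.support := by
      intro u v q
      induction q with
      | nil => exact id
      | cons h q ih => intro hu; exact ih (closed _ hu _ h)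
    exact this _ _ q (by simp)
  obtain ⟨v, w, h3, -, -, h6, h7⟩ :=
    path_internal p hp z (hall z h2) (Ne.symm hxz) (Ne.symm hyz)
  exact h3 (deg1 _ hz _ _ h6 h7)

lemma inv_parity {β : Type*} [DecidableEq β] (C : Finset β) (f : β → β)
    (hf : ∀ x ∈ C, f (f x) = x) (hC : ∀ x ∈ C, f x ∈ C) :
    (C.card : ZMod 2) = ((C.filter fun x => f x = x).card : ZMod 2) := by
  have h1 : ∑ x ∈ C.filter (fun x => ¬ f x = x), (1 : ZMod 2) = 0 := by
    refine Finset.sum_involution (fun x _ => f x) ?_ ?_ ?_ ?_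
    · intros; decide
    · intro x hx _; exact (Finset.mem_filter.1 hx).2
    · intro x hx
      rw [Finset.mem_filter] at hx ⊢
      refine ⟨hC x hx.1, ?_⟩
      rw [hf x hx.1]
      exact fun h => hx.2 h.symm
    · intro x hx; exact hf x (Finset.mem_filter.1 hx).1
  have h2 := Finset.card_filter_add_card_filter_not (s := C) (fun x => f x = x)
  rw [← h2]
  push_cast
  rw [Finset.sum_const, nsmul_eq_mul, mul_one] at h1
  rw [h1, add_zero]

lemma reach_step {α : Type*} {f g : α → α} (hf : ∀ x, f (f x) = x) (hg : ∀ x, g (g x) = x)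
    {x y : α} (h : (sup f g).Reachable x y) :
    (sup f g).Reachable x (f y) ∧ (sup f g).Reachable x (g y) := by
  constructor
  · by_cases h1 : y = f y
    · rw [← h1]; exact h
    · exact h.trans (SimpleGraph.Adj.reachable ((sup_adj hf hg _ _).2 ⟨h1, Or.inl rfl⟩))
  · by_cases h1 : y = g y
    · rw [← h1]; exact h
    · exact h.trans (SimpleGraph.Adj.reachable ((sup_adj hf hg _ _).2 ⟨h1, Or.inr rfl⟩))

/-- existence of another endpoint -/
lemma endpoint_exists {α : Type*} [Fintype α] {f g : α → α} (hf : ∀ x, f (f x) = x)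
    (hg : ∀ x, g (g x) = x) {x : α} (hx : (f x = x ∧ g x ≠ x) ∨ (g x = x ∧ f x ≠ x)) :
    ∃ y, y ≠ x ∧ (sup f g).Reachable x y ∧ (f y = y ∨ g y = y) := by
  classical
  by_contra! hcon
  let C : Finset α := Finset.univ.filter fun y => (sup f g).Reachable x y
  have hC : ∀ y, y ∈ C ↔ (sup f g).Reachable x y := by intro y; simp [C]
  have h1 := inv_parity C f (fun y _ => hf y)
    (fun y hy => (hC _).2 (reach_step hf hg ((hC _).1 hy)).1)
  have h2 := inv_parity C g (fun y _ => hg y)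
    (fun y hy => (hC _).2 (reach_step hf hg ((hC _).1 hy)).2)
  have hxC : x ∈ C := (hC _).2 (SimpleGraph.Reachable.refl _)
  have e : ∀ k : α → α, k x = x → (∀ y, y ≠ x → (sup f g).Reachable x y → k y ≠ y) →
      C.filter (fun y => k y = y) = {x} := by
    intro k hk hk'
    ext y
    simp only [Finset.mem_filter, Finset.mem_singleton, hC]
    constructor
    · rintro ⟨h3, h4⟩
      by_contra h5
      exact hk' y h5 h3 h4
    · rintro rfl; exact ⟨SimpleGraph.Reachable.refl _, hk⟩
  have e' : ∀ k : α → α, k x ≠ x → (∀ y, y ≠ x → (sup f g).Reachable x y → k y ≠ y) →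
      C.filter (fun y => k y = y) = ∅ := by
    intro k hk hk'
    ext y
    simp only [Finset.mem_filter, Finset.notMem_empty, hC, iff_false]
    rintro ⟨h3, h4⟩
    by_cases h5 : y = x
    · subst h5; exact hk h4
    · exact hk' y h5 h3 h4
  have kf : ∀ y, y ≠ x → (sup f g).Reachable x y → f y ≠ y := fun y h3 h4 => (hcon y h3 h4).1
  have kg : ∀ y, y ≠ x → (sup f g).Reachable x y → g y ≠ y := fun y h3 h4 => (hcon y h3 h4).2
  rcases hx with ⟨h3, h4⟩ | ⟨h3, h4⟩
  · rw [e f h3 kf] at h1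
    rw [e' g h4 kg, h1] at h2
    revert h2; simp
  · rw [e' f h4 kf] at h1
    rw [e g h3 kg, h1] at h2
    revert h2; simp

/-- domain -/
def dom {α : Type*} [Fintype α] [DecidableEq α] {n : ℕ} (a : Fin n → α) (T : Finset (Fin n)) :
    Finset α := (Finset.univ \ Finset.univ.image a) ∪ T.image a

lemma mem_dom {α : Type*} [Fintype α] [DecidableEq α] {n : ℕ} {a : Fin n → α}
    (ha : Function.Injective a) (T : Finset (Fin n)) (x : α) :
    x ∈ dom a T ↔ ∀ k, a k = x → k ∈ T := by
  unfold dom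
  simp only [Finset.mem_union, Finset.mem_sdiff, Finset.mem_univ, Finset.mem_image, true_and,
    not_exists]
  constructor
  · rintro (h | ⟨k, hk, rfl⟩) k' hk'
    · exact absurd hk' (h k')
    · rw [ha hk']; exact hk
  · intro h
    by_cases h1 : ∃ k, a k = x
    · obtain ⟨k, hk⟩ := h1
      exact Or.inr ⟨k, h k hk, hk⟩
    · exact Or.inl (not_exists.1 h1)

lemma IsInv.fix_iff {α : Type*} {G : SimpleGraph α} {s : Finset α} {f : α → α}
    (h : IsInv G s f) (v : α) : f v = v ↔ v ∉ s := by
  constructor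
  · intro h1 h2
    have := (h.2 v h2).2.1
    rw [h1] at this
    exact G.loopless.irrefl _ this
  · exact h.1 v

lemma sup_le {α : Type*} {G : SimpleGraph α} {s t : Finset α} {f g : α → α}
    (hf : IsInv G s f) (hg : IsInv G t g) : sup f g ≤ G := by
  intro x y hxy
  rw [sup_adj hf.invol hg.invol] at hxy
  obtain ⟨h, rfl | rfl⟩ := hxy
  · have : x ∈ s := by
      by_contra h1
      exact h (hf.1 x h1).symm
    exact (hf.2 x this).2.1
  · have : x ∈ t := by
      by_contra h1
      exact h (hg.1 x h1).symm
    exact (hg.2 x this).2.1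

lemma reach_isolated {α : Type*} {f g : α → α} (hf : ∀ x, f (f x) = x) (hg : ∀ x, g (g x) = x)
    {x y : α} (h : (sup f g).Reachable x y) (h1 : f y = y) (h2 : g y = y) : x = y := by
  obtain ⟨p⟩ := h.symm
  by_contra hne
  obtain ⟨v, -, hv⟩ := path_start p (Ne.symm hne)
  rw [sup_adj hf hg] at hv
  grind

section
variable {α : Type*} [Fintype α] [DecidableEq α] {n : ℕ} {a : Fin n → α} {G : SimpleGraph α}
  {I T : Finset (Fin n)} {f g : α → α}

lemma fixed_a (ha : Function.Injective a) (hf : IsInv G (dom a T) f)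
    (hg : IsInv G (dom a (I \ T)) g) (k : Fin n) : f (a k) = a k ∨ g (a k) = a k := by
  rw [hf.fix_iff, hg.fix_iff, mem_dom ha, mem_dom ha]
  by_cases hk : k ∈ T
  · right
    intro h
    have := h k rfl
    simp [hk] at this
  · left
    intro h
    exact hk (h k rfl)

lemma reach_mem (ha : Function.Injective a) (hT : T ⊆ I) (hf : IsInv G (dom a T) f)
    (hg : IsInv G (dom a (I \ T)) g) {j k : Fin n} (hj : j ∈ I)
    (h : (sup f g).Reachable (a j) (a k)) : k ∈ I := by
  by_contra hk
  have h1 : f (a k) = a k := by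
    rw [hf.fix_iff, mem_dom ha]
    intro h1
    exact hk (hT (h1 k rfl))
  have h2 : g (a k) = a k := by
    rw [hg.fix_iff, mem_dom ha]
    intro h1
    exact hk (Finset.mem_sdiff.1 (h1 k rfl)).1
  have := ha (reach_isolated hf.invol hg.invol h h1 h2)
  exact hk (this ▸ hj)

lemma partner_exists (ha : Function.Injective a) (hT : T ⊆ I) (hf : IsInv G (dom a T) f)
    (hg : IsInv G (dom a (I \ T)) g) {j : Fin n} (hj : j ∈ I) :
    ∃ l, l ≠ j ∧ (sup f g).Reachable (a j) (a l) := by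
  have hx : (f (a j) = a j ∧ g (a j) ≠ a j) ∨ (g (a j) = a j ∧ f (a j) ≠ a j) := by
    simp only [ne_eq]
    rw [hf.fix_iff, hg.fix_iff, mem_dom ha, mem_dom ha]
    by_cases hjT : j ∈ T
    · right
      refine ⟨fun h => ?_, fun h => h fun k hk => ?_⟩
      · have := h j rfl
        simp [hjT] at this
      · rw [ha hk]; exact hjT
    · left
      refine ⟨fun h => hjT (h j rfl), fun h => h fun k hk => ?_⟩
      rw [ha hk]; simp [hj, hjT]
  obtain ⟨y, h1, h2, h3⟩ := endpoint_exists hf.invol hg.invol hx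
  have : ∃ l, a l = y := by
    by_contra! hcon
    rw [hf.fix_iff, hg.fix_iff, mem_dom ha, mem_dom ha] at h3
    rcases h3 with h3 | h3
    · exact h3 fun k hk => absurd hk (hcon k)
    · exact h3 fun k hk => absurd hk (hcon k)
  obtain ⟨l, rfl⟩ := this
  exact ⟨l, fun h => h1 (by rw [h]), h2⟩

lemma partner_unique (ha : Function.Injective a) (hf : IsInv G (dom a T) f)
    (hg : IsInv G (dom a (I \ T)) g) {j l l' : Fin n} (h1 : l ≠ j) (h2 : l' ≠ j)
    (h3 : (sup f g).Reachable (a j) (a l)) (h4 : (sup f g).Reachable (a j) (a l')) : l = l' :=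
  ha (endpoint_unique hf.invol hg.invol (fixed_a ha hf hg j) (fixed_a ha hf hg l)
    (fixed_a ha hf hg l') (fun h => h1 (ha h).symm) (fun h => h2 (ha h).symm) h3 h4)

/-- noncrossing in indexed form -/
def NC (G : SimpleGraph α) (a : Fin n → α) : Prop :=
  ∀ i j k l : Fin n, i < j → j < k → k < l →
    ¬ DisjointPaths G (Set.range a) (a i) (a k) (a j) (a l)

lemma nc_of (h : NoncrossingList G (List.ofFn a)) : NC G a := by
  intro i j k l h1 h2 h3 h4
  have e : n = (List.ofFn a).length := by simp
  refine h (Fin.cast e i) (Fin.cast e j) (Fin.cast e k) (Fin.cast e l) h1 h2 h3 ?_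
  have : {x | x ∈ List.ofFn a} = Set.range a := by
    ext x; simp [List.mem_ofFn]
  rw [this]
  simpa using h4

lemma no_cross (hnc : NC G a) (ha : Function.Injective a) (hf : IsInv G (dom a T) f)
    (hg : IsInv G (dom a (I \ T)) g) {i j k l : Fin n} (h1 : i < j) (h2 : j < k) (h3 : k < l)
    (h4 : (sup f g).Reachable (a i) (a k)) (h5 : (sup f g).Reachable (a j) (a l)) : False := by
  have key : ∀ x y : Fin n, (sup f g).Reachable (a x) (a y) →
      ∃ p : G.Walk (a x) (a y), p.IsPath ∧ (∀ u ∈ p.support, (sup f g).Reachable (a x) u) ∧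
      (∀ u ∈ p.support, u ≠ a x → u ≠ a y → u ∉ Set.range a) := by
    intro x y hxy
    obtain ⟨p, hp⟩ := hxy.exists_isPath
    refine ⟨p.mapLe (sup_le hf hg), ?_, ?_, ?_⟩
    · simpa using hp
    · intro u hu
      have hu : u ∈ p.support := by simpa using hu
      exact ⟨p.takeUntil u hu⟩
    · intro u hu hux huy
      have hu : u ∈ p.support := by simpa using hu
      obtain ⟨v, w, h6, -, -, h7, h8⟩ := path_internal p hp u hu hux huy
      rintro ⟨k, rfl⟩
      have := fixed_a ha hf hg k
      rw [sup_adj hf.invol hg.invol] at h7 h8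
      grind
  obtain ⟨p, hp, hp1, hp2⟩ := key _ _ h4
  obtain ⟨q, hq, hq1, hq2⟩ := key _ _ h5
  refine hnc i j k l h1 h2 h3 ⟨p, q, hp, hq, ?_, hp2, hq2⟩
  intro u hu hu'
  have h6 : (sup f g).Reachable (a i) (a j) := (hp1 u hu).trans (hq1 u hu').symm
  exact h2.ne' (partner_unique ha hf hg (h1.trans h2).ne' h1.ne' h4 h6)

lemma between_even (hnc : NC G a) (ha : Function.Injective a) (hT : T ⊆ I)
    (hf : IsInv G (dom a T) f)
    (hg : IsInv G (dom a (I \ T)) g) {j l : Fin n} (hjl : j < l) (hj : j ∈ I)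
    (h : (sup f g).Reachable (a j) (a l)) :
    Even (I.filter fun k => j < k ∧ k < l).card := by
  classical
  have hex : ∀ k : Fin n, ∃ l, k ∈ I → (l ≠ k ∧ (sup f g).Reachable (a k) (a l)) := by
    intro k
    by_cases hk : k ∈ I
    · obtain ⟨l, hl⟩ := partner_exists ha hT hf hg hk
      exact ⟨l, fun _ => hl⟩
    · exact ⟨k, fun h => absurd h hk⟩
  choose P hP using hex
  have hPI : ∀ k ∈ I, P k ∈ I := fun k hk => reach_mem ha hT hf hg hk (hP k hk).2
  have hPP : ∀ k ∈ I, P (P k) = k := fun k hk =>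
    partner_unique ha hf hg (hP _ (hPI k hk)).1 (hP k hk).1.symm (hP _ (hPI k hk)).2
      (hP k hk).2.symm
  have h1 := inv_parity (I.filter fun k => j < k ∧ k < l) P
    (fun k hk => hPP k (Finset.mem_filter.1 hk).1) (by
      intro k hk
      obtain ⟨hk, h2, h3⟩ := Finset.mem_filter.1 hk
      refine Finset.mem_filter.2 ⟨hPI k hk, ?_, ?_⟩
      · by_contra h4
        rcases (not_lt.1 h4).lt_or_eq with h5 | h5
        · exact no_cross hnc ha hf hg h5 h2 h3 (hP k hk).2.symm h
        · have := (hP k hk).2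
          rw [h5] at this
          exact h3.ne (partner_unique ha hf hg h2.ne' hjl.ne' this.symm h)
      · by_contra h4
        rcases (not_lt.1 h4).lt_or_eq with h5 | h5
        · exact no_cross hnc ha hf hg h2 h3 h5 h (hP k hk).2
        · have := (hP k hk).2
          rw [← h5] at this
          exact h3.ne (partner_unique ha hf hg h2.ne' hjl.ne' (h.trans this.symm) h))
  have h2 : (I.filter fun k => j < k ∧ k < l).filter (fun x => P x = x) = ∅ := by
    rw [Finset.filter_eq_empty_iff]
    intro k hk
    exact (hP k (Finset.mem_filter.1 hk).1).1
  rw [h2, Finset.card_empty, Nat.cast_zero] at h1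
  exact (ZMod.natCast_eq_zero_iff_even).1 h1

/-- sign of position -/
def sgn (I : Finset (Fin n)) (j : Fin n) : ℤ := (-1) ^ (I.filter fun k => k < j).card

lemma sgn_lt {j l : Fin n} (hjl : j < l) (hj : j ∈ I)
    (h : Even (I.filter fun k => j < k ∧ k < l).card) : sgn I j + sgn I l = 0 := by
  have : (I.filter fun k => k < l).card =
      (I.filter fun k => k < j).card + 1 + (I.filter fun k => j < k ∧ k < l).card := by
    have e : (I.filter fun k => k < l) =
      insert j (I.filter fun k => k < j) ∪ (I.filter fun k => j < k ∧ k < l) := by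
      ext k
      simp only [Finset.mem_filter, Finset.mem_union, Finset.mem_insert]
      grind
    rw [e, Finset.card_union_of_disjoint, Finset.card_insert_of_notMem]
    · simp
    · rw [Finset.disjoint_left]
      intro k
      simp only [Finset.mem_filter, Finset.mem_insert]
      grind
  unfold sgn
  rw [this, pow_add, pow_add, h.neg_one_pow]
  ring

lemma sgn_partner (hnc : NC G a) (ha : Function.Injective a) (hT : T ⊆ I)
    (hf : IsInv G (dom a T) f)
    (hg : IsInv G (dom a (I \ T)) g) {j l : Fin n} (hjl : l ≠ j) (hj : j ∈ I)
    (h : (sup f g).Reachable (a j) (a l)) : sgn I j + sgn I l = 0 := by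
  rcases lt_or_gt_of_ne hjl with h1 | h1
  · rw [add_comm]
    have hl := reach_mem ha hT hf hg hj h
    exact sgn_lt h1 hl (between_even hnc ha hT hf hg h1 hl h.symm)
  · exact sgn_lt h1 hj (between_even hnc ha hT hf hg h1 hj h)

end

open Classical in
/-- swap on a set -/
noncomputable def swp {α : Type*} (C : Set α) (f g : α → α) : α → α :=
  fun x => if x ∈ C then g x else f x

lemma swp_swp {α : Type*} (C : Set α) (f g : α → α) : swp C (swp C f g) (swp C g f) = f := by
  funext x
  unfold swp
  by_cases h : x ∈ C <;> simp [h]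

lemma sup_swp {α : Type*} (C : Set α) (f g : α → α) :
    sup (swp C f g) (swp C g f) = sup f g := by
  unfold sup
  congr 1
  funext x y
  unfold swp
  by_cases h : x ∈ C <;> simp [h, or_comm]

lemma isInv_swp {α : Type*} {G : SimpleGraph α} {s t u : Finset α} {f g : α → α} {C : Set α}
    (hf : IsInv G s f) (hg : IsInv G t g) (hCf : ∀ x ∈ C, f x ∈ C) (hCg : ∀ x ∈ C, g x ∈ C)
    (h1 : ∀ x ∈ C, (x ∈ u ↔ x ∈ t)) (h2 : ∀ x, x ∉ C → (x ∈ u ↔ x ∈ s)) :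
    IsInv G u (swp C f g) := by
  unfold swp
  constructor
  · intro v hv
    by_cases h : v ∈ C
    · simp only [h, if_true]
      exact hg.1 v (fun h' => hv ((h1 v h).2 h'))
    · simp only [h, if_false]
      exact hf.1 v (fun h' => hv ((h2 v h).2 h'))
  · intro v hv
    by_cases h : v ∈ C
    · have h3 := hg.2 v ((h1 v h).1 hv)
      simp only [h, hCg v h, if_true]
      exact ⟨(h1 _ (hCg v h)).2 h3.1, h3.2⟩
    · have h3 := hf.2 v ((h2 v h).1 hv)
      have h4 : f v ∉ C := fun h5 => h (by have := hCf _ h5; rwa [h3.2.2] at this)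
      simp only [h, h4, if_false]
      exact ⟨(h2 _ h4).2 h3.1, h3.2⟩

section
variable {α : Type*} [Fintype α] [DecidableEq α] {n : ℕ} {a : Fin n → α} {G : SimpleGraph α}
  {I T : Finset (Fin n)} {f g : α → α}

/-- toggle set -/
def tog (i j : Fin n) : Finset (Fin n) := symmDiff {i} {j}

lemma mem_tog (i j k : Fin n) : k ∈ tog i j ↔ (k = i ∧ k ≠ j) ∨ (k = j ∧ k ≠ i) := by
  simp [tog, Finset.mem_symmDiff]

lemma tog_sub {i j : Fin n} (hi : i ∈ I) (hj : j ∈ I) : tog i j ⊆ I := by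
  intro k hk
  rw [mem_tog] at hk
  grind

lemma swp_valid (ha : Function.Injective a) {i j l : Fin n} (hi : i ∈ I) (hj : j ∈ I)
    (hf : IsInv G (dom a (tog i j)) f) (hg : IsInv G (dom a (I \ tog i j)) g)
    (hlj : l ≠ j) (hl : (sup f g).Reachable (a j) (a l)) :
    IsInv G (dom a (tog i l)) (swp {x | (sup f g).Reachable (a j) x} f g) ∧
    IsInv G (dom a (I \ tog i l)) (swp {x | (sup f g).Reachable (a j) x} g f) := by
  have hT := tog_sub hi hj
  have hCf : ∀ x ∈ {x | (sup f g).Reachable (a j) x}, f x ∈ {x | (sup f g).Reachable (a j) x} :=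
    fun x hx => (reach_step hf.invol hg.invol hx).1
  have hCg : ∀ x ∈ {x | (sup f g).Reachable (a j) x}, g x ∈ {x | (sup f g).Reachable (a j) x} :=
    fun x hx => (reach_step hf.invol hg.invol hx).2
  have hlI := reach_mem ha hT hf hg hj hl
  have hin : ∀ k, (sup f g).Reachable (a j) (a k) → k ∈ I ∧ (k = j ∨ k = l) := by
    intro k hk
    refine ⟨reach_mem ha hT hf hg hj hk, ?_⟩
    by_cases h : k = j
    · exact Or.inl h
    · exact Or.inr (partner_unique ha hf hg h hlj hk hl)
  have hout : ∀ k, ¬ (sup f g).Reachable (a j) (a k) → k ≠ j ∧ k ≠ l := by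
    intro k hk
    constructor
    · rintro rfl; exact hk (SimpleGraph.Reachable.refl _)
    · rintro rfl; exact hk hl
  constructor
  · refine isInv_swp hf hg hCf hCg ?_ ?_
    · intro x hx
      rw [mem_dom ha, mem_dom ha]
      refine forall_congr' fun k => imp_congr_right ?_
      rintro rfl
      have := hin k hx
      rw [Finset.mem_sdiff, mem_tog, mem_tog]
      grind
    · intro x hx
      rw [mem_dom ha, mem_dom ha]
      refine forall_congr' fun k => imp_congr_right ?_
      rintro rfl
      have := hout k hx
      rw [mem_tog, mem_tog]
      grind
  · refine isInv_swp hg hf hCg hCf ?_ ?_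
    · intro x hx
      rw [mem_dom ha, mem_dom ha]
      refine forall_congr' fun k => imp_congr_right ?_
      rintro rfl
      have := hin k hx
      rw [Finset.mem_sdiff, mem_tog, mem_tog]
      grind
    · intro x hx
      rw [mem_dom ha, mem_dom ha]
      refine forall_congr' fun k => imp_congr_right ?_
      rintro rfl
      have := hout k hx
      rw [Finset.mem_sdiff, Finset.mem_sdiff, mem_tog, mem_tog]
      grind

open Classical in
/-- partner function -/
noncomputable def ptn (a : Fin n → α) (S : SimpleGraph α) (j : Fin n) : Fin n :=
  if h : ∃ l, l ≠ j ∧ S.Reachable (a j) (a l) then h.choose else j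

open Classical in
/-- finset of matchings -/
noncomputable def PM (G : SimpleGraph α) (s : Finset α) : Finset (α → α) :=
  Finset.univ.filter fun f => IsInv G s f

lemma mem_PM {s : Finset α} : f ∈ PM G s ↔ IsInv G s f := by simp [PM]

lemma card_PM (s : Finset α) : (PM G s).card = pmCount G s := by
  classical
  rw [pmCount_eq, Nat.card_eq_fintype_card, Fintype.card_subtype, PM]

/-- the involution -/
noncomputable def ivl (a : Fin n → α) (z : Σ _ : Fin n, (α → α) × (α → α)) :
    Σ _ : Fin n, (α → α) × (α → α) :=
  ⟨ptn a (sup z.2.1 z.2.2) z.1,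
    (swp {x | (sup z.2.1 z.2.2).Reachable (a z.1) x} z.2.1 z.2.2,
     swp {x | (sup z.2.1 z.2.2).Reachable (a z.1) x} z.2.2 z.2.1)⟩

lemma sum_zero (hnc : NC G a) (ha : Function.Injective a) {i : Fin n} (hi : i ∈ I) :
    ∑ j ∈ I, sgn I j * ((pmCount G (dom a (tog i j)) : ℤ) * pmCount G (dom a (I \ tog i j))) = 0 := by
  have h1 : ∀ j ∈ I,
      sgn I j * ((pmCount G (dom a (tog i j)) : ℤ) * pmCount G (dom a (I \ tog i j))) =
      ∑ q ∈ PM G (dom a (tog i j)) ×ˢ PM G (dom a (I \ tog i j)), sgn I j := by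
    intro j _
    rw [Finset.sum_const, Finset.card_product, card_PM, card_PM, nsmul_eq_mul]
    push_cast
    ring
  rw [Finset.sum_congr rfl h1, Finset.sum_sigma']
  have hp : ∀ z ∈ I.sigma (fun j => PM G (dom a (tog i j)) ×ˢ PM G (dom a (I \ tog i j))),
      z.1 ∈ I ∧ IsInv G (dom a (tog i z.1)) z.2.1 ∧ IsInv G (dom a (I \ tog i z.1)) z.2.2 ∧
      ptn a (sup z.2.1 z.2.2) z.1 ≠ z.1 ∧
      (sup z.2.1 z.2.2).Reachable (a z.1) (a (ptn a (sup z.2.1 z.2.2) z.1)) := by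
    intro z hz
    rw [Finset.mem_sigma, Finset.mem_product, mem_PM, mem_PM] at hz
    obtain ⟨hj, hf, hg⟩ := hz
    have hex := partner_exists ha (tog_sub hi hj) hf hg hj
    refine ⟨hj, hf, hg, ?_⟩
    unfold ptn
    rw [dif_pos hex]
    exact hex.choose_spec
  have hmem : ∀ z ∈ I.sigma (fun j => PM G (dom a (tog i j)) ×ˢ PM G (dom a (I \ tog i j))),
      ivl a z ∈ I.sigma (fun j => PM G (dom a (tog i j)) ×ˢ PM G (dom a (I \ tog i j))) := by
    intro z hz
    obtain ⟨hj, hf, hg, h2, h3⟩ := hp z hz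
    rw [Finset.mem_sigma, Finset.mem_product, mem_PM, mem_PM]
    exact ⟨reach_mem ha (tog_sub hi hj) hf hg hj h3, swp_valid ha hi hj hf hg h2 h3⟩
  refine Finset.sum_involution (fun z _ => ivl a z) ?_ ?_ hmem ?_
  · intro z hz
    obtain ⟨hj, hf, hg, h2, h3⟩ := hp z hz
    exact sgn_partner hnc ha (tog_sub hi hj) hf hg h2 hj h3
  · intro z hz _ h
    obtain ⟨hj, hf, hg, h2, h3⟩ := hp z hz
    exact h2 (congrArg Sigma.fst h)
  · intro z hz
    obtain ⟨hj, hf, hg, h2, h3⟩ := hp z hz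
    obtain ⟨-, -, -, h4, h5⟩ := hp _ (hmem z hz)
    obtain ⟨j, f, g⟩ := z
    simp only [ivl, sup_swp] at *
    have hC : {x | (sup f g).Reachable (a (ptn a (sup f g) j)) x} =
        {x | (sup f g).Reachable (a j) x} := by
      ext x
      exact ⟨fun h => h3.trans h, fun h => h3.symm.trans h⟩
    rw [hC, swp_swp, swp_swp, partner_unique ha hf hg h4 h2.symm h5 h3.symm]

end

section
variable {n : ℕ}

/-- one-factor on index set -/
def OF (I : Finset (Fin n)) (F : Finset (Fin n × Fin n)) : Prop :=
  (∀ p ∈ F, p.1 < p.2 ∧ p.1 ∈ I ∧ p.2 ∈ I) ∧ ∀ v ∈ I, ∃! p, p ∈ F ∧ (v = p.1 ∨ v = p.2)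

open Classical in
/-- Pfaffian -/
noncomputable def Pf (x : Fin n × Fin n → ℤ) (I : Finset (Fin n)) : ℤ :=
  ∑ F ∈ Finset.univ.filter (fun F => OF I F), (-1 : ℤ) ^ crossingNumber n F * ∏ p ∈ F, x p

lemma Pf_empty (x : Fin n × Fin n → ℤ) : Pf x ∅ = 1 := by
  classical
  unfold Pf
  have : Finset.univ.filter (fun F : Finset (Fin n × Fin n) => OF ∅ F) = {∅} := by
    ext F
    simp only [Finset.mem_filter, Finset.mem_univ, true_and, Finset.mem_singleton]
    constructor
    · intro h
      rw [Finset.eq_empty_iff_forall_notMem]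
      intro p hp
      have := (h.1 p hp).2.1
      simp at this
    · rintro rfl
      simp [OF]
  rw [this]
  simp [crossingNumber]

lemma OF_erase {I : Finset (Fin n)} {F : Finset (Fin n × Fin n)} {i j : Fin n}
    (h : OF I F) (hij : (i, j) ∈ F) : OF (I \ {i, j}) (F.erase (i, j)) := by
  obtain ⟨h1, h2⟩ := h
  have hij' := h1 _ hij
  constructor
  · intro p hp
    obtain ⟨hp1, hp2⟩ := Finset.mem_erase.1 hp
    obtain ⟨h3, h4, h5⟩ := h1 p hp2
    have h6 : ∀ v, (v = i ∨ v = j) → ¬ (v = p.1 ∨ v = p.2) := by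
      intro v hv hv'
      have hvI : v ∈ I := by rcases hv with rfl | rfl; exacts [hij'.2.1, hij'.2.2]
      exact hp1 ((h2 v hvI).unique ⟨hp2, hv'⟩ ⟨hij, hv⟩)
    refine ⟨h3, ?_, ?_⟩
    · simp only [Finset.mem_sdiff, Finset.mem_insert, Finset.mem_singleton]
      exact ⟨h4, fun h => h6 _ h (Or.inl rfl)⟩
    · simp only [Finset.mem_sdiff, Finset.mem_insert, Finset.mem_singleton]
      exact ⟨h5, fun h => h6 _ h (Or.inr rfl)⟩
  · intro v hv
    simp only [Finset.mem_sdiff, Finset.mem_insert, Finset.mem_singleton] at hv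
    obtain ⟨p, ⟨hp, hp'⟩, hu⟩ := h2 v hv.1
    refine ⟨p, ⟨Finset.mem_erase.2 ⟨?_, hp⟩, hp'⟩, fun q hq =>
      hu q ⟨(Finset.mem_erase.1 hq.1).2, hq.2⟩⟩
    rintro rfl
    exact hv.2 hp'

lemma OF_insert {I : Finset (Fin n)} {F : Finset (Fin n × Fin n)} {i j : Fin n}
    (hi : i ∈ I) (hj : j ∈ I) (hij : i < j)
    (h : OF (I \ {i, j}) F) : OF I (insert (i, j) F) := by
  obtain ⟨h1, h2⟩ := h
  simp only [Finset.mem_sdiff, Finset.mem_insert, Finset.mem_singleton] at h1 h2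
  constructor
  · intro p hp
    rcases Finset.mem_insert.1 hp with rfl | hp
    · exact ⟨hij, hi, hj⟩
    · exact ⟨(h1 p hp).1, (h1 p hp).2.1.1, (h1 p hp).2.2.1⟩
  · intro v hv
    by_cases hvij : v = i ∨ v = j
    · refine ⟨(i, j), ⟨Finset.mem_insert_self _ _, hvij⟩, ?_⟩
      rintro q ⟨hq, hq'⟩
      rcases Finset.mem_insert.1 hq with rfl | hq
      · rfl
      · have := h1 q hq
        grind
    · obtain ⟨p, ⟨hp, hp'⟩, hu⟩ := h2 v ⟨hv, hvij⟩
      refine ⟨p, ⟨Finset.mem_insert_of_mem hp, hp'⟩, ?_⟩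
      rintro q ⟨hq, hq'⟩
      rcases Finset.mem_insert.1 hq with rfl | hq
      · exact absurd hq' hvij
      · exact hu q ⟨hq, hq'⟩

lemma cross_insert {I : Finset (Fin n)} {F : Finset (Fin n × Fin n)} {i j : Fin n}
    (hmin : ∀ k ∈ I, i ≤ k) (h : OF (I \ {i, j}) F) :
    crossingNumber n (insert (i, j) F) =
      crossingNumber n F + (F.filter fun p => p.1 < j ∧ j < p.2).card := by
  have hF : ∀ p ∈ F, i < p.1 ∧ p.1 < p.2 := by
    intro p hp
    have := h.1 p hp
    simp only [Finset.mem_sdiff, Finset.mem_insert, Finset.mem_singleton] at this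
    exact ⟨lt_of_le_of_ne (hmin _ this.2.1.1) (fun h => this.2.1.2 (Or.inl h.symm)), this.1⟩
  unfold crossingNumber
  have e : ((insert (i, j) F) ×ˢ (insert (i, j) F)).filter
      (fun q => q.1.1 < q.2.1 ∧ q.2.1 < q.1.2 ∧ q.1.2 < q.2.2) =
      ((F ×ˢ F).filter (fun q => q.1.1 < q.2.1 ∧ q.2.1 < q.1.2 ∧ q.1.2 < q.2.2)) ∪
      (F.filter fun p => p.1 < j ∧ j < p.2).image (fun p => ((i, j), p)) := by
    ext ⟨p, q⟩
    simp only [Finset.mem_filter, Finset.mem_product, Finset.mem_union, Finset.mem_insert,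
      Finset.mem_image, Prod.mk.injEq]
    constructor
    · rintro ⟨⟨rfl | hp, rfl | hq⟩, h1, h2, h3⟩
      · exact absurd h1 (lt_irrefl _)
      · exact Or.inr ⟨q, ⟨hq, h2, h3⟩, rfl, rfl⟩
      · exact absurd h1 (hF p hp).1.not_gt
      · exact Or.inl ⟨⟨hp, hq⟩, h1, h2, h3⟩
    · rintro (⟨⟨hp, hq⟩, h1⟩ | ⟨r, ⟨hr, h1, h2⟩, rfl, rfl⟩)
      · exact ⟨⟨Or.inr hp, Or.inr hq⟩, h1⟩
      · exact ⟨⟨Or.inl rfl, Or.inr hr⟩, (hF _ hr).1, h1, h2⟩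
  rw [e, Finset.card_union_of_disjoint, Finset.card_image_of_injective]
  · intro p q hpq
    exact (Prod.mk.injEq _ _ _ _ ▸ hpq).2
  · rw [Finset.disjoint_left]
    rintro ⟨p, q⟩ h1 h2
    simp only [Finset.mem_filter, Finset.mem_product, Finset.mem_image, Prod.mk.injEq] at h1 h2
    obtain ⟨r, -, h3, -⟩ := h2
    have := (hF p h1.1.1).1
    rw [← h3] at this
    exact lt_irrefl _ this

lemma between_parity {J : Finset (Fin n)} {F : Finset (Fin n × Fin n)} {j : Fin n} (hj : j ∉ J)
    (h : OF J F) :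
    (-1 : ℤ) ^ (F.filter fun p => p.1 < j ∧ j < p.2).card =
      (-1) ^ (J.filter fun k => k < j).card := by
  obtain ⟨h1, h2⟩ := h
  have e : (J.filter fun k => k < j) =
      (F.filter fun p => p.1 < j).image Prod.fst ∪ (F.filter fun p => p.2 < j).image Prod.snd := by
    ext k
    simp only [Finset.mem_filter, Finset.mem_union, Finset.mem_image]
    constructor
    · rintro ⟨hk, hkj⟩
      obtain ⟨p, ⟨hp, rfl | rfl⟩, -⟩ := h2 k hk
      · exact Or.inl ⟨p, ⟨hp, hkj⟩, rfl⟩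
      · exact Or.inr ⟨p, ⟨hp, hkj⟩, rfl⟩
    · rintro (⟨p, ⟨hp, hkj⟩, rfl⟩ | ⟨p, ⟨hp, hkj⟩, rfl⟩)
      · exact ⟨(h1 p hp).2.1, hkj⟩
      · exact ⟨(h1 p hp).2.2, hkj⟩
  have e2 : (F.filter fun p => p.1 < j) =
      (F.filter fun p => p.1 < j ∧ j < p.2) ∪ (F.filter fun p => p.2 < j) := by
    ext p
    simp only [Finset.mem_filter, Finset.mem_union]
    constructor
    · rintro ⟨hp, hpj⟩
      rcases lt_trichotomy p.2 j with h3 | h3 | h3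
      · exact Or.inr ⟨hp, h3⟩
      · exact absurd (h3 ▸ (h1 p hp).2.2) hj
      · exact Or.inl ⟨hp, hpj, h3⟩
    · rintro (⟨hp, h3, h4⟩ | ⟨hp, h3⟩)
      · exact ⟨hp, h3⟩
      · exact ⟨hp, (h1 p hp).1.trans h3⟩
  rw [e, Finset.card_union_of_disjoint, Finset.card_image_of_injOn, Finset.card_image_of_injOn,
    e2, Finset.card_union_of_disjoint, pow_add, pow_add]
  · rw [mul_assoc, ← pow_add, Even.neg_one_pow ⟨_, rfl⟩, mul_one]
  · rw [Finset.disjoint_left]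
    intro p hp hp'
    exact absurd ((Finset.mem_filter.1 hp).2.2) (Finset.mem_filter.1 hp').2.not_gt
  · intro p hp q hq hpq
    have hp := (Finset.mem_filter.1 hp).1
    have hq := (Finset.mem_filter.1 hq).1
    exact (h2 p.2 (h1 p hp).2.2).unique ⟨hp, Or.inr rfl⟩ ⟨hq, Or.inr hpq⟩
  · intro p hp q hq hpq
    have hp := (Finset.mem_filter.1 hp).1
    have hq := (Finset.mem_filter.1 hq).1
    exact (h2 p.1 (h1 p hp).2.1).unique ⟨hp, Or.inl rfl⟩ ⟨hq, Or.inl hpq⟩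
  · rw [Finset.disjoint_left]
    intro k hk hk'
    obtain ⟨p, hp, rfl⟩ := Finset.mem_image.1 hk
    obtain ⟨q, hq, hpq⟩ := Finset.mem_image.1 hk'
    have hp := (Finset.mem_filter.1 hp).1
    have hq := (Finset.mem_filter.1 hq).1
    have := (h2 p.1 (h1 p hp).2.1).unique ⟨hp, Or.inl rfl⟩ ⟨hq, Or.inr hpq.symm⟩
    subst this
    exact (h1 p hp).1.ne' hpq

lemma Pf_rec (x : Fin n × Fin n → ℤ) {I : Finset (Fin n)} {i : Fin n} (hi : i ∈ I)
    (hmin : ∀ k ∈ I, i ≤ k) :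
    Pf x I = ∑ j ∈ I.erase i, (-1 : ℤ) ^ ((I \ {i, j}).filter fun k => k < j).card *
      (x (i, j) * Pf x (I \ {i, j})) := by
  classical
  have h1 : ∀ j ∈ I.erase i, (-1 : ℤ) ^ ((I \ {i, j}).filter fun k => k < j).card *
      (x (i, j) * Pf x (I \ {i, j})) =
      ∑ F ∈ Finset.univ.filter (fun F => OF (I \ {i, j}) F),
        (-1 : ℤ) ^ crossingNumber n (insert (i, j) F) * ∏ p ∈ insert (i, j) F, x p := by
    intro j hj
    unfold Pf
    rw [Finset.mul_sum, Finset.mul_sum]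
    refine Finset.sum_congr rfl ?_
    intro F hF
    have hF : OF (I \ {i, j}) F := by simpa using hF
    rw [cross_insert hmin hF, pow_add, between_parity (by simp) hF, Finset.prod_insert]
    · ring
    · intro h
      have := (hF.1 _ h).2.1
      simp at this
  rw [Finset.sum_congr rfl h1, Finset.sum_sigma']
  unfold Pf
  symm
  refine Finset.sum_bij (fun z _ => insert (i, z.1) z.2) ?_ ?_ ?_ ?_
  · rintro ⟨j, F⟩ hz
    simp only [Finset.mem_sigma, Finset.mem_erase, Finset.mem_filter, Finset.mem_univ,
      true_and] at hz ⊢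
    exact OF_insert hi hz.1.2 (lt_of_le_of_ne (hmin _ hz.1.2) (Ne.symm hz.1.1)) hz.2
  · rintro ⟨j, F⟩ hz ⟨j', F'⟩ hz' heq
    simp only [Finset.mem_sigma, Finset.mem_erase, Finset.mem_filter, Finset.mem_univ,
      true_and] at hz hz' heq
    have hn : ∀ (j k : Fin n) (F : Finset (Fin n × Fin n)), OF (I \ {i, j}) F → (i, k) ∉ F := by
      intro j k F hF h
      have := (hF.1 _ h).2.1
      simp at this
    have hjj : j = j' := by
      have h2 : (i, j) ∈ insert (i, j') F' := heq ▸ Finset.mem_insert_self _ _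
      rcases Finset.mem_insert.1 h2 with h3 | h3
      · exact (Prod.mk.injEq _ _ _ _ ▸ h3).2
      · exact absurd h3 (hn _ _ _ hz'.2)
    subst hjj
    have : F = F' := by
      rw [← Finset.erase_insert (hn j j F hz.2), heq, Finset.erase_insert (hn j j F' hz'.2)]
    rw [this]
  · intro F hF
    have hF : OF I F := by simpa using hF
    obtain ⟨⟨k, j⟩, ⟨hp, hip⟩, -⟩ := hF.2 i hi
    have h3 := hF.1 _ hp
    have hk : k = i := by
      rcases hip with h | h
      · exact h.symm
      · simp only at h h3
        exact absurd (h ▸ h3.1) (hmin k h3.2.1).not_gt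
    subst hk
    refine ⟨⟨j, F.erase (k, j)⟩, ?_, Finset.insert_erase hp⟩
    simp only [Finset.mem_sigma, Finset.mem_erase, Finset.mem_filter, Finset.mem_univ,
      true_and]
    exact ⟨⟨h3.1.ne', h3.2.2⟩, OF_erase hF hp⟩
  · intro z hz
    rfl

end

lemma main {α : Type*} [Fintype α] [DecidableEq α] {n : ℕ} {a : Fin n → α} {G : SimpleGraph α}
    (hnc : NC G a) (ha : Function.Injective a) (h0 : pmCount G (dom a ∅) = 1)
    (I : Finset (Fin n)) :
    (pmCount G (dom a I) : ℤ) = Pf (fun p => (pmCount G (dom a {p.1, p.2}) : ℤ)) I := by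
  induction I using Finset.strongInduction with
  | H I ih =>
    rcases I.eq_empty_or_nonempty with rfl | hne
    · rw [Pf_empty, h0]; rfl
    · have hi := I.min'_mem hne
      have hmin : ∀ k ∈ I, I.min' hne ≤ k := fun k hk => I.min'_le k hk
      generalize I.min' hne = i at hi hmin
      have hs := sum_zero hnc ha hi
      rw [← Finset.add_sum_erase _ _ hi] at hs
      have e1 : tog i i = ∅ := by simp [tog]
      have e2 : sgn I i = 1 := by
        unfold sgn
        have : (I.filter fun k => k < i) = ∅ := by
          rw [Finset.filter_eq_empty_iff]
          intro k hk
          exact (hmin k hk).not_gt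
        rw [this]; simp
      rw [e1, e2, h0, Finset.sdiff_empty] at hs
      rw [Pf_rec _ hi hmin]
      have e3 : ∀ j ∈ I.erase i,
          sgn I j * ((pmCount G (dom a (tog i j)) : ℤ) * pmCount G (dom a (I \ tog i j))) =
          - ((-1 : ℤ) ^ ((I \ {i, j}).filter fun k => k < j).card *
            ((pmCount G (dom a {i, j}) : ℤ) *
              Pf (fun p => (pmCount G (dom a {p.1, p.2}) : ℤ)) (I \ {i, j}))) := by
        intro j hj
        obtain ⟨hji, hjI⟩ := Finset.mem_erase.1 hj
        have e4 : tog i j = {i, j} := by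
          ext k
          rw [mem_tog, Finset.mem_insert, Finset.mem_singleton]
          grind
        have e5 : (I.filter fun k => k < j) =
            insert i ((I \ {i, j}).filter fun k => k < j) := by
          have := lt_of_le_of_ne (hmin j hjI) (Ne.symm hji)
          ext k
          simp only [Finset.mem_filter, Finset.mem_insert, Finset.mem_sdiff,
            Finset.mem_singleton]
          grind
        rw [e4, ← ih (I \ {i, j})]
        · unfold sgn
          rw [e5, Finset.card_insert_of_notMem (by simp), pow_succ]
          ring
        · rw [Finset.ssubset_iff_of_subset Finset.sdiff_subset]
          exact ⟨i, hi, by simp⟩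
      rw [Finset.sum_congr rfl e3, Finset.sum_neg_distrib] at hs
      push_cast at hs
      linarith

end PfCond

open Classical in
/-- (Corollary 3.8.) Pfaffian condensation with `H = G − A`. -/
theorem pfaffian_condensation_M_G {α : Type*} [Fintype α] [DecidableEq α]
    (G : SimpleGraph α) (n : ℕ) (hn : Even n)
    (a : Fin n → α) (hdist : (List.ofFn a).Nodup)
    (hnc : NoncrossingList G (List.ofFn a))
    (huniq : ∃! m : Finset (Sym2 α), IsPMOn G (Finset.univ \ Finset.univ.image a) m) :
    (pmCount G Finset.univ : ℤ) =
      ∑ F ∈ Finset.univ.filter (fun F : Finset (Fin n × Fin n) => IsOneFactor n F),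
        (-1 : ℤ) ^ crossingNumber n F *
          ∏ p ∈ F,
            (pmCount G ((Finset.univ \ Finset.univ.image a) ∪ {a p.1, a p.2}) : ℤ) := by

  have ha : Function.Injective a := List.nodup_ofFn.1 hdist
  have h0 : pmCount G (PfCond.dom a ∅) = 1 := by
    unfold pmCount PfCond.dom
    rw [Finset.image_empty, Finset.union_empty]
    obtain ⟨m, hm, hu⟩ := huniq
    rw [Nat.card_eq_one_iff_exists]
    exact ⟨⟨m, hm⟩, fun y => Subtype.ext (hu y.1 y.2)⟩
  have hmain := PfCond.main (PfCond.nc_of hnc) ha h0 Finset.univ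
  have hd : PfCond.dom a Finset.univ = Finset.univ := by
    unfold PfCond.dom
    rw [Finset.sdiff_union_of_subset (Finset.subset_univ _)]
  rw [hd] at hmain
  rw [hmain]
  unfold PfCond.Pf
  refine Finset.sum_congr ?_ ?_
  · ext F
    simp [PfCond.OF, IsOneFactor]
  · intro F _
    simp [PfCond.dom, Finset.image_insert]
end
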